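/- arXiv:2510.19727 — 4 statements merged into one kernel-verified Lean document; each statement's English description precedes it below -/
import Mathlib

section
/- For every integer k > 2 with k ≡ 1, 2, 9, or 10 (mod 12), the integer 2^k is not separable; that is, there is no positive integer m such that (m, 2^k) is an interlocking pair. -/
/-!
The divisors greater than `1` of two interlocking numbers alternate, so the numbers of divisors of
`m` and `2 ^ k` differ by at most one; as no divisor greater than `1` of `m` lies below the divisor
`2` of `2 ^ k`, the number `m` has `k` or `k + 1` divisors.

On the other hand, two divisors of `m` greater than `1` are separated by a power of `2`, so distinct
ones have distinct binary logarithms. The divisor of `m` in `(2, 4)` is `3`, and the one in `(4, 8)`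
is `5` or `7`.
* If `5 ∣ m`, then `15` excludes `9`, and `75` excludes `125`.
* If `7 ∣ m`, then `21` excludes `27`. The divisor in `(8, 16)` is `9`, `11` or `13`, so one of
  `63`, `33`, `39` divides `m`, and each of them excludes `49`.

In both cases one prime divides `m` exactly once and another one exactly once or twice, so the
number of divisors of `m` is a multiple of `4` or of `6`. For `k ≡ 1, 2, 9, 10 (mod 12)` neither `k`
nor `k + 1` is.
-/

/-- `(m, n)` is an interlocking pair: both are positive, and between any two
consecutive divisors (the smaller one exceeding 1) of either number there is a
divisor of the other. -/
def Interlocking (m n : ℕ) : Prop :=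
  0 < m ∧ 0 < n ∧
  (∀ d d' : ℕ, d ∣ n → d' ∣ n → 1 < d → d < d' →
    (∀ e : ℕ, e ∣ n → ¬(d < e ∧ e < d')) →
    ∃ e : ℕ, e ∣ m ∧ d < e ∧ e < d') ∧
  (∀ d d' : ℕ, d ∣ m → d' ∣ m → 1 < d → d < d' →
    (∀ e : ℕ, e ∣ m → ¬(d < e ∧ e < d')) →
    ∃ e : ℕ, e ∣ n ∧ d < e ∧ e < d')

/-- A positive integer `n` is separable if some `m` interlocks with it. -/
def Separable (n : ℕ) : Prop := ∃ m : ℕ, Interlocking m n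

open Finset

lemma prod_factorization_add_one_dvd_card_divisors (n : ℕ) (s : Finset ℕ) :
    ∏ p ∈ s, (n.factorization p + 1) ∣ #n.divisors := by
  rcases eq_or_ne n 0 with rfl | hn
  · simp
  have hs : ∏ p ∈ s ∩ n.primeFactors, (n.factorization p + 1) =
      ∏ p ∈ s, (n.factorization p + 1) := by
    refine prod_subset inter_subset_left fun p hp hp' ↦ ?_
    have hpn : p ∉ n.primeFactors := fun h ↦ hp' (mem_inter.2 ⟨hp, h⟩)
    rw [← Nat.support_factorization, Finsupp.notMem_support_iff] at hpn
    rw [hpn, zero_add]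
  rw [← hs, Nat.card_divisors hn]
  exact prod_dvd_prod_of_subset _ _ _ inter_subset_right

lemma four_or_six_dvd_card_divisors_of_prime {n p q : ℕ} (hp : p.Prime) (hq : q.Prime)
    (hpq : p ≠ q) (hpn : p ∣ n) (hpn' : ¬ p ^ 2 ∣ n) (hqn : q ∣ n) (hqn' : ¬ q ^ 3 ∣ n) :
    4 ∣ #n.divisors ∨ 6 ∣ #n.divisors := by
  have hn : n ≠ 0 := by
    rintro rfl
    exact hpn' (dvd_zero _)
  have hdvd := prod_factorization_add_one_dvd_card_divisors n {p, q}
  rw [prod_pair hpq] at hdvd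
  rw [hp.dvd_iff_one_le_factorization hn] at hpn
  rw [hq.dvd_iff_one_le_factorization hn] at hqn
  rw [hp.pow_dvd_iff_le_factorization hn] at hpn'
  rw [hq.pow_dvd_iff_le_factorization hn] at hqn'
  have hvp : n.factorization p = 1 := by omega
  have hvq : n.factorization q = 1 ∨ n.factorization q = 2 := by omega
  rw [hvp] at hdvd
  exact hvq.imp (fun hvq ↦ by rwa [hvq] at hdvd) (fun hvq ↦ by rwa [hvq] at hdvd)

namespace Interlocking

section General

variable {m n : ℕ}

lemma symm (h : Interlocking m n) : Interlocking n m :=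
  ⟨h.2.1, h.1, h.2.2.2, h.2.2.1⟩

lemma exists_dvd_between {a b : ℕ} (h : Interlocking m n) (ha : a ∣ m) (hb : b ∣ m) (ha1 : 1 < a)
    (hab : a < b) : ∃ e, e ∣ n ∧ a < e ∧ e < b := by
  classical
  have hnext : ∃ d, d ∣ m ∧ a < d := ⟨b, hb, hab⟩
  obtain ⟨hdm, had⟩ := Nat.find_spec hnext
  obtain ⟨e, hen, hae, hed⟩ := h.2.2.2 a (Nat.find hnext) ha hdm ha1 had
    fun e he hlt ↦ Nat.find_min hnext hlt.2 ⟨he, hlt.1⟩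
  exact ⟨e, hen, hae, hed.trans_le (Nat.find_min' hnext ⟨hb, hab⟩)⟩

lemma card_divisors_le_card_filter_lt_add_two {p : ℕ} (h : Interlocking m n)
    (hp : ∀ d, d ∣ m → 1 < d → p ≤ d) : #m.divisors ≤ #{e ∈ n.divisors | p < e} + 2 := by
  have one_lt {d : ℕ} (hd : d ∈ m.divisors.erase 1) : 1 < d := by
    have := Nat.pos_of_mem_divisors (mem_of_mem_erase hd)
    have := ne_of_mem_erase hd
    omega
  have dvd {d : ℕ} (hd : d ∈ m.divisors.erase 1) : d ∣ m :=
    Nat.dvd_of_mem_divisors (mem_of_mem_erase hd)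
  have hcard : #(m.divisors.erase 1) ≤ #{e ∈ n.divisors | p < e} + 1 := by
    refine card_le_of_interleaved fun a ha b hb hab _ ↦ ?_
    obtain ⟨e, hen, hae, heb⟩ := h.exists_dvd_between (dvd ha) (dvd hb) (one_lt ha) hab
    have hpe : p < e := (hp a (dvd ha) (one_lt ha)).trans_lt hae
    exact ⟨e, mem_filter.2 ⟨Nat.mem_divisors.2 ⟨hen, h.2.1.ne'⟩, hpe⟩, hae, heb⟩
  have := card_erase_add_one (Nat.one_mem_divisors.2 h.1.ne')
  omega

lemma card_divisors_le_add_one (h : Interlocking m n) : #m.divisors ≤ #n.divisors + 1 := by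
  have hsub : {e ∈ n.divisors | 1 < e} ⊂ n.divisors :=
    filter_ssubset.2 ⟨1, Nat.one_mem_divisors.2 h.2.1.ne', lt_irrefl 1⟩
  have := card_lt_card hsub
  have := h.card_divisors_le_card_filter_lt_add_two fun _ _ hd ↦ hd.le
  omega

lemma card_divisors_le_of_forall_le {p : ℕ} (h : Interlocking m n) (hpn : p ∣ n) (hp1 : 1 < p)
    (hp : ∀ d, d ∣ m → 1 < d → p ≤ d) : #m.divisors ≤ #n.divisors := by
  have hsub : {e ∈ n.divisors | p < e} ⊆ n.divisors \ {1, p} := by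
    intro e he
    obtain ⟨hen, hpe⟩ := mem_filter.1 he
    simp only [mem_sdiff, mem_insert, mem_singleton]
    exact ⟨hen, by omega⟩
  have hpair : {1, p} ⊆ n.divisors :=
    insert_subset (Nat.one_mem_divisors.2 h.2.1.ne')
      (singleton_subset_iff.2 (Nat.mem_divisors.2 ⟨hpn, h.2.1.ne'⟩))
  have hcard := card_sdiff_add_card_eq_card hpair
  rw [card_pair hp1.ne] at hcard
  have := card_le_card hsub
  have := h.card_divisors_le_card_filter_lt_add_two hp
  omega

end General

section TwoPow

variable {m k : ℕ}

lemma card_divisors_eq_or_eq_add_one (h : Interlocking m (2 ^ k)) (hk : k ≠ 0) :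
    #m.divisors = k ∨ #m.divisors = k + 1 := by
  have htwo_pow : #(2 ^ k).divisors = k + 1 := by
    rw [Nat.divisors_prime_pow Nat.prime_two, card_map, card_range]
  have hle := h.card_divisors_le_of_forall_le (dvd_pow_self 2 hk) one_lt_two fun _ _ hd ↦ hd
  have hge := h.symm.card_divisors_le_add_one
  omega

lemma log_two_lt_log_two {a b : ℕ} (h : Interlocking m (2 ^ k)) (ha : a ∣ m) (hb : b ∣ m)
    (ha1 : 1 < a) (hab : a < b) : Nat.log 2 a < Nat.log 2 b := by
  obtain ⟨e, he, hae, heb⟩ := h.exists_dvd_between ha hb ha1 hab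
  obtain ⟨j, -, rfl⟩ := (Nat.dvd_prime_pow Nat.prime_two).1 he
  calc
    Nat.log 2 a < j := Nat.log_lt_of_lt_pow (by omega) hae
    _ ≤ Nat.log 2 b := Nat.le_log_of_pow_le one_lt_two heb.le

lemma not_dvd_of_log_two_eq {a b : ℕ} (h : Interlocking m (2 ^ k)) (ha : a ∣ m) (ha1 : 1 < a)
    (hab : a ≠ b) (hlog : Nat.log 2 a = Nat.log 2 b) : ¬ b ∣ m := by
  intro hb
  have hb1 : 1 < b := by
    have : 0 < Nat.log 2 b := hlog ▸ Nat.log_pos one_lt_two ha1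
    exact (Nat.log_pos_iff.1 this).1
  rcases hab.lt_or_gt with hlt | hlt
  · exact (h.log_two_lt_log_two ha hb ha1 hlt).ne hlog
  · exact (h.log_two_lt_log_two hb ha hb1 hlt).ne' hlog

lemma exists_dvd_between_two_pow {i : ℕ} (h : Interlocking m (2 ^ k)) (hi : i ≠ 0) (hik : i < k) :
    ∃ e, e ∣ m ∧ 2 ^ i < e ∧ e < 2 ^ (i + 1) :=
  h.symm.exists_dvd_between (pow_dvd_pow 2 hik.le) (pow_dvd_pow 2 hik) (Nat.one_lt_two_pow hi)
    (Nat.pow_lt_pow_succ one_lt_two)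

lemma three_dvd (h : Interlocking m (2 ^ k)) (hk : 1 < k) : 3 ∣ m := by
  obtain ⟨e, hem, hlt, hgt⟩ := h.exists_dvd_between_two_pow one_ne_zero hk
  obtain rfl : e = 3 := by omega
  exact hem

lemma not_two_dvd (h : Interlocking m (2 ^ k)) (hk : 1 < k) : ¬ 2 ∣ m :=
  h.not_dvd_of_log_two_eq (h.three_dvd hk) (by norm_num) (by norm_num) (by norm_num)

lemma five_dvd_or_seven_dvd (h : Interlocking m (2 ^ k)) (hk : 2 < k) : 5 ∣ m ∨ 7 ∣ m := by
  obtain ⟨e, hem, hlt, hgt⟩ := h.exists_dvd_between_two_pow two_ne_zero hk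
  have hodd : ¬ 2 ∣ e := fun h2 ↦ h.not_two_dvd (by omega) (h2.trans hem)
  obtain rfl | rfl : e = 5 ∨ e = 7 := by omega
  · exact Or.inl hem
  · exact Or.inr hem

lemma three_mul_dvd {a : ℕ} (h : Interlocking m (2 ^ k)) (hk : 1 < k) (ha : a ∣ m)
    (h3a : Nat.Coprime 3 a) : 3 * a ∣ m :=
  h3a.mul_dvd_of_dvd_of_dvd (h.three_dvd hk) ha

lemma not_three_pow_two_dvd (h : Interlocking m (2 ^ k)) (hk : 1 < k) (h5 : 5 ∣ m) :
    ¬ 3 ^ 2 ∣ m :=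
  h.not_dvd_of_log_two_eq (h.three_mul_dvd hk h5 (by norm_num)) (by norm_num) (by norm_num)
    (by norm_num)

lemma not_five_pow_three_dvd (h : Interlocking m (2 ^ k)) (hk : 1 < k) : ¬ 5 ^ 3 ∣ m := by
  intro h125
  have h25 : 5 ^ 2 ∣ m := (pow_dvd_pow 5 (by norm_num)).trans h125
  exact h.not_dvd_of_log_two_eq (h.three_mul_dvd hk h25 (by norm_num)) (by norm_num) (by norm_num)
    (by norm_num) h125

lemma not_three_pow_three_dvd (h : Interlocking m (2 ^ k)) (hk : 1 < k) (h7 : 7 ∣ m) :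
    ¬ 3 ^ 3 ∣ m :=
  h.not_dvd_of_log_two_eq (h.three_mul_dvd hk h7 (by norm_num)) (by norm_num) (by norm_num)
    (by norm_num)

lemma nine_dvd_or_eleven_dvd_or_thirteen_dvd (h : Interlocking m (2 ^ k)) (hk : 3 < k)
    (h5 : ¬ 5 ∣ m) : 9 ∣ m ∨ 11 ∣ m ∨ 13 ∣ m := by
  obtain ⟨e, hem, hlt, hgt⟩ := h.exists_dvd_between_two_pow three_ne_zero hk
  have h2e : ¬ 2 ∣ e := fun h2 ↦ h.not_two_dvd (by omega) (h2.trans hem)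
  have h5e : ¬ 5 ∣ e := fun h5' ↦ h5 (h5'.trans hem)
  obtain rfl | rfl | rfl : e = 9 ∨ e = 11 ∨ e = 13 := by omega
  · exact Or.inl hem
  · exact Or.inr (Or.inl hem)
  · exact Or.inr (Or.inr hem)

lemma not_seven_pow_two_dvd (h : Interlocking m (2 ^ k)) (hk : 3 < k) : ¬ 7 ^ 2 ∣ m := by
  intro h49
  have h7 : 7 ∣ m := (dvd_pow_self 7 two_ne_zero).trans h49
  have h5 : ¬ 5 ∣ m := h.not_dvd_of_log_two_eq h7 (by norm_num) (by norm_num) (by norm_num)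
  obtain ⟨c, hcm, hc⟩ : ∃ c, c ∣ m ∧ (c = 63 ∨ c = 33 ∨ c = 39) := by
    rcases h.nine_dvd_or_eleven_dvd_or_thirteen_dvd hk h5 with h9 | h11 | h13
    · exact ⟨9 * 7, Nat.Coprime.mul_dvd_of_dvd_of_dvd (by norm_num) h9 h7, by norm_num⟩
    · exact ⟨3 * 11, h.three_mul_dvd (by omega) h11 (by norm_num), by norm_num⟩
    · exact ⟨3 * 13, h.three_mul_dvd (by omega) h13 (by norm_num), by norm_num⟩
  rcases hc with rfl | rfl | rfl <;>
    exact h.not_dvd_of_log_two_eq hcm (by norm_num) (by norm_num) (by norm_num) h49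

lemma four_or_six_dvd_card_divisors (h : Interlocking m (2 ^ k)) (hk : 3 < k) :
    4 ∣ #m.divisors ∨ 6 ∣ #m.divisors := by
  have h3 : 3 ∣ m := h.three_dvd (by omega)
  rcases h.five_dvd_or_seven_dvd (by omega) with h5 | h7
  · exact four_or_six_dvd_card_divisors_of_prime Nat.prime_three Nat.prime_five (by norm_num) h3
      (h.not_three_pow_two_dvd (by omega) h5) h5 (h.not_five_pow_three_dvd (by omega))
  · exact four_or_six_dvd_card_divisors_of_prime Nat.prime_seven Nat.prime_three (by norm_num) h7
      (h.not_seven_pow_two_dvd hk) h3 (h.not_three_pow_three_dvd (by omega) h7)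

end TwoPow

end Interlocking

/-- For `k > 2` with `k ≡ 1, 2, 9, 10 (mod 12)`, the integer `2^k` is not separable. -/
theorem two_pow_not_separable (k : ℕ) (hk : 2 < k)
    (hmod : k % 12 = 1 ∨ k % 12 = 2 ∨ k % 12 = 9 ∨ k % 12 = 10) :
    ¬ Separable (2 ^ k) := by
  rintro ⟨m, h⟩
  have hcard := h.card_divisors_eq_or_eq_add_one (by omega)
  have hdvd := h.four_or_six_dvd_card_divisors (by omega)
  omega
end

section
/- There exists a real constant C > 0 such that for every positive integer x, the number of positive integers n ≤ x that lie in S_C is greater than x/2. -/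
/-!
If `n ∉ SC C`, let `a < d'` be consecutive divisors of `n` with `d' > exp D`, where `D = max C a`,
and write `n = a * b`. A prime `p ∣ b` is a divisor of `n`, so it is either at most `a` or at least
`d'`. The divisor `a * p` exceeds `a`, hence exceeds `exp D ≥ D ^ 2 ≥ a ^ 2`, so `p > a` and thus
`p > exp D`. Every exceptional `n` is therefore a product `a * b` in which `b > 1` has no prime
factor up to `exp (max C a)`.

The number of `b ∈ (1, y]` without prime factors up to `z` is `O(y / log z)`. Weighting `b` by
`log b = ∑ q ∣ b, Λ q` and applying Chebyshev's bound `ψ t = O(t)` reduces the count to the sum of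
the reciprocals of these `b`; multiplying that sum by the harmonic sum up to `z` gives at most the
harmonic sum up to `y * z`, because a product of such a `b` and a number up to `z` determines both
factors.

Taking `z = exp (max C a)` and `y = x / a`, there are `O(x * ∑ a, 1 / (a * max C a))` exceptional
`n ≤ x`, and the series tends to `0` as `C → ∞`, being dominated by `∑ a, 1 / a ^ 2`.
-/

open scoped Classical

/-- `SC C` is the set of positive integers `n` such that any two consecutive
divisors `d < d'` of `n` satisfy `d' ≤ exp (max C d)`. -/
def SC (C : ℝ) : Set ℕ :=
  {n : ℕ | 0 < n ∧ ∀ d d' : ℕ, d ∣ n → d' ∣ n → d < d' →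
    (∀ e : ℕ, e ∣ n → ¬(d < e ∧ e < d')) →
    (d' : ℝ) ≤ Real.exp (max C (d : ℝ))}

open Filter Finset Real
open scoped ArithmeticFunction.vonMangoldt Chebyshev Topology

lemma sum_comp_le_sum_of_injOn {ι κ M : Type*} [AddCommMonoid M] [PartialOrder M]
    [IsOrderedAddMonoid M] {s : Finset ι} {t : Finset κ} {e : ι → κ} {f : κ → M}
    (hmaps : ∀ i ∈ s, e i ∈ t) (hinj : Set.InjOn e s) (hf : ∀ k ∈ t, 0 ≤ f k) :
    ∑ i ∈ s, f (e i) ≤ ∑ k ∈ t, f k := by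
  rw [← sum_image hinj]
  exact sum_le_sum_of_subset_of_nonneg (image_subset_iff.2 hmaps) fun k hk _ => hf k hk

lemma injOn_mul_of_coprime {s t : Set ℕ} (hcop : ∀ m ∈ s, ∀ k ∈ t, m.Coprime k) :
    Set.InjOn (fun q : ℕ × ℕ => q.1 * q.2) (s ×ˢ t) := by
  rintro ⟨m, k⟩ ⟨hm, hk⟩ ⟨m', k'⟩ ⟨hm', hk'⟩ (heq : m * k = m' * k')
  ext
  · exact Nat.dvd_antisymm
      ((hcop m hm k' hk').dvd_of_dvd_mul_right (heq ▸ Nat.dvd_mul_right m k))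
      ((hcop m' hm' k hk).dvd_of_dvd_mul_right (heq ▸ Nat.dvd_mul_right m' k'))
  · exact Nat.dvd_antisymm
      ((hcop m' hm' k hk).symm.dvd_of_dvd_mul_left (heq ▸ Nat.dvd_mul_left k m))
      ((hcop m hm k' hk').symm.dvd_of_dvd_mul_left (heq ▸ Nat.dvd_mul_left k' m'))

lemma sum_inv_mul_sum_inv_le_harmonic {s t : Finset ℕ} {N : ℕ}
    (hcop : ∀ m ∈ s, ∀ k ∈ t, m.Coprime k) (hN : ∀ m ∈ s, ∀ k ∈ t, m * k ∈ Icc 1 N) :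
    (∑ m ∈ s, (m : ℝ)⁻¹) * ∑ k ∈ t, (k : ℝ)⁻¹ ≤ harmonic N := by
  calc (∑ m ∈ s, (m : ℝ)⁻¹) * ∑ k ∈ t, (k : ℝ)⁻¹
      = ∑ q ∈ s ×ˢ t, ((q.1 * q.2 : ℕ) : ℝ)⁻¹ := by
        simp only [sum_mul_sum, ← sum_product', Nat.cast_mul, mul_inv]
    _ ≤ ∑ j ∈ Icc 1 N, (j : ℝ)⁻¹ := by
        refine sum_comp_le_sum_of_injOn (e := fun q : ℕ × ℕ => q.1 * q.2)
          (f := fun j : ℕ => (j : ℝ)⁻¹) (fun q hq => ?_) ?_ fun j _ => by positivity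
        · exact hN _ (mem_product.1 hq).1 _ (mem_product.1 hq).2
        · rw [coe_product]
          exact injOn_mul_of_coprime hcop
    _ = harmonic N := by
        rw [harmonic_eq_sum_Icc]
        push_cast
        rfl

section DivisorClosed

variable {s : Finset ℕ} {y : ℕ}

lemma sum_log_le_sum_psi (hs : ∀ b ∈ s, ∀ m, m ∣ b → m ∈ s) (hy : s ⊆ Icc 1 y) :
    ∑ b ∈ s, log b ≤ ∑ m ∈ s, ψ (y / m) := by
  calc ∑ b ∈ s, log b
      = ∑ i ∈ s.sigma fun b => b.divisorsAntidiagonal, Λ i.2.2 := by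
        rw [sum_sigma]
        refine sum_congr rfl fun b _ => ?_
        rw [Nat.sum_divisorsAntidiagonal' (f := fun _ q => Λ q),
          ArithmeticFunction.vonMangoldt_sum]
    _ ≤ ∑ j ∈ s.sigma fun m => Ioc 0 (y / m), Λ j.2 := by
        refine sum_comp_le_sum_of_injOn
          (e := fun i : (_ : ℕ) × ℕ × ℕ => (⟨i.2.1, i.2.2⟩ : (_ : ℕ) × ℕ))
          (f := fun j : (_ : ℕ) × ℕ => Λ j.2) ?_ ?_ fun _ _ => ArithmeticFunction.vonMangoldt_nonneg
        · rintro ⟨b, m, q⟩ hi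
          obtain ⟨hb, rfl, hmq⟩ := by simpa using hi
          have hm : 0 < m := Nat.pos_of_ne_zero (left_ne_zero_of_mul hmq)
          have hq : 0 < q := Nat.pos_of_ne_zero (right_ne_zero_of_mul hmq)
          have hle : q * m ≤ y := mul_comm m q ▸ (mem_Icc.1 (hy hb)).2
          exact mem_sigma.2 ⟨hs _ hb m (Nat.dvd_mul_right m q),
            mem_Ioc.2 ⟨hq, (Nat.le_div_iff_mul_le hm).2 hle⟩⟩
        · rintro ⟨b, m, q⟩ hi ⟨b', m', q'⟩ hi' heq
          obtain ⟨-, rfl, -⟩ := by simpa using hi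
          obtain ⟨-, rfl, -⟩ := by simpa using hi'
          obtain ⟨rfl, rfl⟩ := by simpa using heq
          rfl
    _ = ∑ m ∈ s, ψ (y / m) := by
        simp only [sum_sigma, Chebyshev.psi, Nat.floor_div_eq_div]

lemma card_mul_log_le_sum_inv (hs : ∀ b ∈ s, ∀ m, m ∣ b → m ∈ s) (hy : s ⊆ Icc 1 y) :
    #s * log y ≤ (log 4 + 5) * (y * ∑ m ∈ s, (m : ℝ)⁻¹) := by
  have hlog : ∀ b ∈ s, log y ≤ log b + y / b := fun b hb => by
    have hb1 : 1 ≤ b ∧ b ≤ y := mem_Icc.1 (hy hb)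
    have hb0 : (0 : ℝ) < b := by exact_mod_cast hb1.1
    have hy0 : (0 : ℝ) < y := by exact_mod_cast hb1.1.trans hb1.2
    have := log_le_self (div_pos hy0 hb0).le
    rw [log_div hy0.ne' hb0.ne'] at this
    linarith
  calc #s * log y
      ≤ ∑ b ∈ s, (log b + y / b) := by
        rw [← nsmul_eq_mul]
        exact card_nsmul_le_sum _ _ _ hlog
    _ ≤ ∑ m ∈ s, (ψ (y / m) + y / m) := by
        rw [sum_add_distrib, sum_add_distrib]
        exact add_le_add_left (sum_log_le_sum_psi hs hy) _
    _ ≤ ∑ m ∈ s, ((log 4 + 4) * (y / m) + y / m) := by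
        gcongr with m
        exact Chebyshev.psi_le_const_mul_self (by positivity)
    _ = (log 4 + 5) * (y * ∑ m ∈ s, (m : ℝ)⁻¹) := by
        simp only [mul_sum]
        exact sum_congr rfl fun m _ => by ring

end DivisorClosed

/-- `b` is `z`-rough if all its prime factors exceed `z`. The inequality is strict, so that a rough
number is coprime to every positive integer up to `z`. -/
def Rough (z : ℝ) (b : ℕ) : Prop := ∀ p : ℕ, p.Prime → p ∣ b → z < p

lemma Rough.of_dvd {z : ℝ} {a b : ℕ} (h : Rough z b) (hab : a ∣ b) : Rough z a :=
  fun p hp hpa => h p hp (hpa.trans hab)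

lemma Rough.coprime {z : ℝ} {b k : ℕ} (h : Rough z b) (hk : 0 < k) (hkz : k ≤ z) :
    b.Coprime k := by
  refine (Nat.coprime_of_dvd fun p hp hpk hpb => ?_).symm
  have hpk : (p : ℝ) ≤ k := by exact_mod_cast Nat.le_of_dvd hk hpk
  linarith [h p hp hpb]

lemma Rough.lt_of_one_lt {z : ℝ} {b : ℕ} (h : Rough z b) (hb : 1 < b) : z < b :=
  (h _ (Nat.minFac_prime hb.ne') b.minFac_dvd).trans_le
    (by exact_mod_cast Nat.minFac_le (zero_lt_one.trans hb))

/-- The finite set of `z`-rough numbers in `[1, y]`; the number `1` always belongs to it when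
`1 ≤ y`. -/
noncomputable def roughUpTo (z : ℝ) (y : ℕ) : Finset ℕ := {b ∈ Icc 1 y | Rough z b}

lemma mem_roughUpTo {z : ℝ} {y b : ℕ} : b ∈ roughUpTo z y ↔ (1 ≤ b ∧ b ≤ y) ∧ Rough z b := by
  simp [roughUpTo]

lemma mem_roughUpTo_of_dvd {z : ℝ} {y b m : ℕ} (hb : b ∈ roughUpTo z y) (hm : m ∣ b) :
    m ∈ roughUpTo z y := by
  obtain ⟨⟨hb1, hby⟩, hr⟩ := mem_roughUpTo.1 hb
  exact mem_roughUpTo.2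
    ⟨⟨Nat.pos_of_dvd_of_pos hm hb1, (Nat.le_of_dvd hb1 hm).trans hby⟩, hr.of_dvd hm⟩

lemma sum_inv_roughUpTo_mul_log_le {z : ℝ} {y : ℕ} (hz : 0 ≤ z) (hzy : z ≤ y) :
    (∑ m ∈ roughUpTo z y, (m : ℝ)⁻¹) * log z ≤ 1 + 2 * log y := by
  have hlog : log z ≤ ∑ k ∈ Icc 1 ⌊z⌋₊, (k : ℝ)⁻¹ := by
    simpa [harmonic_eq_sum_Icc] using log_le_harmonic_floor z hz
  calc (∑ m ∈ roughUpTo z y, (m : ℝ)⁻¹) * log z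
      ≤ (∑ m ∈ roughUpTo z y, (m : ℝ)⁻¹) * ∑ k ∈ Icc 1 ⌊z⌋₊, (k : ℝ)⁻¹ := by gcongr
    _ ≤ harmonic (y * y) := by
        refine sum_inv_mul_sum_inv_le_harmonic (fun m hm k hk => ?_) fun m hm k hk => ?_
        · obtain ⟨hk1, hkz⟩ := mem_Icc.1 hk
          exact (mem_roughUpTo.1 hm).2.coprime hk1 ((Nat.le_floor_iff hz).1 hkz)
        · obtain ⟨hm1, hmy⟩ := (mem_roughUpTo.1 hm).1
          obtain ⟨hk1, hkz⟩ := mem_Icc.1 hk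
          exact mem_Icc.2
            ⟨Nat.mul_pos hm1 hk1, Nat.mul_le_mul hmy (hkz.trans (Nat.floor_le_of_le hzy))⟩
    _ ≤ 1 + log ((y * y : ℕ) : ℝ) := harmonic_le_one_add_log _
    _ = 1 + 2 * log y := by rw [← sq, Nat.cast_pow, log_pow, Nat.cast_two]

/-- The constant of the sieve bound `card_one_lt_roughUpTo_mul_log_le`: `log 4 + 4` is Chebyshev's
constant for `ψ`, one more unit comes from `log t ≤ t`, and the factor `4` from
`1 + 2 * log y ≤ 4 * log y`. -/
noncomputable def sieveConst : ℝ := 4 * (log 4 + 5)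

lemma sieveConst_nonneg : 0 ≤ sieveConst := by
  rw [sieveConst]
  positivity

/-- The rough number `1` is left out because the bound is below `1` when `y` is small compared with
`log z`. -/
lemma card_one_lt_roughUpTo_mul_log_le {z : ℝ} (hz : 1 ≤ z) (y : ℕ) :
    #{b ∈ roughUpTo z y | 1 < b} * log z ≤ sieveConst * y := by
  have hlogz : 0 ≤ log z := log_nonneg hz
  rcases {b ∈ roughUpTo z y | 1 < b}.eq_empty_or_nonempty with hempty | ⟨b, hb⟩
  · rw [hempty, card_empty, Nat.cast_zero, zero_mul]
    exact mul_nonneg sieveConst_nonneg y.cast_nonneg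
  obtain ⟨hb, hb1⟩ := mem_filter.1 hb
  obtain ⟨⟨-, hby⟩, hr⟩ := mem_roughUpTo.1 hb
  have hzy : z ≤ y := (hr.lt_of_one_lt hb1).le.trans (by exact_mod_cast hby)
  have hlog : log 2 ≤ log y := log_le_log two_pos (by exact_mod_cast hb1.trans_le hby)
  have hlogy : 1 / 2 < log y := by linarith [log_two_gt_d9]
  refine le_of_mul_le_mul_right ?_ (one_half_pos.trans hlogy)
  calc #{b ∈ roughUpTo z y | 1 < b} * log z * log y
      ≤ #(roughUpTo z y) * log y * log z := by
        rw [mul_right_comm]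
        gcongr
        exact filter_subset _ _
    _ ≤ (log 4 + 5) * (y * ∑ m ∈ roughUpTo z y, (m : ℝ)⁻¹) * log z := by
        refine mul_le_mul_of_nonneg_right (card_mul_log_le_sum_inv ?_ (filter_subset _ _)) hlogz
        exact fun b hb m hm => mem_roughUpTo_of_dvd hb hm
    _ = (log 4 + 5) * y * ((∑ m ∈ roughUpTo z y, (m : ℝ)⁻¹) * log z) := by ring
    _ ≤ (log 4 + 5) * y * (4 * log y) := by
        refine mul_le_mul_of_nonneg_left ?_ (by positivity)
        linarith [sum_inv_roughUpTo_mul_log_le (zero_le_one.trans hz) hzy]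
    _ = sieveConst * y * log y := by
        rw [sieveConst]
        ring

lemma sq_le_exp {x : ℝ} (hx : 0 ≤ x) : x ^ 2 ≤ exp x := by
  have hhalf : x ≤ exp (x / 2) := by linarith [two_mul_le_exp (x := x / 2)]
  calc x ^ 2 ≤ exp (x / 2) ^ 2 := by gcongr
    _ = exp x := by rw [← exp_nat_mul, Nat.cast_two, mul_div_cancel₀ x two_ne_zero]

lemma exists_dvd_gap_of_notMem_SC {C : ℝ} {n : ℕ} (hn : 0 < n) (h : n ∉ SC C) :
    ∃ a, a ∣ n ∧ a < n ∧ ∀ e, e ∣ n → e ≤ a ∨ exp (max C a) < e := by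
  simp only [SC, Set.mem_ofPred_eq, hn, true_and, not_forall, not_le] at h
  obtain ⟨a, d', ha, hd', had', hconsec, hexp⟩ := h
  refine ⟨a, ha, had'.trans_le (Nat.le_of_dvd hn hd'), fun e he => ?_⟩
  rcases le_or_gt e a with hea | hae
  · exact .inl hea
  · have hd'e : d' ≤ e := not_lt.1 fun hed' => hconsec e he ⟨hae, hed'⟩
    exact .inr (hexp.trans_le (by exact_mod_cast hd'e))

lemma rough_exp_of_dvd_gap {a b : ℕ} {D : ℝ} (ha : 0 < a) (haD : a ≤ D)
    (hgap : ∀ e, e ∣ a * b → e ≤ a ∨ exp D < e) : Rough (exp D) b := by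
  intro p hp hpb
  refine (hgap p (hpb.mul_left a)).resolve_left fun hpa => ?_
  have hlt : exp D < (a * p : ℕ) := (hgap (a * p) (Nat.mul_dvd_mul_left a hpb)).resolve_left
    (lt_mul_of_one_lt_right ha hp.one_lt).not_ge
  refine hlt.not_ge ?_
  calc ((a * p : ℕ) : ℝ) ≤ (a * a : ℕ) := by gcongr
    _ = (a : ℝ) ^ 2 := by rw [Nat.cast_mul, sq]
    _ ≤ D ^ 2 := by gcongr
    _ ≤ exp D := sq_le_exp (a.cast_nonneg.trans haD)

lemma exists_rough_factor_of_notMem_SC {C : ℝ} {n : ℕ} (hn : 0 < n) (h : n ∉ SC C) :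
    ∃ a b, n = a * b ∧ 1 < b ∧ Rough (exp (max C a)) b := by
  obtain ⟨a, ⟨b, rfl⟩, hlt, hgap⟩ := exists_dvd_gap_of_notMem_SC hn h
  have ha : 0 < a := Nat.pos_of_mul_pos_right hn
  exact ⟨a, b, rfl, (lt_mul_iff_one_lt_right ha).1 hlt,
    rough_exp_of_dvd_gap ha (le_max_right _ _) hgap⟩

lemma norm_inv_mul_max_le (C : ℝ) (a : ℕ) :
    ‖((a : ℝ) * max C a)⁻¹‖ ≤ ((a : ℝ) ^ 2)⁻¹ := by
  rcases a.eq_zero_or_pos with rfl | ha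
  · simp
  · have : (0 : ℝ) < a := by exact_mod_cast ha
    rw [norm_of_nonneg (by positivity), sq]
    gcongr
    exact le_max_right _ _

lemma summable_inv_mul_max (C : ℝ) : Summable fun a : ℕ => ((a : ℝ) * max C a)⁻¹ :=
  .of_norm_bounded (summable_nat_pow_inv.2 one_lt_two) (norm_inv_mul_max_le C)

lemma tendsto_tsum_inv_mul_max :
    Tendsto (fun C : ℝ => ∑' a : ℕ, ((a : ℝ) * max C a)⁻¹) atTop (𝓝 0) := by
  have hterm (a : ℕ) : Tendsto (fun C : ℝ => ((a : ℝ) * max C a)⁻¹) atTop (𝓝 0) := by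
    rcases a.eq_zero_or_pos with rfl | ha
    · simp
    · exact ((tendsto_atTop_mono (fun C => le_max_left C (a : ℝ)) tendsto_id).const_mul_atTop
        (by exact_mod_cast ha)).inv_tendsto_atTop
  simpa using tendsto_tsum_of_dominated_convergence (summable_nat_pow_inv.2 one_lt_two) hterm
    (.of_forall norm_inv_mul_max_le)

lemma filter_notMem_SC_subset_biUnion (C : ℝ) (x : ℕ) :
    {n ∈ Icc 1 x | n ∉ SC C} ⊆ (Icc 1 x).biUnion fun a =>
      {b ∈ roughUpTo (exp (max C a)) (x / a) | 1 < b}.image (a * ·) := by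
  intro n hn
  obtain ⟨hnx, hSC⟩ := mem_filter.1 hn
  obtain ⟨hn0, hnx⟩ := mem_Icc.1 hnx
  obtain ⟨a, b, rfl, hb, hr⟩ := exists_rough_factor_of_notMem_SC hn0 hSC
  have ha : 0 < a := Nat.pos_of_mul_pos_right hn0
  have hax : a ≤ x := (Nat.le_mul_of_pos_right a (zero_lt_one.trans hb)).trans hnx
  have hbx : b ≤ x / a := (Nat.le_div_iff_mul_le ha).2 (mul_comm a b ▸ hnx)
  exact mem_biUnion.2 ⟨a, mem_Icc.2 ⟨ha, hax⟩, mem_image_of_mem _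
    (mem_filter.2 ⟨mem_roughUpTo.2 ⟨⟨hb.le, hbx⟩, hr⟩, hb⟩)⟩

lemma card_rough_cofactor_le (C : ℝ) {a : ℕ} (ha : 0 < a) (x : ℕ) :
    #{b ∈ roughUpTo (exp (max C a)) (x / a) | 1 < b} ≤
      sieveConst * x * ((a : ℝ) * max C a)⁻¹ := by
  have ha : (0 : ℝ) < a := by exact_mod_cast ha
  have hmax : 0 < max C a := lt_max_of_lt_right ha
  have hsieve := card_one_lt_roughUpTo_mul_log_le (one_le_exp hmax.le) (x / a)
  rw [log_exp] at hsieve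
  calc (#{b ∈ roughUpTo (exp (max C a)) (x / a) | 1 < b} : ℝ)
      ≤ sieveConst * (x / a : ℕ) / max C a := (le_div_iff₀ hmax).2 hsieve
    _ ≤ sieveConst * (x / a) / max C a := by
        gcongr
        · exact sieveConst_nonneg
        · exact Nat.cast_div_le
    _ = sieveConst * x * ((a : ℝ) * max C a)⁻¹ := by
        field_simp

lemma card_notMem_SC_le (C : ℝ) (x : ℕ) :
    #{n ∈ Icc 1 x | n ∉ SC C} ≤ sieveConst * x * ∑' a : ℕ, ((a : ℝ) * max C a)⁻¹ := by
  have hcard : #{n ∈ Icc 1 x | n ∉ SC C} ≤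
      ∑ a ∈ Icc 1 x, #{b ∈ roughUpTo (exp (max C a)) (x / a) | 1 < b} :=
    (card_le_card (filter_notMem_SC_subset_biUnion C x)).trans <|
      card_biUnion_le.trans (sum_le_sum fun _ _ => card_image_le)
  calc (#{n ∈ Icc 1 x | n ∉ SC C} : ℝ)
      ≤ ∑ a ∈ Icc 1 x, (#{b ∈ roughUpTo (exp (max C a)) (x / a) | 1 < b} : ℝ) := by
        exact_mod_cast hcard
    _ ≤ ∑ a ∈ Icc 1 x, sieveConst * x * ((a : ℝ) * max C a)⁻¹ :=
        sum_le_sum fun a ha => card_rough_cofactor_le C (mem_Icc.1 ha).1 x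
    _ ≤ sieveConst * x * ∑' a : ℕ, ((a : ℝ) * max C a)⁻¹ := by
        rw [← mul_sum]
        gcongr
        · exact mul_nonneg sieveConst_nonneg x.cast_nonneg
        · exact (summable_inv_mul_max C).sum_le_tsum _ fun _ _ => by positivity

theorem SC_majority_general {ε : ℝ} (hε : 0 < ε) :
    ∀ᶠ C in atTop, ∀ x : ℕ, 0 < x → (1 - ε) * x < #{n ∈ Icc 1 x | n ∈ SC C} := by
  have hlim : Tendsto (fun C : ℝ => sieveConst * ∑' a : ℕ, ((a : ℝ) * max C a)⁻¹) atTop (𝓝 0) := by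
    simpa using tendsto_tsum_inv_mul_max.const_mul sieveConst
  filter_upwards [hlim.eventually_lt_const hε] with C hC x hx
  have hsum : (#{n ∈ Icc 1 x | n ∈ SC C} + #{n ∈ Icc 1 x | n ∉ SC C} : ℝ) = x := by
    have := card_filter_add_card_filter_not (s := Icc 1 x) (· ∈ SC C)
    rw [Nat.card_Icc, Nat.add_sub_cancel] at this
    exact_mod_cast this
  have hlt : #{n ∈ Icc 1 x | n ∉ SC C} < ε * x :=
    calc (#{n ∈ Icc 1 x | n ∉ SC C} : ℝ)
        ≤ sieveConst * (∑' a : ℕ, ((a : ℝ) * max C a)⁻¹) * x :=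
          (card_notMem_SC_le C x).trans_eq (mul_right_comm _ _ _)
      _ < ε * x := by gcongr
  linarith

/-- There is a constant `C > 0` such that for every positive integer `x`, more
than `x/2` positive integers `n ≤ x` lie in `S_C`. -/
theorem SC_majority :
    ∃ C : ℝ, 0 < C ∧ ∀ x : ℕ, 0 < x →
      (x : ℝ) / 2 < (((Finset.Icc 1 x).filter fun n => n ∈ SC C).card : ℝ) := by
  obtain ⟨C, hcard, hC⟩ := ((SC_majority_general one_half_pos).and (eventually_gt_atTop 0)).exists
  exact ⟨C, hC, fun x hx => by linarith [hcard x hx]⟩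
end

section
/- Let C > 100 be a real number and let x ≥ e^C be a positive integer. Let l = ⌊log_2(log_C(log x))⌋, and for 0 ≤ i ≤ l set y_i = exp(C^(2^(i-1))) and z_i = exp(C^(2^i)). If a positive integer n ≤ x has, for every i with 0 ≤ i ≤ l, a divisor in the interval [y_i, z_i], then every pair of consecutive divisors d < d' of n satisfies d' ≤ exp(max(C, d)). -/
/-!
The divisor in `[y i, z i]` lies below `d'` as soon as `z i < d'`, and then it is at most `d`, so
`y i ≤ d`. Since `z (i + 1) ≤ exp (y i)`, the bound `exp d < d'` propagates `y i ≤ d` from one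
interval to the next, starting from `z 0 = exp C < d'`. It ends with `exp (y l) ≤ exp d < d'`,
which is impossible because `l` is so large that `n ≤ exp (y l)`.

In terms of `t = C ^ 2 ^ (i - 1)`, the inequality `z (i + 1) ≤ exp (y i)` says `t ^ 4 ≤ exp t`.
-/

lemma le_max_of_forall_inter_Icc_nonempty {α : Type*} [LinearOrder α] {S : Set α} {f : α → α}
    (hf : Monotone f) {y z : ℕ → α} {l : ℕ} (hS : ∀ i ≤ l, (S ∩ Set.Icc (y i) (z i)).Nonempty)
    (hyz : ∀ i < l, z (i + 1) ≤ f (y i)) {a b : α} (hb : b ≤ f (y l))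
    (hab : ∀ s ∈ S, s < b → s ≤ a) : b ≤ max (z 0) (f a) := by
  by_contra! hlt
  obtain ⟨hz₀, hfa⟩ := max_lt_iff.mp hlt
  have y_le_of_lt : ∀ i ≤ l, z i < b → y i ≤ a := by
    intro i hi hzi
    obtain ⟨s, hs, hys, hsz⟩ := hS i hi
    exact hys.trans (hab s hs (hsz.trans_lt hzi))
  have y_le : ∀ i ≤ l, y i ≤ a := by
    intro i hi
    induction i with
    | zero => exact y_le_of_lt 0 hi hz₀
    | succ i ih =>
      refine y_le_of_lt (i + 1) hi ?_
      calc z (i + 1) ≤ f (y i) := hyz i hi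
        _ ≤ f a := hf (ih (by lia))
        _ < b := hfa
  exact (hb.trans (hf (y_le l le_rfl))).not_gt hfa

lemma pow_le_exp_of_pow_le_exp_of_le {k : ℕ} {a t : ℝ} (ha : Real.exp 1 ≤ a) (hat : a ≤ t)
    (hk : a ^ k ≤ Real.exp a) : t ^ k ≤ Real.exp t := by
  have ha₀ : 0 < a := (Real.exp_pos 1).trans_le ha
  have ht₀ : 0 < t := ha₀.trans_le hat
  have log_div_le : Real.log t / t ≤ Real.log a / a :=
    Real.log_div_self_antitoneOn ha (ha.trans hat) hat
  have hka : k * Real.log a ≤ a := by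
    simpa only [Real.log_pow] using (Real.log_le_iff_le_exp (pow_pos ha₀ k)).mpr hk
  rw [← Real.log_le_iff_le_exp (pow_pos ht₀ k), Real.log_pow]
  calc k * Real.log t = k * (Real.log t / t) * t := by field_simp
    _ ≤ k * (Real.log a / a) * t := by gcongr
    _ = k * Real.log a / a * t := by ring
    _ ≤ 1 * t := by gcongr; exact (div_le_one ha₀).mpr hka
    _ = t := one_mul t

lemma pow_four_le_exp {t : ℝ} (ht : 9 ≤ t) : t ^ 4 ≤ Real.exp t := by
  refine pow_le_exp_of_pow_le_exp_of_le (by linarith [Real.exp_one_lt_three]) ht ?_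
  calc (9 : ℝ) ^ 4 ≤ 2.7 ^ 9 := by norm_num
    _ ≤ Real.exp 1 ^ 9 := by gcongr; linarith [Real.exp_one_gt_d9]
    _ = Real.exp 9 := by rw [← Real.exp_nat_mul]; norm_num

lemma rpow_two_rpow_add_one_le_exp {C s : ℝ} (hC : 81 ≤ C) (hs : 0 ≤ s) :
    C ^ ((2 : ℝ) ^ (s + 1)) ≤ Real.exp (C ^ ((2 : ℝ) ^ (s - 1))) := by
  have half_le : (1 / 2 : ℝ) ≤ 2 ^ (s - 1) := by
    rw [one_div, ← Real.rpow_neg_one]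
    exact Real.rpow_le_rpow_of_exponent_le one_le_two (by linarith)
  have nine_le : 9 ≤ C ^ ((2 : ℝ) ^ (s - 1)) := by
    calc (9 : ℝ) ≤ √C := Real.le_sqrt_of_sq_le (by linarith)
      _ = C ^ (1 / 2 : ℝ) := Real.sqrt_eq_rpow C
      _ ≤ C ^ ((2 : ℝ) ^ (s - 1)) := Real.rpow_le_rpow_of_exponent_le (by linarith) half_le
  have exponent_eq : (2 : ℝ) ^ (s + 1) = 2 ^ (s - 1) * (4 : ℕ) := by
    rw [show s + 1 = s - 1 + 2 by ring, Real.rpow_add two_pos]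
    norm_num
  calc C ^ ((2 : ℝ) ^ (s + 1)) = (C ^ ((2 : ℝ) ^ (s - 1))) ^ 4 := by
        rw [exponent_eq, Real.rpow_mul_natCast (by linarith)]
    _ ≤ Real.exp (C ^ ((2 : ℝ) ^ (s - 1))) := pow_four_le_exp nine_le

lemma lt_rpow_of_logb_lt {b u v : ℝ} (hb : 1 < b) (h : Real.logb b u < v) : u < b ^ v :=
  Real.lt_rpow_of_log_lt (one_pos.trans hb) ((div_lt_iff₀ (Real.log_pos hb)).mp h)

lemma lt_rpow_two_rpow_floor_logb_logb_add_one {C u : ℝ} (hC : 1 < C) :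
    u < C ^ ((2 : ℝ) ^ ((⌊Real.logb 2 (Real.logb C u)⌋₊ : ℝ) + 1)) :=
  lt_rpow_of_logb_lt hC (lt_rpow_of_logb_lt one_lt_two (Nat.lt_floor_add_one _))

theorem consecutive_divisors_of_divisor_in_intervals_general {C : ℝ} (hC : 81 ≤ C) {n l : ℕ}
    (hn : n ≠ 0) (hl : Real.log n ≤ C ^ ((2 : ℝ) ^ ((l : ℝ) + 1)))
    (hdiv : ∀ i : ℕ, i ≤ l → ∃ e : ℕ, e ∣ n ∧ Real.exp (C ^ ((2 : ℝ) ^ ((i : ℝ) - 1))) ≤ e ∧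
      (e : ℝ) ≤ Real.exp (C ^ ((2 : ℝ) ^ (i : ℝ))))
    {d d' : ℕ} (hd' : d' ∣ n) (hcons : ∀ e : ℕ, e ∣ n → ¬(d < e ∧ e < d')) :
    (d' : ℝ) ≤ Real.exp (max C d) := by
  let y (i : ℕ) : ℝ := Real.exp (C ^ ((2 : ℝ) ^ ((i : ℝ) - 1)))
  let z (i : ℕ) : ℝ := Real.exp (C ^ ((2 : ℝ) ^ (i : ℝ)))
  let S : Set ℝ := Nat.cast '' {e : ℕ | e ∣ n}
  have hS : ∀ i ≤ l, (S ∩ Set.Icc (y i) (z i)).Nonempty := by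
    intro i hi
    obtain ⟨e, hen, hye, hez⟩ := hdiv i hi
    exact ⟨e, ⟨e, hen, rfl⟩, hye, hez⟩
  have hyz : ∀ i < l, z (i + 1) ≤ Real.exp (y i) := by
    intro i _
    simpa only [z, Nat.cast_succ] using
      Real.exp_monotone (rpow_two_rpow_add_one_le_exp hC i.cast_nonneg)
  have d'_le : (d' : ℝ) ≤ Real.exp (y l) := by
    calc (d' : ℝ) ≤ n := by exact_mod_cast Nat.le_of_dvd (Nat.pos_of_ne_zero hn) hd'
      _ ≤ Real.exp (C ^ ((2 : ℝ) ^ ((l : ℝ) + 1))) :=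
        (Real.log_le_iff_le_exp (by positivity)).mp hl
      _ ≤ Real.exp (y l) := Real.exp_monotone (rpow_two_rpow_add_one_le_exp hC l.cast_nonneg)
  have le_d : ∀ s ∈ S, s < d' → s ≤ d := by
    rintro _ ⟨e, hen, rfl⟩ hed'
    exact_mod_cast not_lt.mp fun hde => hcons e hen ⟨hde, by exact_mod_cast hed'⟩
  have hz₀ : z 0 = Real.exp C := by simp [z]
  rw [Real.exp_monotone.map_max, ← hz₀]
  exact le_max_of_forall_inter_Icc_nonempty Real.exp_monotone hS hyz d'_le le_d

/-- Let `C > 100`, and let `x ≥ e^C` be a positive integer. With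
`l = ⌊log₂ (log_C (log x))⌋`, `y_i = exp (C^(2^(i-1)))` and `z_i = exp (C^(2^i))`,
if a positive integer `n ≤ x` has a divisor in `[y_i, z_i]` for every `0 ≤ i ≤ l`,
then every pair of consecutive divisors `d < d'` of `n` satisfies
`d' ≤ exp (max C d)`. -/
theorem consecutive_divisors_of_divisor_in_intervals
    (C : ℝ) (hC : 100 < C) (x : ℕ) (hx : 0 < x) (hxC : Real.exp C ≤ (x : ℝ))
    (l : ℕ) (hl : l = ⌊Real.logb 2 (Real.logb C (Real.log x))⌋₊)
    (y z : ℕ → ℝ)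
    (hy : ∀ i : ℕ, y i = Real.exp (C ^ ((2 : ℝ) ^ ((i : ℝ) - 1))))
    (hz : ∀ i : ℕ, z i = Real.exp (C ^ ((2 : ℝ) ^ (i : ℝ))))
    (n : ℕ) (hn : 0 < n) (hnx : n ≤ x)
    (hdiv : ∀ i : ℕ, i ≤ l → ∃ d : ℕ, d ∣ n ∧ y i ≤ (d : ℝ) ∧ (d : ℝ) ≤ z i) :
    ∀ d d' : ℕ, d ∣ n → d' ∣ n → d < d' →
      (∀ e : ℕ, e ∣ n → ¬(d < e ∧ e < d')) →
      (d' : ℝ) ≤ Real.exp (max C (d : ℝ)) := by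
  intro d d' _ hd' _ hcons
  have hlog : Real.log n ≤ C ^ ((2 : ℝ) ^ ((l : ℝ) + 1)) := by
    calc Real.log n ≤ Real.log x := by gcongr
      _ ≤ C ^ ((2 : ℝ) ^ ((l : ℝ) + 1)) :=
        hl ▸ (lt_rpow_two_rpow_floor_logb_logb_add_one (by linarith)).le
  simp only [hy, hz] at hdiv
  exact consecutive_divisors_of_divisor_in_intervals_general
    (by linarith) hn.ne' hlog hdiv hd' hcons
end

section
/- The set of positive integers k such that 2^k is separable has positive lower asymptotic density. -/
/-!
The argument builds, for many `k`, an odd `m` with exactly one divisor in each dyadic block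
`[2 ^ i, 2 ^ (i + 1))`, `i < k`, and no other divisors (`DyadicChain`); such an `m` interlocks with
`2 ^ k`. If `m` works for `k` and `q` is a prime just above `2 ^ k`, then `m * q ^ (c - 1)` works
for `k * c`, since its divisors are `c` shifted copies of those of `m`; the shifts must not push a
divisor out of its block, which is ensured by `q ≤ 2 ^ k * (1 + 1 / (4 * k * c))`
(`Attainable.mul`).

Primes this close to `2 ^ k` come from the zeta function. The `3-4-1` inequality, in quantitative
form, gives a zero-free region of width `(log T) ^ (-9)` up to constants, so by Cauchy's estimate
the `j`-th derivative of `-ζ'/ζ - ζ` on the line `re s = 1` is at most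
`j! * (C * (log |t|) ^ 9) ^ (j + 1)`. By Fourier inversion against a triangular bump, this bounds
the sum of `(Λ n - 1) * (log n) ^ j / n` over `log n` within `δ` of `u`, whereas without primes
there the sum would be about `-δ * u ^ j`. With `u` close to `A * log 2`, `δ = exp (-(log A) ^ 5)`
and `j` of order `(log A) ^ 4` this yields a prime `q > 2 ^ A` with `log q - A * log 2 < 2 * δ`
(`exists_prime_gt_two_pow`). Hence an attainable `A` with `log A ≥ 1500` may be multiplied by any
`c` with `log c ≤ (log A) ^ 4` (`Attainable.mul_of_log_le`). To reach this range, one starts from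
the divisors of `231 = 3 * 7 * 11` and uses three explicit primes, the last two certified by
Proth's criterion (`attainable_8192_mul_two_pow`).

Now fix a large attainable `k`. The multiple `k * b` is attainable as soon as the prime factors of
`b` can be multiplied onto `k` in increasing order, each `p` with `log p ≤ (log A) ^ 4` for the
product `A` formed before it. This holds if `b` is `Graded`: cut the primes into blocks with
logarithms repeatedly squared, and require a prime factor of `b` in the block preceding any block
beyond the first that contains a prime factor of `b`. By Chebyshev's bounds the reciprocals of the
primes in the `i`-th block have sum at least a constant times `2 ^ i`, so by Turán's second moment
bound only `O(x / 2 ^ i)` of the integers up to `x` miss that block; with the blocks starting high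
enough, at least half of all `b ≤ x` are graded, and the lower density is at least `1 / (4 * k)`.
-/

open scoped Classical

/-! ### Dyadic chains -/

/-- The numbers `m` that are made to interlock with `2 ^ k`: `m` is odd, every dyadic block
`[2 ^ i, 2 ^ (i + 1))` with `i < k` contains exactly one divisor of `m`, there are no divisors
beyond these blocks, and a divisor exceeds the left end of its block by a factor of at most `ρ`. -/
structure DyadicChain (m k : ℕ) (ρ : ℝ) : Prop where
  odd : Odd m
  bijOn_log : Set.BijOn (Nat.log 2) {d | d ∣ m} (Set.Iio k)
  le_mul_two_pow_log : ∀ d, d ∣ m → (d : ℝ) ≤ ρ * 2 ^ Nat.log 2 d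

namespace DyadicChain

variable {m k : ℕ} {ρ : ℝ}

lemma log_lt (h : DyadicChain m k ρ) {d : ℕ} (hd : d ∣ m) : Nat.log 2 d < k :=
  h.bijOn_log.mapsTo hd

lemma pos (h : DyadicChain m k ρ) : 0 < k :=
  (Nat.zero_le _).trans_lt (h.log_lt (one_dvd m))

lemma one_le (h : DyadicChain m k ρ) : 1 ≤ ρ := by
  simpa using h.le_mul_two_pow_log 1 (one_dvd m)

lemma two_pow_ne (h : DyadicChain m k ρ) {d i : ℕ} (hd : d ∣ m) (hi : i ≠ 0) : 2 ^ i ≠ d := by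
  rintro rfl
  exact Nat.not_even_iff_odd.2 (h.odd.of_dvd_nat hd) (even_two.pow_of_ne_zero hi)

theorem interlocking (h : DyadicChain m k ρ) : Interlocking m (2 ^ k) := by
  refine ⟨h.odd.pos, by positivity, fun d d' hd hd' hd1 hlt _ ↦ ?_, fun d d' hd hd' _ hlt _ ↦ ?_⟩
  · obtain ⟨i, -, rfl⟩ := (Nat.dvd_prime_pow Nat.prime_two).1 hd
    obtain ⟨j, hj, rfl⟩ := (Nat.dvd_prime_pow Nat.prime_two).1 hd'
    have hij : i < j := (Nat.pow_lt_pow_iff_right one_lt_two).1 hlt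
    have hi : i ≠ 0 := by rintro rfl; simp at hd1
    obtain ⟨e, he, rfl⟩ := h.bijOn_log.surjOn (show i < k by omega)
    refine ⟨e, he, (Nat.pow_log_le_self 2 (h.odd.of_dvd_nat he).pos.ne').lt_of_ne
      (h.two_pow_ne he hi), (Nat.lt_pow_succ_log_self one_lt_two e).trans_le ?_⟩
    exact Nat.pow_le_pow_right two_pos hij
  · have hlog : Nat.log 2 d < Nat.log 2 d' := (Nat.log_mono_right hlt.le).lt_of_ne
      fun heq ↦ hlt.ne (h.bijOn_log.injOn hd hd' heq)
    exact ⟨2 ^ Nat.log 2 d', pow_dvd_pow 2 (h.log_lt hd').le,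
      (Nat.lt_pow_succ_log_self one_lt_two d).trans_le (Nat.pow_le_pow_right two_pos hlog),
      (Nat.pow_log_le_self 2 (by omega)).lt_of_ne (h.two_pow_ne hd' (by omega))⟩

section MulPrimePow

variable {n q : ℕ} {ρ' : ℝ}

lemma mul_pow_le (h : DyadicChain m k ρ) (hqk : 2 ^ k < q) (hρ : ρ * (q / 2 ^ k) ^ n ≤ ρ')
    {d j : ℕ} (hd : d ∣ m) (hj : j ≤ n) :
    ((d * q ^ j : ℕ) : ℝ) ≤ ρ' * 2 ^ (Nat.log 2 d + k * j) := by
  have hq : (1 : ℝ) ≤ q / 2 ^ k := by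
    rw [one_le_div (by positivity)]; exact_mod_cast hqk.le
  have hρ0 := h.one_le
  calc ((d * q ^ j : ℕ) : ℝ) ≤ ρ * 2 ^ Nat.log 2 d * q ^ j := by
        push_cast; gcongr; exact h.le_mul_two_pow_log d hd
    _ = ρ * (q / 2 ^ k) ^ j * 2 ^ (Nat.log 2 d + k * j) := by
        rw [div_pow, pow_add, pow_mul]; field_simp
    _ ≤ ρ * (q / 2 ^ k) ^ n * 2 ^ (Nat.log 2 d + k * j) := by gcongr
    _ ≤ ρ' * 2 ^ (Nat.log 2 d + k * j) := by gcongr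

lemma log_mul_pow (h : DyadicChain m k ρ) (hqk : 2 ^ k < q) (hρ : ρ * (q / 2 ^ k) ^ n ≤ ρ')
    (hρ' : ρ' < 2) {d j : ℕ} (hd : d ∣ m) (hj : j ≤ n) :
    Nat.log 2 (d * q ^ j) = Nat.log 2 d + k * j := by
  refine Nat.log_eq_of_pow_le_of_lt_pow ?_ ?_
  · rw [pow_add, pow_mul]
    gcongr
    exact Nat.pow_log_le_self 2 (h.odd.of_dvd_nat hd).pos.ne'
  · have : ((d * q ^ j : ℕ) : ℝ) < 2 ^ (Nat.log 2 d + k * j + 1) := by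
      rw [pow_succ']
      exact (h.mul_pow_le hqk hρ hd hj).trans_lt (by gcongr)
    exact_mod_cast this

/-- The divisors of `m * q ^ n` are `n + 1` copies of those of `m`, moved up by multiples of `k`
blocks. -/
theorem mul_prime_pow (h : DyadicChain m k ρ) (hq : q.Prime) (hqk : 2 ^ k < q)
    (hρ : ρ * (q / 2 ^ k) ^ n ≤ ρ') (hρ' : ρ' < 2) :
    DyadicChain (m * q ^ n) (k * (n + 1)) ρ' := by
  have hdvd {d : ℕ} (hd : d ∣ m * q ^ n) : ∃ e j, e ∣ m ∧ j ≤ n ∧ e * q ^ j = d := by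
    obtain ⟨e, f, he, hf, rfl⟩ := Nat.dvd_mul.1 hd
    obtain ⟨j, hj, rfl⟩ := (Nat.dvd_prime_pow hq).1 hf
    exact ⟨e, j, he, hj, rfl⟩
  have hlog {e j : ℕ} (he : e ∣ m) (hj : j ≤ n) := h.log_mul_pow hqk hρ hρ' he hj
  have hq_odd : Odd q := hq.odd_of_ne_two
    ((Nat.le_self_pow h.pos.ne' 2).trans_lt hqk).ne'
  refine ⟨h.odd.mul hq_odd.pow, ⟨fun d hd ↦ ?_, fun d hd d' hd' heq ↦ ?_, fun i hi ↦ ?_⟩,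
    fun d hd ↦ ?_⟩
  · obtain ⟨e, j, he, hj, rfl⟩ := hdvd hd
    rw [Set.mem_Iio, hlog he hj]
    nlinarith [h.log_lt he, Nat.mul_le_mul_left k hj]
  · obtain ⟨e, j, he, hj, rfl⟩ := hdvd hd
    obtain ⟨e', j', he', hj', rfl⟩ := hdvd hd'
    rw [hlog he hj, hlog he' hj'] at heq
    have hj_eq : j = j' := by
      simpa [Nat.add_mul_div_left _ _ h.pos, Nat.div_eq_of_lt (h.log_lt he),
        Nat.div_eq_of_lt (h.log_lt he')] using congr_arg (· / k) heq
    rw [hj_eq, h.bijOn_log.injOn he he' (by subst hj_eq; omega)]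
  · have hik : i / k ≤ n := Nat.lt_succ_iff.1 (Nat.div_lt_of_lt_mul hi)
    obtain ⟨d, hd, hdi⟩ := h.bijOn_log.surjOn (Nat.mod_lt i h.pos)
    exact ⟨d * q ^ (i / k), mul_dvd_mul hd (pow_dvd_pow q hik), by
      rw [hlog hd hik, hdi, Nat.mod_add_div]⟩
  · obtain ⟨e, j, he, hj, rfl⟩ := hdvd hd
    rw [hlog he hj]
    exact h.mul_pow_le hqk hρ he hj

end MulPrimePow

end DyadicChain

/-! ### Attainable exponents -/

/-- The exponents `k` for which the construction provides a dyadic chain. The bound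
`2 * k / (k + 1)` leaves just enough room for the last block to be enlarged further. -/
def Attainable (k : ℕ) : Prop := ∃ m, DyadicChain m k (2 * k / (k + 1))

lemma Attainable.pos {k : ℕ} (h : Attainable k) : 0 < k :=
  let ⟨_, hm⟩ := h; hm.pos

lemma Attainable.separable {k : ℕ} (h : Attainable k) : Separable (2 ^ k) :=
  let ⟨m, hm⟩ := h; ⟨m, hm.interlocking⟩

lemma one_add_pow_le_one_add_two_mul {ε : ℝ} {n : ℕ} (hε : 0 ≤ ε) (hn : n * ε ≤ 1 / 2) :
    (1 + ε) ^ n ≤ 1 + 2 * (n * ε) := by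
  have hnε : 0 ≤ n * ε := by positivity
  calc (1 + ε) ^ n ≤ Real.exp ε ^ n := by gcongr; linarith [Real.add_one_le_exp ε]
    _ = Real.exp (n * ε) := (Real.exp_nat_mul ε n).symm
    _ ≤ 1 / (1 - n * ε) := Real.exp_bound_div_one_sub_of_interval hnε (by linarith)
    _ ≤ 1 + 2 * (n * ε) := by rw [div_le_iff₀ (by linarith)]; nlinarith

theorem Attainable.mul {k c q : ℕ} (h : Attainable k) (hc : 0 < c) (hq : q.Prime)
    (hqk : 2 ^ k < q) (hqc : (q : ℝ) ≤ 2 ^ k * (1 + 1 / (4 * k * c))) : Attainable (k * c) := by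
  obtain ⟨n, rfl⟩ := Nat.exists_eq_add_one.2 hc
  have hk : (1 : ℝ) ≤ k := by exact_mod_cast h.pos
  obtain ⟨m, hm⟩ := h
  have hn : n * (1 / (4 * k * (n + 1 : ℕ)) : ℝ) ≤ 1 / 2 := by
    rw [mul_one_div, div_le_iff₀ (by positivity)]
    push_cast
    nlinarith
  have hpow : (q / 2 ^ k : ℝ) ^ n ≤ 1 + 2 * (n * (1 / (4 * k * (n + 1 : ℕ)))) :=
    (by gcongr; rwa [div_le_iff₀' (by positivity)] : (q / 2 ^ k : ℝ) ^ n ≤ _).trans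
      (one_add_pow_le_one_add_two_mul (by positivity) hn)
  have hρ : (2 * k / (k + 1) : ℝ) * (1 + 2 * (n * (1 / (4 * k * (n + 1 : ℕ))))) ≤
      2 * (k * (n + 1) : ℕ) / ((k * (n + 1) : ℕ) + 1) := by
    have hfactor : (1 + 2 * (n * (1 / (4 * k * (n + 1 : ℕ)))) : ℝ) =
        (2 * k * (n + 1) + n) / (2 * k * (n + 1)) := by
      push_cast; field_simp; ring
    have hslack : 0 ≤ (k : ℝ) * n * (k * (n + 1) - 1) :=
      mul_nonneg (by positivity) (by nlinarith)
    rw [hfactor, div_mul_div_comm, div_le_div_iff₀ (by positivity) (by positivity)]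
    push_cast
    nlinarith
  exact ⟨_, hm.mul_prime_pow hq hqk ((by gcongr : _ ≤ _).trans hρ)
    ((div_lt_iff₀ (by positivity)).2 (by linarith))⟩

/-! ### The first links, from Proth primes -/

lemma two_pow_dvd_sub_one_of_prime_dvd {p s r a : ℕ} (hp : p.Prime) (hp2 : p ≠ 2)
    (ha : p ∣ a ^ (2 ^ s * r) + 1) : 2 ^ (s + 1) ∣ p - 1 := by
  have : Fact p.Prime := ⟨hp⟩
  have : Fact (2 < p) := ⟨hp.two_le.lt_of_ne hp2.symm⟩
  set b : ZMod p := (a : ZMod p) ^ r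
  have hb : b ^ 2 ^ s = -1 := by
    rw [← pow_mul, mul_comm r, eq_neg_iff_add_eq_zero]
    exact_mod_cast (ZMod.natCast_eq_zero_iff _ _).2 ha
  have hb0 : b ≠ 0 := by
    intro hb0
    rw [hb0, zero_pow (by positivity)] at hb
    exact neg_ne_zero.2 one_ne_zero hb.symm
  rw [← orderOf_eq_prime_pow (x := b) (by rw [hb]; exact ZMod.neg_one_ne_one)
    (by rw [pow_succ, pow_mul, hb, neg_one_sq])]
  exact ZMod.orderOf_dvd_card_sub_one hb0

/-- Proth's criterion: all prime factors of `q` are `1` modulo `2 ^ (s + 1)`, hence exceed `√q`. -/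
theorem prime_of_dvd_pow_add_one {q s r a : ℕ} (hq : q = 2 ^ (s + 1) * r + 1) (hr0 : 0 < r)
    (hr : r < 2 ^ (s + 1)) (ha : q ∣ a ^ (2 ^ s * r) + 1) : q.Prime := by
  by_contra hnp
  have hq1 : q ≠ 1 := by simp [hq, hr0.ne']
  have hodd : Odd q := by
    rw [hq, pow_succ', mul_assoc]; exact odd_two_mul_add_one _
  have hminFac := Nat.minFac_prime hq1
  have hp2 : q.minFac ≠ 2 := fun h2 ↦ by
    have := hodd.of_dvd_nat (h2 ▸ Nat.minFac_dvd q); exact absurd this (by decide)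
  have hle : 2 ^ (s + 1) ≤ q.minFac - 1 := Nat.le_of_dvd (Nat.sub_pos_of_lt hminFac.one_lt)
    (two_pow_dvd_sub_one_of_prime_dvd hminFac hp2 ((Nat.minFac_dvd q).trans ha))
  have hlt : 2 ^ (s + 1) < q.minFac := by have := hminFac.one_lt; omega
  nlinarith [Nat.minFac_sq_le_self (by omega) hnp, Nat.mul_le_mul_left (2 ^ (s + 1)) hr.le]

/-- `2 ^ k` successive squarings modulo `q`. The recursor, with its argument used once per squaring,
lets the kernel evaluate this without deep recursion. -/
def sqBlock (q k : ℕ) : ℕ → ℕ :=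
  Nat.rec (motive := fun _ => ℕ → ℕ) (fun x => x ^ 2 % q) (fun _ f x => f (f x)) k

lemma sqBlock_modEq (q k x : ℕ) : sqBlock q k x ≡ x ^ 2 ^ 2 ^ k [MOD q] := by
  induction k generalizing x with
  | zero => exact Nat.mod_modEq _ _
  | succ k ih =>
    have h := (ih (sqBlock q k x)).trans ((ih x).pow _)
    rwa [← pow_mul, ← pow_add, ← two_mul, ← pow_succ'] at h

/-- Successive squarings modulo `q`, where `l` lists the binary digits of their number. -/
def sqBlocks (q : ℕ) (l : List ℕ) (x : ℕ) : ℕ := l.foldr (sqBlock q) x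

lemma sqBlocks_modEq (q : ℕ) (l : List ℕ) (x : ℕ) :
    sqBlocks q l x ≡ x ^ 2 ^ (l.map (2 ^ ·)).sum [MOD q] := by
  induction l with
  | nil => simp [sqBlocks, Nat.ModEq.refl]
  | cons k l ih =>
    have h := (sqBlock_modEq q k (sqBlocks q l x)).trans (ih.pow _)
    rw [← pow_mul, ← pow_add] at h
    rw [List.map_cons, List.sum_cons, add_comm]
    exact h

lemma dvd_pow_add_one_of_sqBlocks {q s t u a : ℕ} (l l' : List ℕ) (hl : (l.map (2 ^ ·)).sum = t)
    (hl' : (l'.map (2 ^ ·)).sum = s)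
    (ha : (sqBlocks q l' (sqBlocks q l a * a ^ u) + 1) % q = 0) :
    q ∣ a ^ (2 ^ s * (2 ^ t + u)) + 1 := by
  have hpow := (sqBlocks_modEq q l' (sqBlocks q l a * a ^ u)).trans
    (((sqBlocks_modEq q l a).mul_right (a ^ u)).pow _)
  rw [hl, hl', ← pow_add, ← pow_mul, mul_comm (2 ^ t + u)] at hpow
  exact ((hpow.add_right 1).dvd_iff dvd_rfl).1 (Nat.dvd_of_mod_eq_zero ha)

lemma prime_two_pow_128_add : (2 ^ 128 + 323 * 2 ^ 66 + 1).Prime :=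
  prime_of_dvd_pow_add_one (s := 65) (r := 2 ^ 62 + 323) (a := 7) (by norm_num) (by norm_num)
    (by norm_num) (dvd_pow_add_one_of_sqBlocks [1, 2, 3, 4, 5] [0, 6] (by norm_num) (by norm_num)
      (by decide +kernel))

set_option exponentiation.threshold 10000 in
lemma prime_two_pow_8192_add : (2 ^ 8192 + 2169 * 2 ^ 4100 + 1).Prime :=
  prime_of_dvd_pow_add_one (s := 4099) (r := 2 ^ 4092 + 2169) (a := 3) (by norm_num) (by norm_num)
    (by norm_num) (dvd_pow_add_one_of_sqBlocks [2, 3, 4, 5, 6, 7, 8, 9, 10, 11] [0, 1, 12]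
      (by norm_num) (by norm_num) (by decide +kernel))

lemma dyadicChain_231 : DyadicChain 231 8 (181 / 100) := by
  have hdivisors {d : ℕ} (hd : d ∣ 231) : d ∈ Nat.divisors 231 := by simpa using hd
  refine ⟨by decide, ⟨fun d hd ↦ ?_, fun d hd e he ↦ ?_, fun i hi ↦ ?_⟩, fun d hd ↦ ?_⟩
  · exact (by decide +kernel : ∀ d ∈ Nat.divisors 231, Nat.log 2 d < 8) d (hdivisors hd)
  · exact (by decide +kernel : ∀ d ∈ Nat.divisors 231, ∀ e ∈ Nat.divisors 231,
      Nat.log 2 d = Nat.log 2 e → d = e) d (hdivisors hd) e (hdivisors he)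
  · obtain ⟨d, hd, hdi⟩ := (by decide +kernel : ∀ i < 8, ∃ d ∈ Nat.divisors 231,
      Nat.log 2 d = i) i hi
    exact ⟨d, Nat.dvd_of_mem_divisors hd, hdi⟩
  · have hle : 100 * d ≤ 181 * 2 ^ Nat.log 2 d := (by decide +kernel :
      ∀ d ∈ Nat.divisors 231, 100 * d ≤ 181 * 2 ^ Nat.log 2 d) d (hdivisors hd)
    rw [div_mul_eq_mul_div, le_div_iff₀' (by norm_num)]
    exact_mod_cast hle

lemma attainable_128 : Attainable 128 :=
  ⟨_, dyadicChain_231.mul_prime_pow (n := 15) (q := 257) (by norm_num) (by norm_num)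
    (by norm_num) (by norm_num)⟩

lemma attainable_8192 : Attainable 8192 :=
  attainable_128.mul (c := 64) (by norm_num) prime_two_pow_128_add (by norm_num) (by norm_num)

set_option exponentiation.threshold 10000 in
lemma attainable_8192_mul_two_pow : Attainable (8192 * 2 ^ 2300) := by
  refine attainable_8192.mul (by positivity) prime_two_pow_8192_add (by norm_num) ?_
  have hgap : (2169 * 2 ^ 4100 + 1 : ℝ) ≤ 2 ^ 8192 * (1 / (4 * 8192 * 2 ^ 2300)) := by
    rw [mul_one_div, le_div_iff₀ (by positivity)]
    norm_num
  push_cast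
  linarith [hgap]

/-! ### The zeta function near the line `re s = 1` -/

/-- The terms of the series `(s - 1) ζ(s) = 1 + ∑ zetaTerm n s`, which continues `ζ` to the
half-plane `0 < re s`. -/
noncomputable def zetaTerm (n : ℕ) (s : ℂ) : ℂ :=
  (s - 1) * ((n + 1 : ℝ) : ℂ) ^ (-s) - ((n + 1 : ℝ) : ℂ) ^ (1 - s) + ((n + 1 + 1 : ℝ) : ℂ) ^ (1 - s)

lemma norm_ofReal_cpow_neg {x : ℝ} (hx : 0 < x) (s : ℂ) : ‖(x : ℂ) ^ (-s)‖ = x ^ (-s.re) := by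
  rw [Complex.norm_cpow_eq_rpow_re_of_pos hx, Complex.neg_re]

lemma norm_cpow_neg_sub_cpow_neg_le {s : ℂ} (hs : 0 < s.re) {x u : ℝ} (hx : 0 < x) (hxu : x ≤ u)
    (hu : u ≤ x + 1) :
    ‖(x : ℂ) ^ (-s) - (u : ℂ) ^ (-s)‖ ≤ min 2 (‖s‖ / x) * x ^ (-s.re) := by
  have antitone {v a : ℝ} (hv : x ≤ v) (ha : a ≤ 0) : v ^ a ≤ x ^ a :=
    Real.rpow_le_rpow_of_nonpos hx hv ha
  rw [min_mul_of_nonneg _ _ (by positivity), le_min_iff]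
  constructor
  · refine (norm_sub_le _ _).trans ?_
    rw [norm_ofReal_cpow_neg hx, norm_ofReal_cpow_neg (hx.trans_le hxu)]
    linarith [antitone hxu (a := -s.re) (by linarith)]
  · have neg_s_ne : -s ≠ 0 := neg_ne_zero.2 fun h ↦ by simp [h] at hs
    have mean_value := norm_image_sub_le_of_norm_deriv_le_segment' (a := x) (b := x + 1)
      (f := fun y : ℝ ↦ (y : ℂ) ^ (-s)) (f' := fun y : ℝ ↦ -s * (y : ℂ) ^ (-s - 1))
      (C := ‖s‖ * x ^ (-s.re - 1))
      (fun y hy ↦ (hasDerivAt_ofReal_cpow_const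
        (hx.trans_le hy.1).ne' neg_s_ne).hasDerivWithinAt)
      (fun y hy ↦ by
        rw [norm_mul, norm_neg, Complex.norm_cpow_eq_rpow_re_of_pos (hx.trans_le hy.1)]
        gcongr
        simpa using antitone hy.1 (a := -s.re - 1) (by linarith)) u ⟨hxu, hu⟩
    rw [norm_sub_rev]
    calc ‖(u : ℂ) ^ (-s) - (x : ℂ) ^ (-s)‖ ≤ ‖s‖ * x ^ (-s.re - 1) * (u - x) := mean_value
      _ ≤ ‖s‖ * x ^ (-s.re - 1) * 1 := by gcongr; linarith
      _ = ‖s‖ / x * x ^ (-s.re) := by rw [Real.rpow_sub_one hx.ne']; ring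

lemma norm_zetaTerm_le {s : ℂ} (hs : 0 < s.re) (n : ℕ) :
    ‖zetaTerm n s‖ ≤ ‖s - 1‖ * (min 2 (‖s‖ / (n + 1)) * (n + 1 : ℝ) ^ (-s.re)) := by
  rcases eq_or_ne s 1 with rfl | s_ne_one
  · simp [zetaTerm]
  set x : ℝ := n + 1 with hx
  have x_pos : 0 < x := by positivity
  have mean_value := norm_image_sub_le_of_norm_deriv_le_segment' (a := x) (b := x + 1)
      (f := fun y : ℝ ↦ (y : ℂ) ^ (1 - s) + (y : ℂ) * ((s - 1) * (x : ℂ) ^ (-s)))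
      (f' := fun y : ℝ ↦ (1 - s) * (y : ℂ) ^ (1 - s - 1) + 1 * ((s - 1) * (x : ℂ) ^ (-s)))
      (C := ‖s - 1‖ * (min 2 (‖s‖ / x) * x ^ (-s.re)))
      (fun y hy ↦ ((hasDerivAt_ofReal_cpow_const (x_pos.trans_le hy.1).ne'
        (sub_ne_zero.2 s_ne_one.symm)).add
          (Complex.ofRealCLM.hasDerivAt.mul_const _)).hasDerivWithinAt)
      (fun y hy ↦ by
        have deriv_eq : (1 - s) * (y : ℂ) ^ (1 - s - 1) + 1 * ((s - 1) * (x : ℂ) ^ (-s))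
            = (s - 1) * ((x : ℂ) ^ (-s) - (y : ℂ) ^ (-s)) := by
          rw [show 1 - s - 1 = -s by ring]; ring
        rw [deriv_eq, norm_mul]
        gcongr
        exact norm_cpow_neg_sub_cpow_neg_le hs x_pos hy.1 hy.2.le) (x + 1) ⟨by linarith, le_rfl⟩
  rw [add_sub_cancel_left, mul_one] at mean_value
  refine le_of_eq_of_le ?_ mean_value
  rw [zetaTerm, ← hx]
  push_cast
  congr 1
  ring

lemma differentiable_zetaTerm (n : ℕ) : Differentiable ℂ (zetaTerm n) := by
  unfold zetaTerm
  intro s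
  have h : ((n + 1 : ℝ) : ℂ) ≠ 0 := by exact_mod_cast n.succ_ne_zero
  have h' : ((n + 1 + 1 : ℝ) : ℂ) ≠ 0 := by exact_mod_cast (n + 1).succ_ne_zero
  exact (((differentiableAt_id.sub_const _).mul (differentiableAt_id.neg.const_cpow (Or.inl h))).sub
    ((differentiableAt_id.const_sub _).const_cpow (Or.inl h))).add
    ((differentiableAt_id.const_sub _).const_cpow (Or.inl h'))

lemma sum_range_zetaTerm (N : ℕ) (s : ℂ) :
    ∑ n ∈ Finset.range N, zetaTerm n s =
      (s - 1) * ∑ n ∈ Finset.range N, ((n + 1 : ℝ) : ℂ) ^ (-s) - 1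
        + ((N + 1 : ℝ) : ℂ) ^ (1 - s) := by
  induction N with
  | zero => simp
  | succ N ih =>
    rw [Finset.sum_range_succ, Finset.sum_range_succ, ih, zetaTerm]
    push_cast
    ring

lemma summable_nat_add_one_rpow_neg {a : ℝ} (ha : 1 < a) :
    Summable fun n : ℕ ↦ (n + 1 : ℝ) ^ (-a) := by
  simpa using (summable_nat_add_iff (f := fun n : ℕ ↦ (n : ℝ) ^ (-a)) 1).2
    (Real.summable_nat_rpow.2 (by linarith))

lemma tsum_nat_add_one_rpow_neg_le {a : ℝ} (ha : 1 < a) :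
    ∑' n : ℕ, (n + 1 : ℝ) ^ (-a) ≤ 1 + 1 / (a - 1) := by
  have limit := ZetaAsymptotics.zeta_limit_aux1 ha
  have termTSum_nonneg : 0 ≤ ZetaAsymptotics.termTSum a :=
    tsum_nonneg fun n ↦ ZetaAsymptotics.term_nonneg _ _
  have rpow_neg_eq : ∑' n : ℕ, (n + 1 : ℝ) ^ (-a) = ∑' n : ℕ, 1 / (n + 1 : ℝ) ^ a :=
    tsum_congr fun n ↦ by rw [Real.rpow_neg (by positivity), one_div]
  rw [rpow_neg_eq]
  nlinarith

lemma hasSum_nat_add_one_cpow_neg {s : ℂ} (hs : 1 < s.re) :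
    HasSum (fun n : ℕ ↦ ((n + 1 : ℝ) : ℂ) ^ (-s)) (riemannZeta s) := by
  have summable : Summable fun n : ℕ ↦ ((n + 1 : ℝ) : ℂ) ^ (-s) :=
    .of_norm_bounded (summable_nat_add_one_rpow_neg hs) fun n ↦
      (norm_ofReal_cpow_neg (by positivity) s).le
  convert summable.hasSum using 1
  rw [zeta_eq_tsum_one_div_nat_add_one_cpow hs]
  exact tsum_congr fun n ↦ by rw [Complex.cpow_neg, one_div]; push_cast; rfl

lemma tendsto_nat_add_one_cpow_one_sub {s : ℂ} (hs : 1 < s.re) :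
    Filter.Tendsto (fun N : ℕ ↦ ((N + 1 : ℝ) : ℂ) ^ (1 - s)) Filter.atTop (nhds 0) := by
  rw [tendsto_zero_iff_norm_tendsto_zero]
  have norm_eq (N : ℕ) : ‖((N + 1 : ℝ) : ℂ) ^ (1 - s)‖ = (N + 1 : ℝ) ^ (-(s.re - 1)) := by
    rw [Complex.norm_cpow_eq_rpow_re_of_pos (by positivity)]; simp
  simp_rw [norm_eq]
  exact (tendsto_rpow_neg_atTop (by linarith)).comp
    (Filter.tendsto_atTop_add_const_right _ _ tendsto_natCast_atTop_atTop)

lemma hasSum_zetaTerm_of_one_lt {s : ℂ} (hs : 1 < s.re) :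
    HasSum (fun n ↦ zetaTerm n s) ((s - 1) * riemannZeta s - 1) := by
  have summable : Summable fun n ↦ zetaTerm n s := by
    refine .of_norm_bounded
      ((summable_nat_add_one_rpow_neg hs).mul_left (‖s - 1‖ * 2)) fun n ↦ ?_
    refine (norm_zetaTerm_le (by linarith) n).trans ?_
    rw [mul_assoc]
    gcongr
    exact min_le_left _ _
  rw [summable.hasSum_iff_tendsto_nat]
  simp_rw [sum_range_zetaTerm]
  simpa using (((hasSum_nat_add_one_cpow_neg hs).tendsto_sum_nat.const_mul (s - 1)).sub_const
    1).add (tendsto_nat_add_one_cpow_one_sub hs)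

lemma differentiableOn_tsum_zetaTerm :
    DifferentiableOn ℂ (fun w : ℂ ↦ ∑' n, zetaTerm n w) {w | 0 < w.re} := by
  intro s (hs : 0 < s.re)
  set U : Set ℂ := {z | s.re / 2 < z.re} ∩ Metric.ball 0 (‖s‖ + 1)
  have isOpen_U : IsOpen U :=
    (isOpen_lt continuous_const Complex.continuous_re).inter Metric.isOpen_ball
  have mem_U : s ∈ U := ⟨half_lt_self hs, by simp⟩
  have summable_bound : Summable fun n : ℕ ↦ (n + 1 : ℝ) ^ (-(s.re / 2 + 1)) :=
    summable_nat_add_one_rpow_neg (by linarith)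
  suffices DifferentiableOn ℂ (fun w : ℂ ↦ ∑' n, zetaTerm n w) U from
    (this.differentiableAt (isOpen_U.mem_nhds mem_U)).differentiableWithinAt
  refine Complex.differentiableOn_tsum_of_summable_norm
    (summable_bound.mul_left ((‖s‖ + 2) * (‖s‖ + 1)))
    (fun n ↦ (differentiable_zetaTerm n).differentiableOn) isOpen_U fun n w ⟨hw_re, hw_norm⟩ ↦ ?_
  rw [Set.mem_ofPred_eq] at hw_re
  rw [mem_ball_zero_iff] at hw_norm
  have one_le : (1 : ℝ) ≤ n + 1 := by linarith [n.cast_nonneg (α := ℝ)]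
  calc ‖zetaTerm n w‖
      ≤ ‖w - 1‖ * (min 2 (‖w‖ / (n + 1)) * (n + 1 : ℝ) ^ (-w.re)) :=
        norm_zetaTerm_le (by linarith) n
    _ ≤ (‖s‖ + 2) * ((‖s‖ + 1) / (n + 1) * (n + 1 : ℝ) ^ (-(s.re / 2))) := by
        gcongr
        · exact (norm_sub_le _ _).trans (by rw [norm_one]; linarith)
        · exact (min_le_right _ _).trans (by gcongr)
    _ = (‖s‖ + 2) * (‖s‖ + 1) * (n + 1 : ℝ) ^ (-(s.re / 2 + 1)) := by
        rw [neg_add', Real.rpow_sub_one (by positivity)]; ring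

lemma sub_one_mul_riemannZeta₀_eq {s : ℂ} (hs : 0 < s.re) :
    (s - 1) * riemannZeta₀ s = ∑' n, zetaTerm n s := by
  have isOpen_halfPlane (a : ℝ) : IsOpen {w : ℂ | a < w.re} :=
    isOpen_lt continuous_const Complex.continuous_re
  suffices Set.EqOn (fun w ↦ (w - 1) * riemannZeta₀ w) (fun w ↦ ∑' n, zetaTerm n w)
    {w | 0 < w.re} from this hs
  refine AnalyticOnNhd.eqOn_of_preconnected_of_eventuallyEq (z₀ := 2)
    (DifferentiableOn.analyticOnNhd (fun w _ ↦ ?_) (isOpen_halfPlane 0))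
    (differentiableOn_tsum_zetaTerm.analyticOnNhd (isOpen_halfPlane 0))
    (convex_halfSpace_re_gt 0).isPreconnected (by norm_num) ?_
  · exact ((differentiableAt_id.sub_const 1).mul
      (differentiable_riemannZeta₀ w)).differentiableWithinAt
  · filter_upwards [(isOpen_halfPlane 1).mem_nhds (show 1 < (2 : ℂ).re by norm_num)]
      with w (hw : 1 < w.re)
    have w_ne_one : w ≠ 1 := by rintro rfl; simp at hw
    rw [(hasSum_zetaTerm_of_one_lt hw).tsum_eq, riemannZeta_eq_inv_sub_add w_ne_one, mul_add,
      mul_inv_cancel₀ (sub_ne_zero.2 w_ne_one)]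
    ring

lemma exp_two_lt : Real.exp 2 < 7.4 := by
  have exp_one_lt := Real.exp_one_lt_d9
  rw [← one_add_one_eq_two, Real.exp_add]
  nlinarith [Real.exp_pos 1]

lemma two_lt_log_of_eight_le {T : ℝ} (hT : 8 ≤ T) : 2 < Real.log T := by
  rw [Real.lt_log_iff_exp_lt (by linarith)]
  linarith [exp_two_lt]

lemma min_two_le_two_mul_rpow {y a : ℝ} (hy : 0 < y) (ha : 0 ≤ a) (ha' : a ≤ 1) :
    min 2 y ≤ 2 * y ^ a := by
  rcases le_total 1 y with h | h
  · linarith [min_le_left 2 y, Real.one_le_rpow h ha]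
  · have := Real.rpow_le_rpow_of_exponent_ge hy h ha'
    rw [Real.rpow_one] at this
    linarith [min_le_right 2 y]

lemma norm_zetaTerm_le_mul_rpow {L : ℝ} (hL : 2 ≤ L) {s : ℂ} (hs : 1 - 1 / L ≤ s.re)
    (hsL : ‖s‖ ≤ Real.exp L) (n : ℕ) :
    ‖zetaTerm n s‖ ≤ ‖s - 1‖ * (2 * Real.exp 2) * (n + 1 : ℝ) ^ (-(1 + 1 / L)) := by
  have one_div_le : 1 / L ≤ 1 / 2 := one_div_le_one_div_of_le (by norm_num) hL
  have re_pos : 0 < s.re := by linarith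
  have norm_pos : 0 < ‖s‖ := norm_pos_iff.2 fun h ↦ by simp [h] at re_pos
  have norm_rpow_le : ‖s‖ ^ (2 / L) ≤ Real.exp 2 :=
    calc ‖s‖ ^ (2 / L) ≤ Real.exp L ^ (2 / L) := by gcongr
      _ = Real.exp 2 := by rw [← Real.exp_mul, mul_div_cancel₀ _ (by positivity)]
  have one_le : (1 : ℝ) ≤ n + 1 := by linarith [n.cast_nonneg (α := ℝ)]
  refine (norm_zetaTerm_le re_pos n).trans ?_
  rw [mul_assoc]
  refine mul_le_mul_of_nonneg_left ?_ (norm_nonneg _)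
  calc min 2 (‖s‖ / (n + 1)) * (n + 1 : ℝ) ^ (-s.re)
      ≤ 2 * (‖s‖ / (n + 1)) ^ (2 / L) * (n + 1 : ℝ) ^ (-s.re) := by
        gcongr
        exact min_two_le_two_mul_rpow (by positivity) (by positivity)
          ((div_le_one (by linarith)).2 hL)
    _ = 2 * ‖s‖ ^ (2 / L) * (n + 1 : ℝ) ^ (-(s.re + 2 / L)) := by
        rw [Real.div_rpow norm_pos.le (by positivity), neg_add, Real.rpow_add (by positivity),
          Real.rpow_neg (by positivity) (2 / L)]
        ring
    _ ≤ 2 * Real.exp 2 * (n + 1 : ℝ) ^ (-(1 + 1 / L)) := by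
        have two_div : 2 / L = 1 / L + 1 / L := by ring
        gcongr 2 * ?_ * ?_
        exact Real.rpow_le_rpow_of_exponent_le one_le (by linarith)

lemma norm_riemannZeta₀_le {T : ℝ} (hT : 8 ≤ T) {s : ℂ} (hs : 1 - 1 / Real.log T ≤ s.re)
    (hsT : ‖s‖ ≤ T) : ‖riemannZeta₀ s‖ ≤ 30 * Real.log T := by
  have two_lt_log := two_lt_log_of_eight_le hT
  rw [← Real.exp_log (by linarith : 0 < T)] at hsT
  set L := Real.log T
  rcases eq_or_ne s 1 with rfl | s_ne_one
  · rw [riemannZeta₀_one, Complex.norm_real, Real.norm_of_nonneg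
      (by linarith [Real.one_half_lt_eulerMascheroniConstant])]
    linarith [Real.eulerMascheroniConstant_lt_two_thirds]
  have re_pos : 0 < s.re := by
    have : 1 / L < 1 / 2 := one_div_lt_one_div_of_lt (by norm_num) two_lt_log
    linarith
  have one_lt : 1 < 1 + 1 / L := lt_add_of_pos_right _ (by positivity)
  have tsum_le : ‖∑' n, zetaTerm n s‖ ≤ ‖s - 1‖ * (2 * Real.exp 2) * (1 + L) := by
    refine (tsum_of_norm_bounded ((summable_nat_add_one_rpow_neg one_lt).mul_left _).hasSum
      (norm_zetaTerm_le_mul_rpow two_lt_log.le hs hsT)).trans ?_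
    rw [tsum_mul_left]
    gcongr
    simpa using tsum_nat_add_one_rpow_neg_le one_lt
  rw [← sub_one_mul_riemannZeta₀_eq re_pos, norm_mul, mul_assoc] at tsum_le
  have := le_of_mul_le_mul_left tsum_le (norm_pos_iff.2 (sub_ne_zero.2 s_ne_one))
  nlinarith [exp_two_lt]

lemma norm_le_of_re_im {z : ℂ} {a b : ℝ} (h1 : |z.re| ≤ a) (h2 : |z.im| ≤ b) : ‖z‖ ≤ a + b :=
  (Complex.norm_le_abs_re_add_abs_im z).trans (add_le_add h1 h2)

lemma norm_deriv_riemannZeta₀_le {T : ℝ} (hT : 8 ≤ T) {s : ℂ}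
    (hs : 1 - 1 / (2 * Real.log T) ≤ s.re) (hsT : ‖s‖ ≤ T - 1) :
    ‖deriv riemannZeta₀ s‖ ≤ 60 * Real.log T ^ 2 := by
  have two_lt_log := two_lt_log_of_eight_le hT
  set L := Real.log T with hL
  have radius_le : 1 / (2 * L) ≤ 1 := by rw [div_le_one (by positivity)]; linarith
  have cauchy : ‖deriv riemannZeta₀ s‖ ≤ 30 * L / (1 / (2 * L)) := by
    refine Complex.norm_deriv_le_of_forall_mem_sphere_norm_le (by positivity)
      differentiable_riemannZeta₀.diffContOnCl fun z hz ↦ ?_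
    rw [mem_sphere_iff_norm] at hz
    refine norm_riemannZeta₀_le hT ?_ ?_
    · have re_sub_le := (Complex.abs_re_le_norm (z - s)).trans hz.le
      rw [Complex.sub_re, abs_le] at re_sub_le
      have two_radii : 1 / L = 1 / (2 * L) + 1 / (2 * L) := by field_simp; norm_num
      rw [← hL]
      linarith
    · calc ‖z‖ = ‖(z - s) + s‖ := by rw [sub_add_cancel]
        _ ≤ ‖z - s‖ + ‖s‖ := norm_add_le _ _
        _ ≤ T := by linarith
  refine cauchy.trans_eq ?_
  field_simp
  norm_num

lemma norm_inv_sub_one_le {s : ℂ} {c : ℝ} (hc : 0 < c) (hs : c⁻¹ ≤ |s.im|) : ‖(s - 1)⁻¹‖ ≤ c := by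
  rw [norm_inv]
  exact inv_le_of_inv_le₀ hc (hs.trans (by simpa using Complex.abs_im_le_norm (s - 1)))

lemma ne_one_of_inv_le_abs_im {s : ℂ} {c : ℝ} (hc : 0 < c) (hs : c⁻¹ ≤ |s.im|) : s ≠ 1 := by
  rintro rfl
  rw [Complex.one_im, abs_zero] at hs
  linarith [inv_pos.2 hc]

lemma norm_riemannZeta_le {T : ℝ} (hT : 8 ≤ T) {s : ℂ} (hs : 1 - 1 / Real.log T ≤ s.re)
    (hsT : ‖s‖ ≤ T) {c : ℝ} (hc : 0 < c) (hsc : c⁻¹ ≤ |s.im|) :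
    ‖riemannZeta s‖ ≤ c + 30 * Real.log T := by
  rw [riemannZeta_eq_inv_sub_add (ne_one_of_inv_le_abs_im hc hsc)]
  exact (norm_add_le _ _).trans
    (add_le_add (norm_inv_sub_one_le hc hsc) (norm_riemannZeta₀_le hT hs hsT))

lemma norm_deriv_riemannZeta_le {T : ℝ} (hT : 8 ≤ T) {s : ℂ}
    (hs : 1 - 1 / (2 * Real.log T) ≤ s.re) (hsT : ‖s‖ ≤ T - 1) {c : ℝ} (hc : 0 < c)
    (hsc : c⁻¹ ≤ |s.im|) :
    ‖deriv riemannZeta s‖ ≤ c ^ 2 + 60 * Real.log T ^ 2 := by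
  rw [deriv_riemannZeta_eq_neg_inv_sub_sq_add (ne_one_of_inv_le_abs_im hc hsc)]
  refine (norm_add_le _ _).trans (add_le_add ?_ (norm_deriv_riemannZeta₀_le hT hs hsT))
  rw [norm_neg, norm_pow]
  gcongr
  exact norm_inv_sub_one_le hc hsc

lemma norm_riemannZeta_one_add_le {x : ℝ} (hx : 0 < x) (hx1 : x ≤ 1) :
    ‖riemannZeta (1 + x)‖ ≤ 2 / x := by
  have re_eq : (1 + (x : ℂ)).re = 1 + x := by simp
  have one_lt : 1 < 1 + x := by linarith
  rw [← (hasSum_nat_add_one_cpow_neg (re_eq.symm ▸ one_lt)).tsum_eq]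
  calc _ ≤ ∑' n : ℕ, (n + 1 : ℝ) ^ (-(1 + x)) :=
        tsum_of_norm_bounded (summable_nat_add_one_rpow_neg one_lt).hasSum fun n ↦ by
          rw [norm_ofReal_cpow_neg (by positivity), re_eq]
    _ ≤ 1 + 1 / x := by simpa using tsum_nat_add_one_rpow_neg_le one_lt
    _ ≤ 1 / x + 1 / x := by gcongr; exact (one_le_div hx).2 hx1
    _ = 2 / x := by ring

lemma one_le_norm_zeta_three_four_one {x : ℝ} (hx : 0 < x) (y : ℝ) :
    1 ≤ ‖riemannZeta (1 + x)‖ ^ 3 * ‖riemannZeta (1 + x + Complex.I * y)‖ ^ 4 *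
      ‖riemannZeta (1 + x + 2 * Complex.I * y)‖ := by
  have h := DirichletCharacter.norm_LFunction_product_ge_one (N := 1) 1 hx y
  rw [DirichletCharacter.LFunctionTrivChar] at h
  simpa [DirichletCharacter.LFunction_modOne_eq] using h

lemma le_norm_riemannZeta_pow_four {T x y : ℝ} (hx : 0 < x) (hx1 : x ≤ 1)
    (hy : 1 / 250 ≤ |y|) (hT : 2 * |y| + 8 ≤ T) :
    x ^ 3 / (800 * Real.log T) ≤ ‖riemannZeta (1 + x + Complex.I * y)‖ ^ 4 := by
  have hT8 : 8 ≤ T := by linarith [abs_nonneg y]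
  have two_lt_log := two_lt_log_of_eight_le hT8
  have re_eq : (1 + x + 2 * Complex.I * y : ℂ).re = 1 + x := by simp
  have im_eq : |(1 + x + 2 * Complex.I * y : ℂ).im| = 2 * |y| := by simp [abs_mul]
  have norm_le : ‖riemannZeta (1 + x + 2 * Complex.I * y)‖ ≤ 125 + 30 * Real.log T := by
    refine norm_riemannZeta_le hT8 ?_ ?_ (by norm_num) ?_
    · have : 0 < 1 / Real.log T := by positivity
      rw [re_eq]
      linarith
    · refine (norm_le_of_re_im (a := 2) ?_ im_eq.le).trans (by linarith)
      rw [re_eq, abs_of_pos (by linarith)]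
      linarith
    · rw [im_eq]
      linarith
  rw [div_le_iff₀ (by positivity), ← one_le_div (by positivity)]
  calc 1 ≤ _ := one_le_norm_zeta_three_four_one hx y
    _ ≤ (2 / x) ^ 3 * ‖riemannZeta (1 + x + Complex.I * y)‖ ^ 4 * (100 * Real.log T) := by
        gcongr
        · exact norm_riemannZeta_one_add_le hx hx1
        · linarith
    _ = ‖riemannZeta (1 + x + Complex.I * y)‖ ^ 4 * (800 * Real.log T) / x ^ 3 := by
        field_simp; ring

/-- The width of the strip to the left of `re s = 1` in which `ζ` is shown to have no zero of
height at most `T`, as a function of `L = log T`. -/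
noncomputable def stripWidth (L : ℝ) : ℝ := 1 / (10 ^ 24 * L ^ 9)

lemma stripWidth_pos {L : ℝ} (hL : 0 < L) : 0 < stripWidth L := by
  unfold stripWidth; positivity

lemma stripWidth_le {L : ℝ} (hL : 1 ≤ L) : stripWidth L ≤ 1 / 1000 := by
  unfold stripWidth
  have : (1:ℝ) ≤ L ^ 9 := one_le_pow₀ hL
  gcongr
  linarith

lemma stripWidth_le_one_div_two_mul {L : ℝ} (hL : 1 ≤ L) : stripWidth L ≤ 1 / (2 * L) := by
  refine one_div_le_one_div_of_le (by positivity) ?_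
  have : L ≤ L ^ 9 := le_self_pow₀ hL (by norm_num)
  linarith

lemma le_norm_riemannZeta_right {T x y : ℝ} (hT : 2 * |y| + 8 ≤ T) (hy : 1 / 250 ≤ |y|)
    (hx : stripWidth (Real.log T) ≤ x) (hx1 : x ≤ 1) :
    1 / (6 * 10 ^ 18 * Real.log T ^ 7) ≤ ‖riemannZeta (1 + x + Complex.I * y)‖ := by
  have two_lt_log := two_lt_log_of_eight_le (by linarith [abs_nonneg y] : 8 ≤ T)
  set L := Real.log T
  have width_pos := stripWidth_pos (by linarith : 0 < L)
  refine le_of_pow_le_pow_left₀ (n := 4) (by norm_num) (norm_nonneg _) ?_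
  calc (1 / (6 * 10 ^ 18 * L ^ 7)) ^ 4 = 1 / (1296 * 10 ^ 72 * L ^ 28) := by
        rw [div_pow, one_pow]; congr 1; ring
    _ ≤ 1 / (800 * 10 ^ 72 * L ^ 28) := by gcongr; norm_num
    _ = stripWidth L ^ 3 / (800 * L) := by
        rw [stripWidth, div_pow, one_pow, div_div]; congr 1; ring
    _ ≤ x ^ 3 / (800 * L) := by gcongr
    _ ≤ _ := le_norm_riemannZeta_pow_four (width_pos.trans_le hx) hx1 hy hT

lemma norm_riemannZeta_sub_le {T : ℝ} {s w : ℂ} (hT : |s.im| + 8 ≤ T)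
    (him : 1 / 250 ≤ |s.im|) (hw : w.im = s.im)
    (hs1 : 1 - 1 / (2 * Real.log T) ≤ s.re) (hs2 : s.re ≤ 2)
    (hw1 : 1 - 1 / (2 * Real.log T) ≤ w.re) (hw2 : w.re ≤ 2) :
    ‖riemannZeta w - riemannZeta s‖ ≤ 16000 * Real.log T ^ 2 * |w.re - s.re| := by
  have two_lt_log := two_lt_log_of_eight_le (by linarith [abs_nonneg s.im] : 8 ≤ T)
  have one_div_le : 1 / (2 * Real.log T) ≤ 1 := (div_le_one (by positivity)).2 (by linarith)
  set C : Set ℂ := {z | 1 - 1 / (2 * Real.log T) ≤ z.re} ∩ {z | z.re ≤ 2} ∩ {z | z.im = s.im}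
  have convex_C : Convex ℝ C :=
    ((convex_halfSpace_re_ge _).inter (convex_halfSpace_re_le _)).inter
      (convex_hyperplane Complex.imLm.isLinear _)
  have away {z : ℂ} (hz : z ∈ C) : (250 : ℝ)⁻¹ ≤ |z.im| := by
    rw [show z.im = s.im from hz.2]
    linarith
  have norm_deriv_le {z : ℂ} (hz : z ∈ C) : ‖deriv riemannZeta z‖ ≤ 16000 * Real.log T ^ 2 := by
    obtain ⟨⟨hz1 : _ ≤ z.re, hz2 : z.re ≤ 2⟩, hz3 : z.im = s.im⟩ := id hz
    have norm_le : ‖z‖ ≤ 2 + |s.im| :=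
      norm_le_of_re_im (abs_le.2 ⟨by linarith, hz2⟩) (by rw [hz3])
    refine (norm_deriv_riemannZeta_le (by linarith [abs_nonneg s.im]) hz1 (by linarith)
      (by norm_num) (away hz)).trans ?_
    nlinarith
  have norm_sub_eq : ‖w - s‖ = |w.re - s.re| := by
    rw [← Complex.abs_re_eq_norm.2 (by simp [hw]), Complex.sub_re]
  rw [← norm_sub_eq]
  exact convex_C.norm_image_sub_le_of_norm_deriv_le
    (fun z hz ↦ differentiableAt_riemannZeta (ne_one_of_inv_le_abs_im (by norm_num) (away hz)))
    (fun z hz ↦ norm_deriv_le hz) ⟨⟨hs1, hs2⟩, rfl⟩ ⟨⟨hw1, hw2⟩, hw⟩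

lemma le_norm_riemannZeta {T : ℝ} {s : ℂ} (hT : 2 * |s.im| + 8 ≤ T)
    (hs : 1 - stripWidth (Real.log T) ≤ s.re) (hs2 : s.re ≤ 2) (him : 1 / 250 ≤ |s.im|) :
    1 / (10 ^ 20 * Real.log T ^ 7) ≤ ‖riemannZeta s‖ := by
  have two_lt_log := two_lt_log_of_eight_le (by linarith [abs_nonneg s.im] : 8 ≤ T)
  have width_le := stripWidth_le (by linarith : 1 ≤ Real.log T)
  have width_le' := stripWidth_le_one_div_two_mul (by linarith : 1 ≤ Real.log T)
  set L := Real.log T with hL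
  have width_pos := stripWidth_pos (by linarith : 0 < L)
  rcases le_total (1 + stripWidth L) s.re with right | left
  · have h := le_norm_riemannZeta_right (x := s.re - 1) hT him (by linarith) (by linarith)
    rw [show 1 + ((s.re - 1 : ℝ) : ℂ) + Complex.I * s.im = s by apply Complex.ext <;> simp] at h
    refine le_trans ?_ h
    gcongr
    norm_num
  set w : ℂ := 1 + stripWidth L + Complex.I * s.im with hw
  have re_w : w.re = 1 + stripWidth L := by simp [hw]
  have im_w : w.im = s.im := by simp [hw]
  have inv_pow_pos : 0 < 1 / L ^ 7 := by positivity
  have le_norm_w : 1 / (6 * 10 ^ 18) * (1 / L ^ 7) ≤ ‖riemannZeta w‖ :=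
    le_of_eq_of_le (by rw [hL]; field_simp) (le_norm_riemannZeta_right hT him le_rfl (by linarith))
  have norm_sub_le : ‖riemannZeta w - riemannZeta s‖ ≤ 32000 / 10 ^ 24 * (1 / L ^ 7) :=
    calc _ ≤ 16000 * L ^ 2 * |w.re - s.re| :=
          norm_riemannZeta_sub_le (by linarith [abs_nonneg s.im]) him im_w
            (by linarith) hs2 (by linarith) (by linarith)
      _ ≤ 16000 * L ^ 2 * (2 * stripWidth L) := by
          gcongr
          rw [re_w, abs_le]
          constructor <;> linarith
      _ = 32000 / 10 ^ 24 * (1 / L ^ 7) := by rw [stripWidth]; field_simp; norm_num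
  rw [show 1 / (10 ^ 20 * L ^ 7) = 1 / 10 ^ 20 * (1 / L ^ 7) by field_simp]
  linarith [norm_sub_norm_le (riemannZeta w) (riemannZeta s)]

/-! ### The Dirichlet series of `Λ - 1` and its derivatives -/

/-- The function `-ζ'/ζ - ζ`, whose Dirichlet series has coefficients `Λ n - 1`. It is written
through the entire functions `riemannZeta₀` and `riemannZeta₁`, so that the singularity at `s = 1`
is removed. -/
noncomputable def psiDefect (s : ℂ) : ℂ :=
  -(deriv riemannZeta₁ s / riemannZeta₁ s) - riemannZeta₀ s

lemma riemannZeta₁_ne_zero {s : ℂ} (h1 : s ≠ 1) (h0 : riemannZeta s ≠ 0) :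
    riemannZeta₁ s ≠ 0 := fun hz ↦
  h0 (by rw [riemannZeta_eq_inv_sub_mul h1, hz, mul_zero])

lemma psiDefect_eq {s : ℂ} (h1 : s ≠ 1) (h0 : riemannZeta s ≠ 0) :
    psiDefect s = -deriv riemannZeta s / riemannZeta s - riemannZeta s := by
  have h : s - 1 ≠ 0 := sub_ne_zero.2 h1
  have hZ := riemannZeta₁_ne_zero h1 h0
  rw [psiDefect, deriv_riemannZeta_eq_neg_inv_sub_sq_mul_add h1]
  nth_rw 2 [riemannZeta_eq_inv_sub_add h1]
  rw [riemannZeta_eq_inv_sub_mul h1]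
  field_simp
  ring

lemma differentiableAt_psiDefect {s : ℂ} (h : riemannZeta₁ s ≠ 0) :
    DifferentiableAt ℂ psiDefect s :=
  (((differentiable_riemannZeta₁.deriv s).div (differentiable_riemannZeta₁ s) h).neg).sub
    (differentiable_riemannZeta₀ s)

lemma log_eight_lt : Real.log 8 < 2.1 := by
  rw [show (8 : ℝ) = 2 ^ 3 by norm_num, Real.log_pow]
  push_cast
  linarith [Real.log_two_lt_d9]

lemma norm_riemannZeta₀_and_deriv_le_near_one {s : ℂ} (hs : ‖s - 1‖ ≤ 1 / 125) :
    ‖riemannZeta₀ s‖ ≤ 63 ∧ ‖deriv riemannZeta₀ s‖ ≤ 265 := by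
  have log_eight := log_eight_lt
  have two_lt_log := two_lt_log_of_eight_le le_rfl
  have le_re : 1 - 1 / 125 ≤ s.re := by
    have h := (Complex.abs_re_le_norm (s - 1)).trans hs
    rw [Complex.sub_re, Complex.one_re, abs_le] at h
    linarith
  have norm_le : ‖s‖ ≤ 2 := by
    have h := norm_sub_norm_le s 1
    rw [norm_one] at h
    linarith
  have le_half_inv : 1 / 5 ≤ 1 / (2 * Real.log 8) :=
    one_div_le_one_div_of_le (by linarith) (by linarith)
  have half_inv_le : 1 / (2 * Real.log 8) ≤ 1 / Real.log 8 :=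
    one_div_le_one_div_of_le (by linarith) (by linarith)
  have h := norm_riemannZeta₀_le le_rfl (s := s) (by linarith) (by linarith)
  have h' := norm_deriv_riemannZeta₀_le le_rfl (s := s) (by linarith) (by linarith)
  exact ⟨by linarith, by nlinarith⟩

lemma deriv_riemannZeta₁_eq (s : ℂ) :
    deriv riemannZeta₁ s = riemannZeta₀ s + (s - 1) * deriv riemannZeta₀ s := by
  have h : HasDerivAt (fun z : ℂ ↦ 1 + (z - 1) * riemannZeta₀ z)
      (1 * riemannZeta₀ s + (s - 1) * deriv riemannZeta₀ s) s :=
    (((hasDerivAt_id s).sub_const 1).mul (differentiable_riemannZeta₀ s).hasDerivAt).const_add 1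
  rw [one_mul] at h
  exact h.deriv

lemma norm_psiDefect_le_near_one {s : ℂ} (hs : ‖s - 1‖ ≤ 1 / 125) :
    riemannZeta₁ s ≠ 0 ∧ ‖psiDefect s‖ ≤ 200 := by
  obtain ⟨norm_zeta₀, norm_deriv_zeta₀⟩ := norm_riemannZeta₀_and_deriv_le_near_one hs
  have le_norm : 49 / 100 ≤ ‖riemannZeta₁ s‖ := by
    have h := norm_sub_norm_le (1 : ℂ) (-((s - 1) * riemannZeta₀ s))
    rw [sub_neg_eq_add, norm_neg, norm_one] at h
    have : ‖(s - 1) * riemannZeta₀ s‖ ≤ 1 / 125 * 63 := by rw [norm_mul]; gcongr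
    rw [riemannZeta₁]
    linarith
  have norm_deriv_le : ‖deriv riemannZeta₁ s‖ ≤ 66 := by
    rw [deriv_riemannZeta₁_eq]
    refine (norm_add_le _ _).trans ?_
    have : ‖(s - 1) * deriv riemannZeta₀ s‖ ≤ 1 / 125 * 265 := by rw [norm_mul]; gcongr
    linarith
  have norm_pos : 0 < ‖riemannZeta₁ s‖ := by linarith
  refine ⟨norm_pos_iff.1 norm_pos, ?_⟩
  calc ‖psiDefect s‖ ≤ ‖deriv riemannZeta₁ s‖ / ‖riemannZeta₁ s‖ + ‖riemannZeta₀ s‖ := by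
        rw [psiDefect, ← norm_div, ← norm_neg (_ / _)]
        exact norm_sub_le _ _
    _ ≤ 137 + 63 := by
        gcongr
        rw [div_le_iff₀ norm_pos]
        linarith
    _ = 200 := by norm_num

/-- A bound for `-ζ'/ζ - ζ` in the strip of width `stripWidth L`, as a function of `L = log T`. -/
noncomputable def stripBound (L : ℝ) : ℝ := 10 ^ 25 * L ^ 9

lemma stripBound_pos {L : ℝ} (hL : 0 < L) : 0 < stripBound L := by
  unfold stripBound; positivity

lemma stripBound_le_stripBound {L L' : ℝ} (hL : 0 ≤ L) (h : L ≤ L') :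
    stripBound L ≤ stripBound L' := by
  unfold stripBound; gcongr

lemma one_div_stripWidth_le {L : ℝ} (hL : 0 ≤ L) : 1 / stripWidth L ≤ stripBound L := by
  rw [stripWidth, stripBound, one_div_one_div]
  gcongr <;> norm_num

lemma norm_psiDefect_le_away {T : ℝ} {s : ℂ} (hT : 2 * |s.im| + 8 ≤ T)
    (hs : 1 - stripWidth (Real.log T) ≤ s.re) (hs2 : s.re ≤ 2) (him : 1 / 250 ≤ |s.im|) :
    riemannZeta₁ s ≠ 0 ∧ ‖psiDefect s‖ ≤ stripBound (Real.log T) := by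
  have hT8 : 8 ≤ T := by linarith [abs_nonneg s.im]
  have two_lt_log := two_lt_log_of_eight_le hT8
  have width_le := stripWidth_le_one_div_two_mul (by linarith : 1 ≤ Real.log T)
  have le_norm := le_norm_riemannZeta hT hs hs2 him
  have half_inv_le : 1 / (2 * Real.log T) ≤ 1 / Real.log T :=
    one_div_le_one_div_of_le (by linarith) (by linarith)
  have inv_le : (250 : ℝ)⁻¹ ≤ |s.im| := by linarith
  have norm_le : ‖s‖ ≤ T - 1 := by
    have : 1 / (2 * Real.log T) ≤ 1 := (div_le_one (by positivity)).2 (by linarith)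
    refine (norm_le_of_re_im (a := 2) (abs_le.2 ⟨by linarith, hs2⟩) le_rfl).trans ?_
    linarith [abs_nonneg s.im]
  have norm_deriv_le :=
    norm_deriv_riemannZeta_le hT8 (by linarith) norm_le (by norm_num) inv_le
  have norm_zeta_le :=
    norm_riemannZeta_le hT8 (by linarith) (by linarith) (by norm_num) inv_le
  set L := Real.log T
  have s_ne_one : s ≠ 1 := ne_one_of_inv_le_abs_im (by norm_num) inv_le
  have zeta_ne_zero : riemannZeta s ≠ 0 := norm_pos_iff.1 (lt_of_lt_of_le (by positivity) le_norm)
  refine ⟨riemannZeta₁_ne_zero s_ne_one zeta_ne_zero, ?_⟩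
  have quotient_le : ‖-deriv riemannZeta s / riemannZeta s‖ ≤ 16000 * 10 ^ 20 * L ^ 9 := by
    rw [norm_div, norm_neg]
    calc ‖deriv riemannZeta s‖ / ‖riemannZeta s‖
        ≤ 16000 * L ^ 2 / (1 / (10 ^ 20 * L ^ 7)) := by gcongr; nlinarith
      _ = _ := by rw [div_div_eq_mul_div, div_one]; ring
  have le_pow : L ≤ L ^ 9 := le_self_pow₀ (by linarith) (by norm_num)
  rw [psiDefect_eq s_ne_one zeta_ne_zero, stripBound]
  refine (norm_sub_le _ _).trans ?_
  linarith

lemma norm_psiDefect_le {T : ℝ} {s : ℂ} (hT : 2 * |s.im| + 8 ≤ T)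
    (hs : 1 - stripWidth (Real.log T) ≤ s.re) (hs2 : s.re ≤ 1 + 1 / 250) :
    riemannZeta₁ s ≠ 0 ∧ ‖psiDefect s‖ ≤ stripBound (Real.log T) := by
  rcases le_total (1 / 250) |s.im| with away | near
  · exact norm_psiDefect_le_away hT hs (by linarith) away
  · have two_lt_log := two_lt_log_of_eight_le (by linarith [abs_nonneg s.im] : 8 ≤ T)
    have width_le := stripWidth_le (by linarith : 1 ≤ Real.log T)
    have norm_sub_le : ‖s - 1‖ ≤ 1 / 125 := by
      refine (norm_le_of_re_im (a := 1 / 250) (b := 1 / 250) ?_ ?_).trans (by norm_num)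
      · rw [Complex.sub_re, Complex.one_re, abs_le]; constructor <;> linarith
      · simpa using near
    refine (norm_psiDefect_le_near_one norm_sub_le).imp_right fun h ↦ h.trans ?_
    have : (1 : ℝ) ≤ Real.log T ^ 9 := one_le_pow₀ (by linarith)
    rw [stripBound]
    linarith

lemma norm_iteratedDeriv_psiDefect_le (j : ℕ) {x t : ℝ} (hx : 0 ≤ x) (hx1 : x ≤ 1 / 1000) :
    ‖iteratedDeriv j psiDefect (1 + x + t * Complex.I)‖ ≤
      j.factorial * stripBound (Real.log (2 * |t| + 10)) ^ (j + 1) := by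
  have two_lt_log := two_lt_log_of_eight_le (by linarith [abs_nonneg t] : 8 ≤ 2 * |t| + 10)
  have width_le := stripWidth_le (by linarith : 1 ≤ Real.log (2 * |t| + 10))
  set L := Real.log (2 * |t| + 10)
  set c : ℂ := 1 + x + t * Complex.I with hc
  have width_pos := stripWidth_pos (by linarith : 0 < L)
  have bound_pos := stripBound_pos (by linarith : 0 < L)
  have on_ball {z : ℂ} (hz : z ∈ Metric.closedBall c (stripWidth L)) :
      riemannZeta₁ z ≠ 0 ∧ ‖psiDefect z‖ ≤ stripBound L := by
    rw [mem_closedBall_iff_norm] at hz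
    have re_near := (Complex.abs_re_le_norm (z - c)).trans hz
    have im_near := (Complex.abs_im_le_norm (z - c)).trans hz
    rw [Complex.sub_re, show c.re = 1 + x by simp [hc], abs_le] at re_near
    rw [Complex.sub_im, show c.im = t by simp [hc]] at im_near
    have abs_im_le := abs_sub_abs_le_abs_sub z.im t
    exact norm_psiDefect_le (by linarith) (by linarith) (by linarith)
  have diffContOnCl : DiffContOnCl ℂ psiDefect (Metric.ball c (stripWidth L)) := by
    apply DifferentiableOn.diffContOnCl
    rw [closure_ball _ width_pos.ne']
    exact fun z hz ↦ (differentiableAt_psiDefect (on_ball hz).1).differentiableWithinAt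
  calc ‖iteratedDeriv j psiDefect c‖
      ≤ j.factorial * stripBound L / stripWidth L ^ j :=
        Complex.norm_iteratedDeriv_le_of_forall_mem_sphere_norm_le j width_pos diffContOnCl
          fun z hz ↦ (on_ball (Metric.sphere_subset_closedBall hz)).2
    _ = j.factorial * (stripBound L * (1 / stripWidth L) ^ j) := by rw [div_pow, one_pow]; ring
    _ ≤ j.factorial * (stripBound L * stripBound L ^ j) := by
        gcongr
        exact one_div_stripWidth_le (by linarith)
    _ = j.factorial * stripBound L ^ (j + 1) := by ring

/-- The coefficients of `(-1) ^ j` times the `j`-th derivative of the Dirichlet series of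
`Λ - 1`. -/
noncomputable def defectCoeff (j n : ℕ) : ℝ :=
  (ArithmeticFunction.vonMangoldt n - 1) * Real.log n ^ j

lemma iterate_logMul (f : ℕ → ℂ) (m n : ℕ) :
    (LSeries.logMul^[m] f) n = Complex.log n ^ m * f n := by
  induction m with
  | zero => simp
  | succ m ih => rw [Function.iterate_succ_apply', LSeries.logMul, ih]; ring

lemma LSeriesSummable_vonMangoldt_sub_one {s : ℂ} (hs : 1 < s.re) :
    LSeriesSummable (fun n ↦ ((ArithmeticFunction.vonMangoldt n : ℝ) : ℂ) - 1) s :=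
  (ArithmeticFunction.LSeriesSummable_vonMangoldt hs).sub (LSeriesSummable_one_iff.2 hs)

lemma abscissaOfAbsConv_vonMangoldt_sub_one_lt {s : ℂ} (hs : 1 < s.re) :
    LSeries.abscissaOfAbsConv (fun n ↦ ((ArithmeticFunction.vonMangoldt n : ℝ) : ℂ) - 1)
      < s.re := by
  refine lt_of_le_of_lt (b := (1 : EReal)) ?_ (by exact_mod_cast hs)
  exact LSeries.abscissaOfAbsConv_le_of_forall_lt_LSeriesSummable fun y hy ↦
    LSeriesSummable_vonMangoldt_sub_one (by simpa using hy)

lemma term_iterate_logMul_vonMangoldt_sub_one (j : ℕ) {s : ℂ} (hs : s ≠ 0) (n : ℕ) :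
    LSeries.term (LSeries.logMul^[j] fun n ↦ ((ArithmeticFunction.vonMangoldt n : ℝ) : ℂ) - 1) s n
      = (defectCoeff j n : ℂ) * (n : ℂ) ^ (-s) := by
  rcases eq_or_ne n 0 with rfl | hn
  · simp [Complex.zero_cpow (neg_ne_zero.2 hs)]
  · rw [LSeries.term_of_ne_zero hn, iterate_logMul, defectCoeff, Complex.cpow_neg]
    push_cast
    rw [← Complex.natCast_log]
    ring

lemma psiDefect_eq_LSeries {s : ℂ} (hs : 1 < s.re) :
    psiDefect s = LSeries (fun n ↦ ((ArithmeticFunction.vonMangoldt n : ℝ) : ℂ) - 1) s := by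
  have s_ne_one : s ≠ 1 := by rintro rfl; simp at hs
  rw [psiDefect_eq s_ne_one (riemannZeta_ne_zero_of_one_le_re hs.le),
    ← ArithmeticFunction.LSeries_vonMangoldt_eq_deriv_riemannZeta_div hs,
    ← LSeries_one_eq_riemannZeta hs, ← LSeries_sub
      (ArithmeticFunction.LSeriesSummable_vonMangoldt hs) (LSeriesSummable_one_iff.2 hs)]
  rfl

lemma hasSum_defectCoeff (j : ℕ) {s : ℂ} (hs : 1 < s.re) :
    HasSum (fun n : ℕ ↦ (defectCoeff j n : ℂ) * (n : ℂ) ^ (-s))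
      ((-1) ^ j * iteratedDeriv j psiDefect s) := by
  have eventually_eq : psiDefect =ᶠ[nhds s]
      LSeries (fun n ↦ ((ArithmeticFunction.vonMangoldt n : ℝ) : ℂ) - 1) :=
    Filter.eventuallyEq_of_mem
      ((isOpen_lt continuous_const Complex.continuous_re).mem_nhds hs) fun _ ↦ psiDefect_eq_LSeries
  have summable : LSeriesSummable
      (LSeries.logMul^[j] fun n ↦ ((ArithmeticFunction.vonMangoldt n : ℝ) : ℂ) - 1) s := by
    apply LSeriesSummable_of_abscissaOfAbsConv_lt_re
    rw [LSeries.absicssaOfAbsConv_logPowMul]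
    exact abscissaOfAbsConv_vonMangoldt_sub_one_lt hs
  have s_ne_zero : s ≠ 0 := by rintro rfl; rw [Complex.zero_re] at hs; linarith
  rw [eventually_eq.iteratedDeriv_eq j,
    LSeries_iteratedDeriv j (abscissaOfAbsConv_vonMangoldt_sub_one_lt hs), ← mul_assoc, ← mul_pow]
  simpa [LSeriesHasSum, funext (term_iterate_logMul_vonMangoldt_sub_one j s_ne_zero)]
    using summable.LSeriesHasSum

/-! ### Smoothed sums of Dirichlet coefficients -/

section SmoothedSum

open MeasureTheory
open scoped FourierTransform

lemma integrable_exp_mul_fourier {w : ℝ → ℂ} (hw : Integrable (𝓕 w)) (y : ℝ) :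
    Integrable fun v : ℝ ↦ Complex.exp ((2 * Real.pi * v * y : ℝ) * Complex.I) * 𝓕 w v :=
  hw.bdd_mul (c := 1)
    (by fun_prop : Continuous fun v : ℝ ↦
      Complex.exp ((2 * Real.pi * v * y : ℝ) * Complex.I)).aestronglyMeasurable
    (.of_forall fun _ ↦ (Complex.norm_exp_ofReal_mul_I _).le)

lemma integral_exp_mul_fourier {w : ℝ → ℂ} (hw : Continuous w) (hwi : Integrable w)
    (hwf : Integrable (𝓕 w)) (y : ℝ) :
    ∫ v : ℝ, Complex.exp ((2 * Real.pi * v * y : ℝ) * Complex.I) * 𝓕 w v = w y := by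
  rw [← congr_fun (hw.fourierInv_fourier_eq hwi hwf) y, Real.fourierInv_eq']
  simp only [smul_eq_mul, RCLike.inner_apply, conj_trivial]
  congr 1 with v
  congr 3
  push_cast
  ring

lemma natCast_cpow_neg_add_mul_I {σ : ℝ} (hσ : σ ≠ 0) (t : ℝ) (n : ℕ) :
    (n : ℂ) ^ (-(σ + t * Complex.I)) =
      (n : ℂ) ^ (-σ : ℂ) * Complex.exp ((-t * Real.log n : ℝ) * Complex.I) := by
  rcases eq_or_ne n 0 with rfl | hn
  · have ne_zero : -(σ + t * Complex.I) ≠ 0 := fun h ↦ hσ (by simpa using congr_arg Complex.re h)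
    rw [Nat.cast_zero, Complex.zero_cpow ne_zero,
      Complex.zero_cpow (by exact_mod_cast neg_ne_zero.2 hσ), zero_mul]
  · have cast_ne_zero : (n : ℂ) ≠ 0 := by exact_mod_cast hn
    rw [neg_add, Complex.cpow_add _ _ cast_ne_zero,
      Complex.cpow_def_of_ne_zero cast_ne_zero (-(t * Complex.I)), ← Complex.natCast_log]
    congr 2
    push_cast
    ring

theorem hasSum_dirichlet_mul_weight {a : ℕ → ℂ} {D : ℂ → ℂ} {σ : ℝ} (hσ : σ ≠ 0)
    (hD : ∀ t : ℝ, HasSum (fun n : ℕ ↦ a n * (n : ℂ) ^ (-(σ + t * Complex.I)))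
      (D (σ + t * Complex.I)))
    {w : ℝ → ℂ} (hw : Continuous w) (hwi : Integrable w) (hwf : Integrable (𝓕 w)) (u₀ δ : ℝ) :
    HasSum (fun n : ℕ ↦ a n * (n : ℂ) ^ (-σ : ℂ) * w ((Real.log n - u₀) / δ))
      (∫ v : ℝ, D (σ + (-(2 * Real.pi * v / δ) : ℝ) * Complex.I) *
        (Complex.exp ((2 * Real.pi * v * (-u₀ / δ) : ℝ) * Complex.I) * 𝓕 w v)) := by
  set F : ℕ → ℝ → ℂ := fun n v ↦ a n * (n : ℂ) ^ (-σ : ℂ) *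
    (Complex.exp ((2 * Real.pi * v * ((Real.log n - u₀) / δ) : ℝ) * Complex.I) * 𝓕 w v)
  have norm_F (n : ℕ) (v : ℝ) : ‖F n v‖ = ‖a n * (n : ℂ) ^ (-σ : ℂ)‖ * ‖𝓕 w v‖ := by
    simp only [F, norm_mul, Complex.norm_exp_ofReal_mul_I, one_mul]
  have summable_norm : Summable fun n : ℕ ↦ ‖a n * (n : ℂ) ^ (-σ : ℂ)‖ := by
    simpa using (hD 0).summable.norm
  have integral_F (n : ℕ) :
      ∫ v : ℝ, F n v = a n * (n : ℂ) ^ (-σ : ℂ) * w ((Real.log n - u₀) / δ) := by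
    rw [integral_const_mul, integral_exp_mul_fourier hw hwi hwf]
  have tsum_F (v : ℝ) : ∑' n, F n v = D (σ + (-(2 * Real.pi * v / δ) : ℝ) * Complex.I) *
      (Complex.exp ((2 * Real.pi * v * (-u₀ / δ) : ℝ) * Complex.I) * 𝓕 w v) := by
    refine (((hD _).mul_right _).congr_fun fun n ↦ ?_).tsum_eq
    rw [natCast_cpow_neg_add_mul_I hσ, ← mul_assoc (a n), mul_assoc _ (Complex.exp _),
      ← mul_assoc (Complex.exp _), ← Complex.exp_add]
    simp only [F]
    congr 3
    push_cast
    ring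
  have h := hasSum_integral_of_summable_integral_norm (μ := volume) (F := F)
    (fun n ↦ (integrable_exp_mul_fourier hwf _).const_mul _) (by
      simp_rw [norm_F, integral_const_mul]
      exact summable_norm.mul_right _)
  simpa only [integral_F, tsum_F] using h

/-- The triangular bump supported on `[-1, 1]` with maximum `1` at `0`, used to localize sums. -/
noncomputable def tent (y : ℝ) : ℝ := max 0 (1 - |y|)

lemma tent_nonneg (y : ℝ) : 0 ≤ tent y := le_max_left _ _

lemma tent_le_one (y : ℝ) : tent y ≤ 1 :=
  max_le zero_le_one (by linarith [abs_nonneg y])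

lemma tent_neg (y : ℝ) : tent (-y) = tent y := by rw [tent, abs_neg, tent]

lemma tent_eq_zero {y : ℝ} (hy : 1 ≤ |y|) : tent y = 0 := max_eq_left (by linarith)

lemma half_le_tent {y : ℝ} (hy : |y| ≤ 1 / 2) : 1 / 2 ≤ tent y :=
  le_max_of_le_right (by linarith)

lemma continuous_tent : Continuous tent := by unfold tent; fun_prop

lemma continuous_ofReal_tent : Continuous fun y ↦ (tent y : ℂ) :=
  Complex.continuous_ofReal.comp continuous_tent

lemma integrable_ofReal_tent : Integrable fun y ↦ (tent y : ℂ) := by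
  refine continuous_ofReal_tent.integrable_of_hasCompactSupport
    (.of_support_subset_isCompact (isCompact_Icc (a := -1) (b := 1)) fun y hy ↦ ?_)
  by_contra h
  rw [Set.mem_Icc, ← abs_le, not_le] at h
  exact hy (by simp [tent_eq_zero h.le])

lemma integral_mul_tent (g : ℝ → ℂ) : ∫ v, g v * tent v = ∫ v in (-1 : ℝ)..1, g v * tent v := by
  rw [intervalIntegral.integral_of_le (by norm_num)]
  refine (setIntegral_eq_integral_of_forall_compl_eq_zero fun v hv ↦ ?_).symm
  have one_le : 1 ≤ |v| := by
    by_contra! h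
    exact hv ⟨(abs_lt.1 h).1, (abs_lt.1 h).2.le⟩
  rw [tent_eq_zero one_le, Complex.ofReal_zero, mul_zero]

lemma integral_zero_one_exp_mul_tent {c : ℂ} (hc : c ≠ 0) :
    ∫ v in (0 : ℝ)..1, Complex.exp (c * v) * tent v = (Complex.exp c - 1 - c) / c ^ 2 := by
  have eq_on : ∫ v in (0 : ℝ)..1, Complex.exp (c * v) * tent v
      = ∫ v in (0 : ℝ)..1, (1 - v) * Complex.exp (c * v) := by
    refine intervalIntegral.integral_congr fun v hv ↦ ?_
    rw [Set.uIcc_of_le zero_le_one] at hv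
    have tent_eq : tent v = 1 - v := by
      rw [tent, abs_of_nonneg hv.1, max_eq_right (by linarith [hv.2])]
    simp only [tent_eq]
    push_cast
    ring
  have antideriv (v : ℝ) : HasDerivAt (fun v : ℝ ↦ (1 - (v : ℂ)) * Complex.exp (c * v) / c
      + Complex.exp (c * v) / c ^ 2) ((1 - v) * Complex.exp (c * v)) v := by
    have h_id : HasDerivAt (fun v : ℝ ↦ (v : ℂ)) 1 v := by
      simpa using (hasDerivAt_id v).ofReal_comp
    have h_exp := (h_id.const_mul c).cexp
    refine ((((h_id.const_sub 1).mul h_exp).div_const c).add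
      (h_exp.div_const (c ^ 2))).congr_deriv ?_
    field_simp
    ring
  rw [eq_on, intervalIntegral.integral_eq_sub_of_hasDerivAt (fun v _ ↦ antideriv v)
    (Continuous.intervalIntegrable (by fun_prop) _ _)]
  simp only [Complex.ofReal_one, Complex.ofReal_zero, mul_one, mul_zero, sub_self, sub_zero,
    zero_mul, zero_div, zero_add, Complex.exp_zero]
  field_simp
  ring

lemma integral_exp_mul_tent {c : ℂ} (hc : c ≠ 0) :
    ∫ v : ℝ, Complex.exp (c * v) * tent v = (Complex.exp c + Complex.exp (-c) - 2) / c ^ 2 := by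
  have continuous_tent := continuous_ofReal_tent
  have integrable (a b : ℝ) :
      IntervalIntegrable (fun v : ℝ ↦ Complex.exp (c * v) * tent v) volume a b :=
    Continuous.intervalIntegrable (by fun_prop) _ _
  have reflect : ∫ v in (-1 : ℝ)..0, Complex.exp (c * v) * tent v
      = ∫ v in (0 : ℝ)..1, Complex.exp (-c * v) * tent v := by
    rw [← neg_zero, ← intervalIntegral.integral_comp_neg]
    simp [tent_neg]
  rw [integral_mul_tent, ← intervalIntegral.integral_add_adjacent_intervals (b := 0)
    (integrable _ _) (integrable _ _), reflect, integral_zero_one_exp_mul_tent hc,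
    integral_zero_one_exp_mul_tent (neg_ne_zero.2 hc)]
  field_simp
  ring

lemma norm_exp_neg_two_pi_mul (ξ v : ℝ) :
    ‖Complex.exp ((-2 * Real.pi * ξ * Complex.I) * v)‖ = 1 := by
  rw [show (-2 * Real.pi * ξ * Complex.I) * v = ((-2 * Real.pi * ξ * v : ℝ) : ℂ) * Complex.I by
    push_cast; ring, Complex.norm_exp_ofReal_mul_I]

lemma fourier_tent_eq (ξ : ℝ) : 𝓕 (fun y ↦ (tent y : ℂ)) ξ
    = ∫ v : ℝ, Complex.exp ((-2 * Real.pi * ξ * Complex.I) * v) * tent v := by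
  rw [Real.fourier_real_eq_integral_exp_smul]
  congr 1 with v
  rw [smul_eq_mul]
  congr 2
  push_cast
  ring

lemma norm_fourier_tent_le_two (ξ : ℝ) : ‖𝓕 (fun y ↦ (tent y : ℂ)) ξ‖ ≤ 2 := by
  rw [fourier_tent_eq, integral_mul_tent]
  refine (intervalIntegral.norm_integral_le_of_norm_le_const (C := 1) fun v _ ↦ ?_).trans
    (by norm_num)
  rw [norm_mul, norm_exp_neg_two_pi_mul, one_mul, Complex.norm_real,
    Real.norm_of_nonneg (tent_nonneg v)]
  exact tent_le_one v

lemma norm_fourier_tent_le_inv_sq {ξ : ℝ} (hξ : ξ ≠ 0) :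
    ‖𝓕 (fun y ↦ (tent y : ℂ)) ξ‖ ≤ 4 / (2 * Real.pi * |ξ|) ^ 2 := by
  have freq_ne_zero : (-2 * Real.pi * ξ * Complex.I : ℂ) ≠ 0 := by simp [hξ, Real.pi_ne_zero]
  have norm_freq : ‖(-2 * Real.pi * ξ * Complex.I : ℂ)‖ = 2 * Real.pi * |ξ| := by
    simp [abs_of_pos Real.pi_pos]
  have norm_exp := norm_exp_neg_two_pi_mul ξ 1
  have norm_exp_neg := norm_exp_neg_two_pi_mul ξ (-1)
  simp only [Complex.ofReal_one, mul_one, Complex.ofReal_neg, mul_neg] at norm_exp norm_exp_neg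
  rw [fourier_tent_eq, integral_exp_mul_tent freq_ne_zero, norm_div, norm_pow, norm_freq]
  gcongr
  refine (norm_sub_le _ _).trans ((add_le_add_left (norm_add_le _ _) _).trans ?_)
  rw [norm_exp, norm_exp_neg]
  norm_num

lemma norm_fourier_tent_le (ξ : ℝ) :
    ‖𝓕 (fun y ↦ (tent y : ℂ)) ξ‖ ≤ 4 * (1 + |ξ|) ^ (-2 : ℝ) := by
  have one_add_pos : 0 < 1 + |ξ| := by positivity
  rw [Real.rpow_neg one_add_pos.le, Real.rpow_two, ← div_eq_mul_inv]
  rcases le_or_gt |ξ| (2 / 5) with small | large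
  · refine (norm_fourier_tent_le_two ξ).trans ?_
    rw [le_div_iff₀ (by positivity)]
    nlinarith [abs_nonneg ξ]
  · have ξ_ne_zero : ξ ≠ 0 := by rintro rfl; norm_num at large
    refine (norm_fourier_tent_le_inv_sq ξ_ne_zero).trans ?_
    gcongr
    nlinarith [Real.pi_gt_three]

lemma integrable_fourier_tent : Integrable (𝓕 fun y ↦ (tent y : ℂ)) := by
  have continuous_fourier : Continuous (𝓕 fun y ↦ (tent y : ℂ)) :=
    VectorFourier.fourierIntegral_continuous Real.continuous_fourierChar
      (by fun_prop) integrable_ofReal_tent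
  exact Integrable.mono' (g := fun ξ : ℝ ↦ 4 * (1 + ‖ξ‖) ^ (-2 : ℝ))
    ((integrable_one_add_norm (by simp)).const_mul 4) continuous_fourier.aestronglyMeasurable
    (.of_forall norm_fourier_tent_le)

lemma integral_one_add_abs_rpow : ∫ v : ℝ, (1 + |v|) ^ (-(3 / 2) : ℝ) = 4 := by
  have translate := (measurePreserving_add_left volume (1 : ℝ)).setIntegral_preimage_emb
    (measurableEmbedding_addLeft (1 : ℝ)) (fun v : ℝ ↦ v ^ (-(3 / 2) : ℝ)) (Set.Ioi 1)
  rw [Set.preimage_const_add_Ioi, sub_self] at translate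
  rw [integral_comp_abs (f := fun v ↦ (1 + v) ^ (-(3 / 2) : ℝ)), translate,
    integral_Ioi_rpow_of_lt (by norm_num) (by norm_num)]
  norm_num

lemma add_pow_le_pow_mul_exp {x y : ℝ} {M : ℕ} (hx : 0 < x) (hy : 0 ≤ y) (hM : 2 * M ≤ x) :
    (x + y) ^ M ≤ x ^ M * Real.exp (y / 2) := by
  have add_le : x + y ≤ x * Real.exp (y / x) :=
    calc x + y = x * (y / x + 1) := by field_simp; ring
      _ ≤ x * Real.exp (y / x) := by gcongr; exact Real.add_one_le_exp _
  calc (x + y) ^ M ≤ (x * Real.exp (y / x)) ^ M := by gcongr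
    _ = x ^ M * Real.exp (M * (y / x)) := by rw [mul_pow, ← Real.exp_nat_mul]
    _ ≤ x ^ M * Real.exp (y / 2) := by
      gcongr
      rw [← mul_div_assoc, div_le_div_iff₀ hx two_pos]
      nlinarith

lemma stripBound_add_log_pow_le {L r : ℝ} {j : ℕ} (hr : 1 ≤ r) (hj : 18 * (j + 1) ≤ L) :
    stripBound (L + Real.log r) ^ (j + 1) ≤ stripBound L ^ (j + 1) * r ^ (1 / 2 : ℝ) := by
  have pow_le := add_pow_le_pow_mul_exp (M := 9 * (j + 1)) (lt_of_lt_of_le (by positivity) hj)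
    (Real.log_nonneg hr) (by push_cast; linarith)
  rw [stripBound, stripBound, Real.rpow_def_of_pos (by linarith), mul_pow, mul_pow _ (L ^ 9),
    ← pow_mul (L + _), ← pow_mul L, mul_assoc, mul_one_div]
  gcongr

lemma log_two_mul_abs_add_ten_le {δ : ℝ} (hδ : 0 < δ) (hδ1 : δ ≤ 1) (v : ℝ) :
    Real.log (2 * |-(2 * Real.pi * v / δ)| + 10) ≤ Real.log (16 / δ) + Real.log (1 + |v|) := by
  have one_add_pos : 0 < 1 + |v| := by positivity
  rw [← Real.log_mul (by positivity) one_add_pos.ne']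
  gcongr
  rw [abs_neg, abs_div, abs_of_pos hδ, abs_mul, abs_of_pos (by positivity : 0 < 2 * Real.pi),
    div_mul_eq_mul_div, ← mul_div_assoc, div_add' _ _ _ hδ.ne']
  gcongr
  nlinarith [Real.pi_le_four, abs_nonneg v]

lemma norm_iteratedDeriv_psiDefect_mul_fourier_tent_le (j : ℕ) {x δ : ℝ} (hx : 0 ≤ x)
    (hx1 : x ≤ 1 / 1000) (hδ : 0 < δ) (hδ1 : δ ≤ 1) (hj : 18 * (j + 1) ≤ Real.log (16 / δ))
    (v : ℝ) :
    ‖iteratedDeriv j psiDefect (1 + x + (-(2 * Real.pi * v / δ) : ℝ) * Complex.I)‖ *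
        ‖𝓕 (fun y ↦ (tent y : ℂ)) v‖ ≤
      4 * (j.factorial * stripBound (Real.log (16 / δ)) ^ (j + 1)) *
        (1 + |v|) ^ (-(3 / 2) : ℝ) := by
  have one_add_pos : 0 < 1 + |v| := by positivity
  have one_le : 1 ≤ 1 + |v| := by linarith [abs_nonneg v]
  set L := Real.log (16 / δ)
  have L_pos : 0 < L := lt_of_lt_of_le (by positivity) hj
  have bound_nonneg := (stripBound_pos L_pos).le
  have log_nonneg : 0 ≤ Real.log (2 * |-(2 * Real.pi * v / δ)| + 10) :=
    Real.log_nonneg (by linarith [abs_nonneg (-(2 * Real.pi * v / δ))])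
  have deriv_le : ‖iteratedDeriv j psiDefect (1 + x + (-(2 * Real.pi * v / δ) : ℝ) * Complex.I)‖
      ≤ j.factorial * (stripBound L ^ (j + 1) * (1 + |v|) ^ (1 / 2 : ℝ)) := by
    refine (norm_iteratedDeriv_psiDefect_le j hx hx1).trans ?_
    gcongr
    refine le_trans ?_ (stripBound_add_log_pow_le one_le hj)
    unfold stripBound
    gcongr
    exact log_two_mul_abs_add_ten_le hδ hδ1 v
  calc _ ≤ (j.factorial * (stripBound L ^ (j + 1) * (1 + |v|) ^ (1 / 2 : ℝ)))
        * (4 * (1 + |v|) ^ (-2 : ℝ)) :=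
        mul_le_mul deriv_le (norm_fourier_tent_le v) (norm_nonneg _) (by positivity)
    _ = 4 * (j.factorial * stripBound L ^ (j + 1)) *
        ((1 + |v|) ^ (1 / 2 : ℝ) * (1 + |v|) ^ (-2 : ℝ)) := by ring
    _ = _ := by rw [← Real.rpow_add one_add_pos]; norm_num

/-- The part near `exp u₀` of the Dirichlet series of `defectCoeff j` at `1 + x`, smoothed on the
multiplicative scale `exp δ`. -/
noncomputable def smoothedTerm (j : ℕ) (x δ u₀ : ℝ) (n : ℕ) : ℝ :=
  defectCoeff j n * (n : ℝ) ^ (-(1 + x)) * tent ((Real.log n - u₀) / δ)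

lemma hasSum_smoothedTerm (j : ℕ) {x : ℝ} (hx : 0 < x) (u₀ δ : ℝ) :
    HasSum (fun n ↦ (smoothedTerm j x δ u₀ n : ℂ))
      (∫ v : ℝ, (-1) ^ j * iteratedDeriv j psiDefect
          (1 + x + (-(2 * Real.pi * v / δ) : ℝ) * Complex.I) *
        (Complex.exp ((2 * Real.pi * v * (-u₀ / δ) : ℝ) * Complex.I) *
          𝓕 (fun y ↦ (tent y : ℂ)) v)) := by
  have h := hasSum_dirichlet_mul_weight (a := fun n ↦ (defectCoeff j n : ℂ)) (σ := 1 + x)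
    (D := fun s ↦ (-1) ^ j * iteratedDeriv j psiDefect s) (by positivity)
    (fun t ↦ hasSum_defectCoeff j (by simpa using hx)) continuous_ofReal_tent
    integrable_ofReal_tent integrable_fourier_tent u₀ δ
  have cast_smoothedTerm (n : ℕ) : (smoothedTerm j x δ u₀ n : ℂ) = defectCoeff j n *
      (n : ℂ) ^ (-(1 + x : ℝ) : ℂ) * tent ((Real.log n - u₀) / δ) := by
    rw [smoothedTerm, Complex.ofReal_mul, Complex.ofReal_mul, Complex.ofReal_cpow n.cast_nonneg]
    push_cast
    rfl
  simpa only [cast_smoothedTerm, Complex.ofReal_add, Complex.ofReal_one] using h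

theorem abs_tsum_smoothedTerm_le (j : ℕ) {x δ : ℝ} (u₀ : ℝ) (hx : 0 < x) (hx1 : x ≤ 1 / 1000)
    (hδ : 0 < δ) (hδ1 : δ ≤ 1) (hj : 18 * (j + 1) ≤ Real.log (16 / δ)) :
    |∑' n, smoothedTerm j x δ u₀ n|
      ≤ 16 * (j.factorial * stripBound (Real.log (16 / δ)) ^ (j + 1)) := by
  rw [← Real.norm_eq_abs, ← Complex.norm_real, Complex.ofReal_tsum,
    (hasSum_smoothedTerm j hx u₀ δ).tsum_eq]
  set C : ℝ := j.factorial * stripBound (Real.log (16 / δ)) ^ (j + 1)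
  have integrable : Integrable fun v : ℝ ↦ (1 + |v|) ^ (-(3 / 2) : ℝ) :=
    integrable_one_add_norm (E := ℝ) (by norm_num)
  calc _ ≤ ∫ v : ℝ, 4 * C * (1 + |v|) ^ (-(3 / 2) : ℝ) := by
        refine norm_integral_le_of_norm_le (integrable.const_mul _) (.of_forall fun v ↦ ?_)
        rw [norm_mul, norm_mul, norm_mul, Complex.norm_exp_ofReal_mul_I, one_mul, norm_pow,
          norm_neg, norm_one, one_pow, one_mul]
        exact norm_iteratedDeriv_psiDefect_mul_fourier_tent_le j hx.le hx1 hδ hδ1 hj v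
    _ = 16 * C := by rw [integral_const_mul, integral_one_add_abs_rpow]; ring

end SmoothedSum

/-! ### Primes in short intervals -/

section ShortIntervals

open ArithmeticFunction (vonMangoldt vonMangoldt_nonneg)

/-- The weight with which `Λ n - 1` enters the smoothed sum of `smoothedTerm j x δ u₀`. -/
noncomputable def smoothedWeight (j : ℕ) (x δ u₀ : ℝ) (n : ℕ) : ℝ :=
  Real.log n ^ j * (n : ℝ) ^ (-(1 + x)) * tent ((Real.log n - u₀) / δ)

lemma smoothedTerm_eq (j : ℕ) (x δ u₀ : ℝ) (n : ℕ) :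
    smoothedTerm j x δ u₀ n =
      vonMangoldt n * smoothedWeight j x δ u₀ n - smoothedWeight j x δ u₀ n := by
  rw [smoothedTerm, smoothedWeight, defectCoeff]
  ring

lemma smoothedWeight_nonneg (j : ℕ) (x δ u₀ : ℝ) (n : ℕ) : 0 ≤ smoothedWeight j x δ u₀ n :=
  mul_nonneg (mul_nonneg (pow_nonneg (Real.log_natCast_nonneg n) j) (by positivity))
    (tent_nonneg _)

lemma smoothedWeight_eq_zero {j : ℕ} {x δ u₀ : ℝ} {n : ℕ} (hδ : 0 < δ)
    (hn : δ ≤ |Real.log n - u₀|) : smoothedWeight j x δ u₀ n = 0 := by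
  rw [smoothedWeight, tent_eq_zero, mul_zero]
  rwa [abs_div, abs_of_pos hδ, one_le_div₀ hδ]

lemma le_smoothedWeight {j : ℕ} {x δ u₀ : ℝ} {n : ℕ} (hu : 0 ≤ u₀) (hδ : 0 < δ) (hδ1 : δ ≤ 1)
    (hx : 0 ≤ x) (hxu : x * (u₀ + 1) ≤ 1) (hn : 0 < n) (hun : u₀ ≤ Real.log n)
    (hnu : Real.log n ≤ u₀ + δ / 2) :
    u₀ ^ j / (16 * Real.exp u₀) ≤ smoothedWeight j x δ u₀ n := by
  have tent_ge : 1 / 2 ≤ tent ((Real.log n - u₀) / δ) := by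
    refine half_le_tent ?_
    rw [abs_of_nonneg (div_nonneg (by linarith) hδ.le), div_le_iff₀ hδ]
    linarith
  have rpow_ge : 1 / (8 * Real.exp u₀) ≤ (n : ℝ) ^ (-(1 + x)) :=
    calc 1 / (8 * Real.exp u₀) ≤ 1 / (Real.exp 2 * Real.exp u₀) := by
          gcongr; linarith [exp_two_lt]
      _ = Real.exp (-(u₀ + 2)) := by rw [Real.exp_neg, Real.exp_add, one_div, mul_comm]
      _ ≤ Real.exp (Real.log n * -(1 + x)) := Real.exp_le_exp.2 (by nlinarith)
      _ = _ := (Real.rpow_def_of_pos (by exact_mod_cast hn) _).symm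
  calc u₀ ^ j / (16 * Real.exp u₀) = u₀ ^ j * (1 / (8 * Real.exp u₀)) * (1 / 2) := by
        field_simp; ring
    _ ≤ _ := by unfold smoothedWeight; gcongr

lemma sub_one_le_card_Ioc_floor {a b : ℝ} (ha : 0 ≤ a) (hab : a ≤ b) :
    b - a - 1 ≤ (Finset.Ioc ⌊a⌋₊ ⌊b⌋₊).card := by
  rw [Nat.card_Ioc, Nat.cast_sub (Nat.floor_le_floor hab)]
  linarith [Nat.floor_le ha, Nat.lt_floor_add_one b]

lemma mem_Ioc_floor_exp {s t : ℝ} {n : ℕ} :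
    n ∈ Finset.Ioc ⌊Real.exp s⌋₊ ⌊Real.exp t⌋₊ ↔ 0 < n ∧ s < Real.log n ∧ Real.log n ≤ t := by
  rw [Finset.mem_Ioc, Nat.floor_lt (Real.exp_pos s).le, Nat.le_floor_iff (Real.exp_pos t).le]
  refine ⟨fun ⟨hs, ht⟩ ↦ ?_, fun ⟨hn, hs, ht⟩ ↦ ?_⟩
  · have hn : (0 : ℝ) < n := (Real.exp_pos s).trans hs
    exact ⟨by exact_mod_cast hn, (Real.lt_log_iff_exp_lt hn).2 hs,
      (Real.log_le_iff_le_exp hn).2 ht⟩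
  · have hn : (0 : ℝ) < n := by exact_mod_cast hn
    exact ⟨(Real.lt_log_iff_exp_lt hn).1 hs, (Real.log_le_iff_le_exp hn).1 ht⟩

lemma le_sum_smoothedWeight (j : ℕ) {N : ℕ} {u₀ δ x : ℝ} (hu : 0 ≤ u₀) (hδ : 0 < δ)
    (hδ1 : δ ≤ 1) (hx : 0 ≤ x) (hxu : x * (u₀ + 1) ≤ 1) (hδu : 4 ≤ Real.exp u₀ * δ)
    (hN : Real.exp (u₀ + 1) < N) :
    u₀ ^ j * δ / 64 ≤ ∑ n ∈ Finset.range N, smoothedWeight j x δ u₀ n := by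
  set I := Finset.Ioc ⌊Real.exp u₀⌋₊ ⌊Real.exp (u₀ + δ / 2)⌋₊
  have subset_range : I ⊆ Finset.range N := fun n hn ↦ by
    obtain ⟨hn, -, hnu⟩ := mem_Ioc_floor_exp.1 hn
    have : (n : ℝ) < N := hN.trans_le' <|
      (Real.log_le_iff_le_exp (by exact_mod_cast hn)).1 (by linarith)
    exact Finset.mem_range.2 (by exact_mod_cast this)
  have card_ge : Real.exp u₀ * δ / 4 ≤ I.card := by
    have gap : Real.exp u₀ * (1 + δ / 2) ≤ Real.exp (u₀ + δ / 2) := by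
      rw [Real.exp_add]
      gcongr
      linarith [Real.add_one_le_exp (δ / 2)]
    linarith [sub_one_le_card_Ioc_floor (Real.exp_pos u₀).le
      (Real.exp_le_exp.2 (by linarith : u₀ ≤ u₀ + δ / 2))]
  calc u₀ ^ j * δ / 64 = Real.exp u₀ * δ / 4 * (u₀ ^ j / (16 * Real.exp u₀)) := by
        field_simp; ring
    _ ≤ I.card * (u₀ ^ j / (16 * Real.exp u₀)) := by gcongr
    _ ≤ ∑ n ∈ I, smoothedWeight j x δ u₀ n := by
        rw [← nsmul_eq_mul]
        refine Finset.card_nsmul_le_sum _ _ _ fun n hn ↦ ?_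
        obtain ⟨hn, hun, hnu⟩ := mem_Ioc_floor_exp.1 hn
        exact le_smoothedWeight hu hδ hδ1 hx hxu hn hun.le hnu
    _ ≤ ∑ n ∈ Finset.range N, smoothedWeight j x δ u₀ n :=
        Finset.sum_le_sum_of_subset_of_nonneg subset_range fun n _ _ ↦
          smoothedWeight_nonneg j x δ u₀ n

lemma smoothedWeight_le {j : ℕ} {x δ u₀ : ℝ} {n : ℕ} (hu : 1 ≤ u₀) (hδ1 : δ ≤ 1) (hx : 0 ≤ x)
    (hn : 0 < n) (hnu : |Real.log n - u₀| < δ) :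
    smoothedWeight j x δ u₀ n ≤ (u₀ + 1) ^ j * Real.exp (1 - u₀) := by
  rw [abs_lt] at hnu
  have := Real.log_natCast_nonneg n
  have log_le : Real.log n ≤ u₀ + 1 := by linarith
  have rpow_le : (n : ℝ) ^ (-(1 + x)) ≤ Real.exp (1 - u₀) := by
    rw [Real.rpow_def_of_pos (by exact_mod_cast hn)]
    exact Real.exp_le_exp.2 (by nlinarith)
  calc smoothedWeight j x δ u₀ n ≤ (u₀ + 1) ^ j * Real.exp (1 - u₀) * 1 := by
        unfold smoothedWeight
        gcongr
        · exact tent_nonneg _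
        · exact tent_le_one _
    _ = _ := mul_one _

lemma sum_vonMangoldt_mul_smoothedWeight_le (j N : ℕ) {u₀ δ x : ℝ} (hu : 1 ≤ u₀) (hδ : 0 < δ)
    (hδ1 : δ ≤ 1) (hx : 0 ≤ x) (not_prime : ∀ p : ℕ, |Real.log p - u₀| < δ → ¬p.Prime) :
    ∑ n ∈ Finset.range N, vonMangoldt n * smoothedWeight j x δ u₀ n
      ≤ 2 * (u₀ + 1) ^ (j + 1) * Real.exp ((3 - u₀) / 2) := by
  set y := Real.exp (u₀ + 1) with hy
  set K : ℝ := (u₀ + 1) ^ j * Real.exp (1 - u₀) with hK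
  set S := {n ∈ Finset.Ioc 0 ⌊y⌋₊ | ¬n.Prime}
  have term_le (n : ℕ) : vonMangoldt n * smoothedWeight j x δ u₀ n
      ≤ if n ∈ S then K * vonMangoldt n else 0 := by
    have := vonMangoldt_nonneg (n := n)
    rcases le_or_gt δ |Real.log n - u₀| with hnu | hnu
    · rw [smoothedWeight_eq_zero hδ hnu, mul_zero]
      split_ifs <;> positivity
    · have log_gt : u₀ - δ < Real.log n := by linarith [(abs_lt.1 hnu).1]
      have hn : 0 < n := Nat.pos_of_ne_zero fun h ↦ by
        rw [h, Nat.cast_zero, Real.log_zero] at log_gt; linarith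
      have hnS : n ∈ S := by
        refine Finset.mem_filter.2 ⟨Finset.mem_Ioc.2 ⟨hn, Nat.le_floor ?_⟩, not_prime n hnu⟩
        rw [hy, ← Real.log_le_iff_le_exp (by exact_mod_cast hn)]
        linarith [(abs_lt.1 hnu).2]
      rw [if_pos hnS, mul_comm K]
      gcongr
      exact smoothedWeight_le hu hδ1 hx hn hnu
  calc ∑ n ∈ Finset.range N, vonMangoldt n * smoothedWeight j x δ u₀ n
      ≤ ∑ n ∈ Finset.range N ∩ S, K * vonMangoldt n :=
        (Finset.sum_le_sum fun n _ ↦ term_le n).trans_eq (Finset.sum_ite_mem ..)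
    _ ≤ ∑ n ∈ S, K * vonMangoldt n :=
        Finset.sum_le_sum_of_subset_of_nonneg Finset.inter_subset_right fun n _ _ ↦
          mul_nonneg (by positivity) vonMangoldt_nonneg
    _ = K * (Chebyshev.psi y - Chebyshev.theta y) := by
        rw [Chebyshev.psi_sub_theta_eq_sum_not_prime, Finset.mul_sum]
    _ ≤ K * (2 * √y * Real.log y) := by
        gcongr
        exact Chebyshev.psi_sub_theta_le (Real.one_le_exp (by linarith))
    _ = 2 * (u₀ + 1) ^ (j + 1) * Real.exp ((3 - u₀) / 2) := by
        rw [hy, Real.log_exp, ← Real.exp_half, hK,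
          show (3 - u₀) / 2 = (1 - u₀) + (u₀ + 1) / 2 by ring, Real.exp_add]
        ring

theorem exists_prime_abs_log_sub_lt (j : ℕ) {u₀ δ : ℝ} (hu : 1000 ≤ u₀) (hδ : 0 < δ)
    (hδ1 : δ ≤ 1) (hδu : 4 ≤ Real.exp u₀ * δ) (hj : 18 * (j + 1) ≤ Real.log (16 / δ))
    (hmain : 16 * (j.factorial * stripBound (Real.log (16 / δ)) ^ (j + 1))
      + 2 * (u₀ + 1) ^ (j + 1) * Real.exp ((3 - u₀) / 2) < u₀ ^ j * δ / 64) :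
    ∃ p : ℕ, p.Prime ∧ |Real.log p - u₀| < δ := by
  by_contra! no_prime
  have not_prime (p : ℕ) (hp : |Real.log p - u₀| < δ) : ¬p.Prime :=
    fun h ↦ (no_prime p h).not_gt hp
  have hx : 0 < 1 / (u₀ + 1) := by positivity
  have hx1 : 1 / (u₀ + 1) ≤ 1 / 1000 := one_div_le_one_div_of_le (by norm_num) (by linarith)
  have hxu : 1 / (u₀ + 1) * (u₀ + 1) ≤ 1 := (one_div_mul_cancel (by positivity)).le
  obtain ⟨N, hN⟩ := exists_nat_gt (Real.exp (u₀ + 1))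
  have term_eq_zero (n : ℕ) (hn : n ∉ Finset.range N) :
      smoothedTerm j (1 / (u₀ + 1)) δ u₀ n = 0 := by
    have exp_lt : Real.exp (u₀ + 1) < n :=
      hN.trans_le (by exact_mod_cast not_lt.1 (Finset.mem_range.not.1 hn))
    have lt_log := (Real.lt_log_iff_exp_lt ((Real.exp_pos _).trans exp_lt)).2 exp_lt
    rw [smoothedTerm_eq, smoothedWeight_eq_zero hδ, mul_zero, sub_zero]
    exact (by linarith : δ ≤ Real.log n - u₀).trans (le_abs_self _)
  have tsum_bound := abs_tsum_smoothedTerm_le j u₀ hx hx1 hδ hδ1 hj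
  rw [tsum_eq_sum term_eq_zero] at tsum_bound
  simp only [smoothedTerm_eq, Finset.sum_sub_distrib] at tsum_bound
  linarith [(abs_le.1 tsum_bound).1,
    le_sum_smoothedWeight j (by linarith) hδ hδ1 hx.le hxu hδu hN,
    sum_vonMangoldt_mul_smoothedWeight_le j N (by linarith : 1 ≤ u₀) hδ hδ1 hx.le not_prime]

end ShortIntervals

lemma two_pow_mul_pow_le_exp_half {l : ℝ} (hl : 1500 ≤ l) : 2 ^ 98 * l ^ 49 ≤ Real.exp (l / 2) := by
  have four_mul_le : 4 * l ≤ Real.exp (l / 98) := by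
    have pow_ge : (1500 / 98 : ℝ) ^ 4 ≤ (l / 98) ^ 4 := by gcongr
    refine le_trans ?_ (Real.pow_div_factorial_le_exp (l / 98) (by linarith) 5)
    rw [le_div_iff₀ (by positivity)]
    norm_num [Nat.factorial] at pow_ge ⊢
    nlinarith
  calc 2 ^ 98 * l ^ 49 = (4 * l) ^ 49 := by ring
    _ ≤ Real.exp (l / 98) ^ 49 := by gcongr
    _ = Real.exp (l / 2) := by rw [← Real.exp_nat_mul]; congr 1; push_cast; ring

lemma two_pow_le_exp (n : ℕ) : (2 : ℝ) ^ n ≤ Real.exp n := by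
  rw [← Real.exp_one_pow]
  gcongr
  linarith [Real.exp_one_gt_d9]

lemma factorial_mul_stripBound_pow_le {j : ℕ} {l u : ℝ} (hl : 1500 ≤ l) (hj : 4 * l ^ 4 ≤ j)
    (hj' : j ≤ 5 * l ^ 4) (hu : Real.exp l / 2 ≤ u) :
    16 * (j.factorial * stripBound (2 * l ^ 5) ^ (j + 1)) ≤ u ^ j * Real.exp (-l ^ 5) / 256 := by
  have one_le_j : (1 : ℝ) ≤ j := by linarith [one_le_pow₀ (by linarith : 1 ≤ l) (n := 4)]
  have hB : 0 < stripBound (2 * l ^ 5) := stripBound_pos (by positivity)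
  set B := stripBound (2 * l ^ 5) with hBdef
  set E := Real.exp (l / 2) with hE
  have E_pos : 0 < E := Real.exp_pos _
  have u_pos : 0 < u := (by positivity : 0 < Real.exp l / 2).trans_le hu
  have exp_eq : Real.exp l = E * E := by rw [hE, ← Real.exp_add, add_halves]
  have four_mul_le : 4 * (j * B) ≤ E :=
    calc 4 * (j * B) ≤ 4 * (5 * l ^ 4 * B) := by gcongr
      _ = (20 * 10 ^ 25 * 2 ^ 9) * l ^ 49 := by rw [hBdef, stripBound]; ring
      _ ≤ 2 ^ 98 * l ^ 49 := by gcongr; norm_num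
      _ ≤ E := two_pow_mul_pow_le_exp_half hl
  have pow_le : (j * B) ^ j ≤ u ^ j * Real.exp (-(2 * l ^ 5)) := by
    have le_mul_exp : j * B ≤ u * Real.exp (-(l / 2)) := by
      rw [Real.exp_neg, ← hE, ← div_eq_mul_inv, le_div_iff₀ E_pos]
      nlinarith
    calc (j * B) ^ j ≤ (u * Real.exp (-(l / 2))) ^ j := by gcongr
      _ = u ^ j * Real.exp (-(j * l / 2)) := by rw [mul_pow, ← Real.exp_nat_mul]; ring_nf
      _ ≤ _ := by
        gcongr
        nlinarith
  have B_le : 4096 * B ≤ Real.exp (l ^ 5) :=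
    calc 4096 * B ≤ 2 ^ 12 * E := by nlinarith
      _ ≤ Real.exp (12 : ℕ) * E := by gcongr; exact two_pow_le_exp 12
      _ = Real.exp ((12 : ℕ) + l / 2) := by rw [Real.exp_add]
      _ ≤ _ := by
        gcongr
        push_cast
        linarith [le_self_pow₀ (by linarith : 1 ≤ l) (by norm_num : 5 ≠ 0)]
  calc 16 * (j.factorial * B ^ (j + 1)) ≤ 16 * ((j : ℝ) ^ j * B ^ (j + 1)) := by
        gcongr; exact_mod_cast Nat.factorial_le_pow j
    _ = (j * B) ^ j * (4096 * B) / 256 := by rw [mul_pow, pow_succ]; ring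
    _ ≤ u ^ j * Real.exp (-(2 * l ^ 5)) * Real.exp (l ^ 5) / 256 := by gcongr
    _ = u ^ j * Real.exp (-l ^ 5) / 256 := by rw [mul_assoc, ← Real.exp_add]; ring_nf

lemma add_one_pow_le_pow_mul_exp_one {j : ℕ} {u : ℝ} (hu : 0 < u) (hj : j ≤ u) :
    (u + 1) ^ j ≤ u ^ j * Real.exp 1 :=
  calc (u + 1) ^ j = (u * (1 / u + 1)) ^ j := by
        rw [mul_add, mul_one_div_cancel hu.ne', mul_one, add_comm]
    _ ≤ (u * Real.exp (1 / u)) ^ j := by gcongr; exact Real.add_one_le_exp _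
    _ = u ^ j * Real.exp (j / u) := by rw [mul_pow, ← Real.exp_nat_mul, mul_one_div]
    _ ≤ u ^ j * Real.exp 1 := by gcongr; exact (div_le_one hu).2 hj

lemma add_one_pow_succ_mul_exp_le {j : ℕ} {s u : ℝ} (hu : 0 < u) (hj : j ≤ u)
    (hsu : 4 * s + 54 ≤ u) :
    2 * (u + 1) ^ (j + 1) * Real.exp ((3 - u) / 2) ≤ u ^ j * Real.exp (-s) / 256 := by
  have add_one_le : u + 1 ≤ 4 * Real.exp (u / 4) := by linarith [Real.add_one_le_exp (u / 4)]
  calc 2 * (u + 1) ^ (j + 1) * Real.exp ((3 - u) / 2)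
      = 2 * ((u + 1) ^ j * (u + 1)) * Real.exp ((3 - u) / 2) := by rw [pow_succ]
    _ ≤ 2 * (u ^ j * Real.exp 1 * (4 * Real.exp (u / 4))) * Real.exp ((3 - u) / 2) := by
      gcongr
      exact add_one_pow_le_pow_mul_exp_one hu hj
    _ = u ^ j * (2 ^ 11 * Real.exp (1 + u / 4 + (3 - u) / 2)) / 256 := by
      rw [Real.exp_add, Real.exp_add]; ring
    _ ≤ u ^ j * (Real.exp (11 : ℕ) * Real.exp (1 + u / 4 + (3 - u) / 2)) / 256 := by
      gcongr; exact two_pow_le_exp 11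
    _ ≤ u ^ j * Real.exp (-s) / 256 := by
      rw [← Real.exp_add]
      gcongr
      push_cast
      linarith

lemma exists_nat_mem_Icc_four_mul {x : ℝ} (hx : 1 ≤ x) : ∃ j : ℕ, 4 * x ≤ j ∧ j ≤ 5 * x :=
  ⟨⌈4 * x⌉₊, Nat.le_ceil _, by linarith [Nat.ceil_lt_add_one (by linarith : 0 ≤ 4 * x)]⟩

/- The number `j` of derivatives has to be of order `l ^ 4`: the first error term is about
`(j * l ^ 45 / u) ^ j ≤ exp (-j * l / 2)`, which must beat `exp (-l ^ 5)`. -/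
theorem exists_prime_abs_log_sub_lt_exp {l u : ℝ} (hl : 1500 ≤ l) (hu : Real.exp l / 2 ≤ u) :
    ∃ p : ℕ, p.Prime ∧ |Real.log p - u| < Real.exp (-l ^ 5) := by
  have one_le_pow_four : 1 ≤ l ^ 4 := one_le_pow₀ (by linarith)
  obtain ⟨j, hj, hj'⟩ := exists_nat_mem_Icc_four_mul one_le_pow_four
  have pow_five_ge : 1500 * l ^ 4 ≤ l ^ 5 := by nlinarith
  have pow_le_u : 1000 * l ^ 5 ≤ u := by
    have exp_eq : Real.exp l = Real.exp (l / 2) * Real.exp (l / 2) := by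
      rw [← Real.exp_add, add_halves]
    have pow_le : l ^ 5 ≤ l ^ 49 := pow_le_pow_right₀ (by linarith) (by norm_num)
    have le_exp_half : 2000 * l ^ 5 ≤ Real.exp (l / 2) := by
      linarith [two_pow_mul_pow_le_exp_half hl]
    nlinarith [mul_le_mul le_exp_half le_exp_half (by linarith) (Real.exp_pos _).le]
  have log_div_exp : Real.log (16 / Real.exp (-l ^ 5)) = Real.log 16 + l ^ 5 := by
    rw [Real.log_div (by norm_num) (Real.exp_pos _).ne', Real.log_exp, sub_neg_eq_add]
  have log_sixteen_nonneg : 0 ≤ Real.log 16 := Real.log_nonneg (by norm_num)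
  have log_sixteen_le : Real.log 16 ≤ 15 := by
    linarith [Real.log_le_sub_one_of_pos (by norm_num : (0 : ℝ) < 16)]
  refine exists_prime_abs_log_sub_lt j (by linarith) (Real.exp_pos _)
    (Real.exp_le_one_iff.2 (by linarith)) ?_ (by rw [log_div_exp]; linarith) ?_
  · rw [← Real.exp_add]
    linarith [Real.add_one_le_exp (u + -l ^ 5)]
  · have main_pos : 0 < u ^ j * Real.exp (-l ^ 5) :=
      mul_pos (pow_pos (by linarith) j) (Real.exp_pos _)
    have analytic_error := factorial_mul_stripBound_pow_le hl hj hj' hu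
    have prime_power_error : 2 * (u + 1) ^ (j + 1) * Real.exp ((3 - u) / 2)
        ≤ u ^ j * Real.exp (-l ^ 5) / 256 :=
      add_one_pow_succ_mul_exp_le (by linarith) (by linarith) (by linarith)
    have strip_le : 16 * (j.factorial * stripBound (Real.log (16 / Real.exp (-l ^ 5))) ^ (j + 1))
        ≤ 16 * (j.factorial * stripBound (2 * l ^ 5) ^ (j + 1)) := by
      rw [log_div_exp]
      have bound_nonneg := (stripBound_pos (by linarith : 0 < Real.log 16 + l ^ 5)).le
      gcongr
      exact stripBound_le_stripBound (by linarith) (by linarith)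
    linarith

lemma exists_prime_gt_two_pow {A : ℕ} (hA : 1500 ≤ Real.log A) :
    ∃ q : ℕ, q.Prime ∧ (2 : ℝ) ^ A < q ∧
      (q : ℝ) < 2 ^ A * Real.exp (2 * Real.exp (-Real.log A ^ 5)) := by
  have hA0 : (0 : ℝ) < A := Nat.cast_pos.2 <| Nat.pos_of_ne_zero fun h ↦ by
    rw [h, Nat.cast_zero, Real.log_zero] at hA; linarith
  set δ := Real.exp (-Real.log A ^ 5)
  have δ_pos : 0 < δ := Real.exp_pos _
  obtain ⟨q, hq, hqA⟩ := exists_prime_abs_log_sub_lt_exp hA (u := A * Real.log 2 + δ) <| by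
    rw [Real.exp_log hA0]
    nlinarith [Real.log_two_gt_d9]
  rw [abs_lt] at hqA
  have hq0 : (0 : ℝ) < q := by exact_mod_cast hq.pos
  have two_pow_eq : (2 : ℝ) ^ A = Real.exp (A * Real.log 2) := by
    rw [Real.exp_nat_mul, Real.exp_log two_pos]
  refine ⟨q, hq, ?_, ?_⟩
  · rw [two_pow_eq, ← Real.lt_log_iff_exp_lt hq0]
    linarith
  · rw [two_pow_eq, ← Real.exp_add, ← Real.log_lt_iff_lt_exp hq0]
    linarith

lemma exp_two_mul_le_one_add_four_mul {δ : ℝ} (hδ : 0 ≤ δ) (hδ1 : δ ≤ 1 / 2) :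
    Real.exp (2 * δ) ≤ 1 + 4 * δ := by
  have taylor := Real.abs_exp_sub_one_sub_id_le (x := 2 * δ) (by rw [abs_of_nonneg] <;> linarith)
  nlinarith [(abs_le.1 taylor).2]

lemma four_mul_exp_neg_log_pow_le {A c : ℕ} (hA : 1500 ≤ Real.log A) (hc : 0 < c)
    (hcA : Real.log c ≤ Real.log A ^ 4) :
    4 * Real.exp (-Real.log A ^ 5) ≤ 1 / (4 * A * c) := by
  have hA0 : (0 : ℝ) < A := Nat.cast_pos.2 <| Nat.pos_of_ne_zero fun h ↦ by
    rw [h, Nat.cast_zero, Real.log_zero] at hA; linarith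
  have hc0 : (0 : ℝ) < c := by exact_mod_cast hc
  set l := Real.log A
  have one_le_pow_four : 1 ≤ l ^ 4 := one_le_pow₀ (by linarith)
  have l_le : l ≤ l ^ 4 := le_self_pow₀ (by linarith) (by norm_num)
  have pow_five_ge : 1500 * l ^ 4 ≤ l ^ 5 := by nlinarith
  rw [le_div_iff₀ (by positivity)]
  calc 4 * Real.exp (-l ^ 5) * (4 * A * c)
      = 16 * Real.exp l * Real.exp (Real.log c) * Real.exp (-l ^ 5) := by
        rw [Real.exp_log hA0, Real.exp_log hc0]; ring
    _ ≤ Real.exp 15 * Real.exp l * Real.exp (Real.log c) * Real.exp (-l ^ 5) := by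
        gcongr
        linarith [Real.add_one_le_exp (15 : ℝ)]
    _ = Real.exp (15 + l + Real.log c + -l ^ 5) := by simp only [Real.exp_add]
    _ ≤ 1 := Real.exp_le_one_iff.2 (by linarith)

theorem Attainable.mul_of_log_le {A c : ℕ} (h : Attainable A) (hA : 1500 ≤ Real.log A)
    (hc : 0 < c) (hcA : Real.log c ≤ Real.log A ^ 4) : Attainable (A * c) := by
  obtain ⟨q, hq, hAq, hqA⟩ := exists_prime_gt_two_pow hA
  have hA1 : (1 : ℝ) ≤ A := by exact_mod_cast h.pos
  have hc1 : (1 : ℝ) ≤ c := by exact_mod_cast hc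
  set δ := Real.exp (-Real.log A ^ 5)
  have δ_nonneg : 0 ≤ δ := (Real.exp_pos _).le
  have four_mul_le : 4 * δ ≤ 1 / (4 * A * c) := four_mul_exp_neg_log_pow_le hA hc hcA
  have one_div_le : 1 / (4 * A * c : ℝ) ≤ 1 := (div_le_one (by positivity)).2 (by nlinarith)
  refine h.mul hc hq (by exact_mod_cast hAq) (hqA.le.trans ?_)
  gcongr
  linarith [exp_two_mul_le_one_add_four_mul δ_nonneg (by linarith)]

lemma Attainable.mul_two_pow {A : ℕ} (h : Attainable A) (hA : 1500 ≤ Real.log A) (n : ℕ) :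
    Attainable (A * 2 ^ n) := by
  induction n with
  | zero => simpa only [pow_zero, mul_one] using h
  | succ n ih =>
    have log_ge : 1500 ≤ Real.log (A * 2 ^ n : ℕ) := by
      refine hA.trans (Real.log_le_log (by exact_mod_cast h.pos) ?_)
      exact_mod_cast Nat.le_mul_of_pos_right A (by positivity)
    rw [pow_succ, ← mul_assoc]
    refine ih.mul_of_log_le log_ge two_pos ?_
    calc Real.log (2 : ℕ) ≤ 1 := by rw [Nat.cast_ofNat]; linarith [Real.log_two_lt_d9]
      _ ≤ Real.log (A * 2 ^ n : ℕ) ^ 4 := one_le_pow₀ (by linarith)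

theorem exists_attainable_ge (N : ℕ) : ∃ A, N ≤ A ∧ Attainable A := by
  refine ⟨_, ?_, attainable_8192_mul_two_pow.mul_two_pow ?_ N⟩
  · exact N.lt_two_pow_self.le.trans (Nat.le_mul_of_pos_left _ (by positivity))
  · rw [Nat.cast_mul, Nat.cast_pow, Real.log_mul (by norm_num) (by positivity), Real.log_pow]
    have := Real.log_natCast_nonneg 8192
    push_cast at this ⊢
    linarith [Real.log_two_gt_d9]

/-! ### Reciprocal sums of primes -/

/-- The primes `p` with `m < p ≤ n`. -/
def primesIoc (m n : ℕ) : Finset ℕ := {p ∈ Finset.Ioc m n | p.Prime}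

lemma mem_primesIoc {m n p : ℕ} : p ∈ primesIoc m n ↔ (m < p ∧ p ≤ n) ∧ p.Prime := by
  rw [primesIoc, Finset.mem_filter, Finset.mem_Ioc]

lemma sum_primesIoc_add (f : ℕ → ℝ) {a b c : ℕ} (hab : a ≤ b) (hbc : b ≤ c) :
    ∑ p ∈ primesIoc a b, f p + ∑ p ∈ primesIoc b c, f p = ∑ p ∈ primesIoc a c, f p := by
  simp only [primesIoc, Finset.sum_filter]
  exact Finset.sum_Ioc_consecutive _ hab hbc

lemma theta_natCast (n : ℕ) : Chebyshev.theta n = ∑ p ∈ primesIoc 0 n, Real.log p := by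
  rw [Chebyshev.theta, Nat.floor_natCast, primesIoc]

lemma log_four : Real.log 4 = 2 * Real.log 2 := by
  rw [show (4 : ℝ) = 2 ^ 2 by norm_num, Real.log_pow, Nat.cast_ofNat]

lemma sixteen_mul_add_two_le_two_pow {i : ℕ} (hi : 8 ≤ i) : 16 * (i + 2) ≤ 2 ^ i := by
  induction i, hi using Nat.le_induction with
  | base => norm_num
  | succ n hn ih => rw [pow_succ]; omega

lemma le_theta_four_pow_succ {i : ℕ} (hi : 8 ≤ i) :
    (1 + Real.log 4) * 4 ^ i ≤ Chebyshev.theta (4 ^ (i + 1) : ℕ) := by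
  have four_pow_eq : (4 : ℝ) ^ i = 2 ^ i * 2 ^ i := by rw [← mul_pow]; norm_num
  have sqrt_eq : √((4 ^ (i + 1) : ℕ) : ℝ) = 2 * 2 ^ i := by
    rw [Real.sqrt_eq_iff_mul_self_eq (by positivity) (by positivity)]
    push_cast
    rw [pow_succ, four_pow_eq]
    ring
  have log_eq : Real.log ((4 ^ (i + 1) : ℕ) : ℝ) = (i + 1) * Real.log 4 := by
    rw [Nat.cast_pow, Real.log_pow]; push_cast; rfl
  have log_add_one_le : Real.log (((4 ^ (i + 1) : ℕ) : ℝ) + 1) ≤ (i + 2) * Real.log 4 := by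
    calc Real.log (((4 ^ (i + 1) : ℕ) : ℝ) + 1) ≤ Real.log (4 ^ (i + 2)) := by
          refine Real.log_le_log (by positivity) ?_
          push_cast
          rw [pow_succ 4 (i + 1)]
          linarith [one_le_pow₀ (by norm_num : (1 : ℝ) ≤ 4) (n := i + 1)]
      _ = (i + 2) * Real.log 4 := by rw [Real.log_pow]; push_cast; rfl
  have i_le : 16 * ((i : ℝ) + 2) ≤ 2 ^ i := by exact_mod_cast sixteen_mul_add_two_le_two_pow hi
  have log_two_gt := Real.log_two_gt_d9
  have log_two_lt := Real.log_two_lt_d9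
  refine le_trans ?_ (Chebyshev.theta_ge (4 ^ (i + 1)))
  rw [sqrt_eq, log_eq]
  rw [log_four] at log_add_one_le ⊢
  push_cast at log_add_one_le ⊢
  rw [pow_succ (4 : ℝ), four_pow_eq] at log_add_one_le ⊢
  have T_ge : 160 ≤ (2 : ℝ) ^ i := by
    linarith [show (8 : ℝ) ≤ i by exact_mod_cast hi]
  set T : ℝ := 2 ^ i
  have log_term_le : ((i : ℝ) + 2) * (2 * Real.log 2) ≤ 1.4 * (i + 2) := by nlinarith
  have sqrt_term_le : 2 * (2 * T) * ((i + 1) * (2 * Real.log 2)) ≤ 5.6 * T * (i + 1) := by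
    nlinarith [show 0 ≤ T * (i + 1) by positivity]
  nlinarith [mul_le_mul_of_nonneg_left i_le (by positivity : 0 ≤ T),
    mul_le_mul_of_nonneg_right log_two_gt.le (by positivity : 0 ≤ T * T)]

lemma four_pow_le_sum_log_primesIoc {i : ℕ} (hi : 8 ≤ i) :
    (4 : ℝ) ^ i ≤ ∑ p ∈ primesIoc (4 ^ i) (4 ^ (i + 1)), Real.log p := by
  have upper := Chebyshev.theta_le_log4_mul_x (x := ((4 ^ i : ℕ) : ℝ)) (by positivity)
  have lower := le_theta_four_pow_succ hi
  rw [theta_natCast] at upper lower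
  have split := sum_primesIoc_add (fun p ↦ Real.log p) (Nat.zero_le (4 ^ i))
    (Nat.pow_le_pow_right four_pos i.le_succ)
  push_cast at upper
  linarith

/-- The reciprocal sum `∑ 1 / p` over `P`, which is the expected number of elements of `P` dividing
a random integer. -/
noncomputable def recipSum (P : Finset ℕ) : ℝ := ∑ p ∈ P, (1 : ℝ) / p

lemma recipSum_primesIoc_add {a b c : ℕ} (hab : a ≤ b) (hbc : b ≤ c) :
    recipSum (primesIoc a b) + recipSum (primesIoc b c) = recipSum (primesIoc a c) :=
  sum_primesIoc_add _ hab hbc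

lemma sum_log_primesIoc_le_log_mul_recipSum (m n : ℕ) :
    ∑ p ∈ primesIoc m n, Real.log p ≤ n * Real.log n * recipSum (primesIoc m n) := by
  rw [recipSum, Finset.mul_sum]
  refine Finset.sum_le_sum fun p hp ↦ ?_
  obtain ⟨⟨-, hpn⟩, hp⟩ := mem_primesIoc.1 hp
  have p_pos : (0 : ℝ) < p := by exact_mod_cast hp.pos
  have p_le : (p : ℝ) ≤ n := by exact_mod_cast hpn
  rw [mul_one_div, le_div_iff₀ p_pos, mul_comm]
  have := Real.log_natCast_nonneg p
  gcongr

lemma le_recipSum_primesIoc_four_pow_succ {i : ℕ} (hi : 8 ≤ i) :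
    1 / (6 * ((i : ℝ) + 1)) ≤ recipSum (primesIoc (4 ^ i) (4 ^ (i + 1))) := by
  have h := (four_pow_le_sum_log_primesIoc hi).trans (sum_log_primesIoc_le_log_mul_recipSum _ _)
  set M := recipSum (primesIoc (4 ^ i) (4 ^ (i + 1)))
  rw [Nat.cast_pow, Real.log_pow, Nat.cast_ofNat, log_four, pow_succ] at h
  have one_le : 1 ≤ 8 * Real.log 2 * ((i + 1) * M) := by
    have : (0 : ℝ) < 4 ^ i := by positivity
    push_cast at h
    nlinarith
  rw [div_le_iff₀ (by positivity)]
  nlinarith [Real.log_two_lt_d9, Real.log_two_gt_d9]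

lemma log_sub_log_le_recipSum_primesIoc {a b : ℕ} (ha : 8 ≤ a) (hab : a ≤ b) :
    (Real.log (b + 1) - Real.log (a + 1)) / 6 ≤ recipSum (primesIoc (4 ^ a) (4 ^ b)) := by
  induction b, hab using Nat.le_induction with
  | base => simp [primesIoc, recipSum]
  | succ b hab ih =>
    have log_succ_le : Real.log ((b + 1 : ℕ) + 1) ≤ Real.log (b + 1) + 1 / (b + 1) := by
      have add_one_eq : ((b + 1 : ℕ) : ℝ) + 1 = (b + 1) * (1 + 1 / (b + 1)) := by
        push_cast; field_simp
      rw [add_one_eq, Real.log_mul (by positivity) (by positivity)]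
      linarith [Real.log_le_sub_one_of_pos (by positivity : (0 : ℝ) < 1 + 1 / (b + 1))]
    have last := le_recipSum_primesIoc_four_pow_succ (ha.trans hab)
    rw [mul_comm, ← div_div] at last
    rw [← recipSum_primesIoc_add (Nat.pow_le_pow_right four_pos hab)
      (Nat.pow_le_pow_right four_pos b.le_succ)]
    linarith

lemma log_div_le_recipSum_primesIoc_sq {a : ℕ} (ha : 8 ≤ a) :
    Real.log a / 12 ≤ recipSum (primesIoc (4 ^ a) (4 ^ (a ^ 2))) := by
  refine le_trans ?_ (log_sub_log_le_recipSum_primesIoc ha (Nat.le_self_pow two_ne_zero a))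
  have ha' : (8 : ℝ) ≤ a := by exact_mod_cast ha
  have log_le : Real.log (a * (a + 1) ^ 2) ≤ Real.log (((a ^ 2 : ℕ) + 1) ^ 2) := by
    refine Real.log_le_log (by positivity) ?_
    push_cast
    calc (a : ℝ) * (a + 1) ^ 2 ≤ a * a ^ 3 := by gcongr; nlinarith
      _ ≤ ((a : ℝ) ^ 2 + 1) ^ 2 := by nlinarith
  rw [Real.log_mul (by positivity) (by positivity), Real.log_pow, Real.log_pow,
    Nat.cast_ofNat] at log_le
  linarith

/-! ### Integers free of the primes in a block -/

lemma card_filter_dvd_Icc (x d : ℕ) : {b ∈ Finset.Icc 1 x | d ∣ b}.card = x / d :=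
  Nat.Ioc_filter_dvd_card_eq_div x d

lemma sum_card_filter_dvd {ι : Type*} (s : Finset ι) (d : ι → ℕ) (x : ℕ) :
    ∑ b ∈ Finset.Icc 1 x, {i ∈ s | d i ∣ b}.card = ∑ i ∈ s, x / d i := by
  simp only [← card_filter_dvd_Icc]
  exact Finset.sum_card_bipartiteAbove_eq_sum_card_bipartiteBelow fun b i ↦ d i ∣ b

lemma sum_card_filter_dvd_sq (P : Finset ℕ) (x : ℕ) :
    ∑ b ∈ Finset.Icc 1 x, {p ∈ P | p ∣ b}.card ^ 2 = ∑ p ∈ P, ∑ q ∈ P, x / p.lcm q := by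
  rw [← Finset.sum_product', ← sum_card_filter_dvd (P ×ˢ P) fun z ↦ z.1.lcm z.2]
  refine Finset.sum_congr rfl fun b _ ↦ ?_
  simp only [Nat.lcm_dvd_iff, sq, ← Finset.card_product]
  rw [← Finset.filter_product (· ∣ b) (· ∣ b)]

lemma mul_recipSum_sub_card_le (P : Finset ℕ) (x : ℕ) :
    x * recipSum P - P.card ≤ ∑ b ∈ Finset.Icc 1 x, ({p ∈ P | p ∣ b}.card : ℝ) := by
  rw [← Nat.cast_sum, sum_card_filter_dvd P (fun p ↦ p), Nat.cast_sum, recipSum, Finset.mul_sum,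
    Finset.cast_card, ← Finset.sum_sub_distrib]
  refine Finset.sum_le_sum fun p _ ↦ ?_
  rw [mul_one_div, ← Nat.floor_div_eq_div (K := ℝ)]
  exact (Nat.sub_one_lt_floor _).le

lemma div_lcm_le {p q : ℕ} (hp : p.Prime) (hq : q.Prime) (x : ℕ) :
    ((x / p.lcm q : ℕ) : ℝ) ≤ x * (1 / p * (1 / q)) + if p = q then x * (1 / p : ℝ) else 0 := by
  refine Nat.cast_div_le.trans ?_
  split_ifs with hpq
  · rw [← hpq, Nat.lcm_self, mul_one_div (x : ℝ)]
    exact le_add_of_nonneg_left (by positivity)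
  · rw [((Nat.coprime_primes hp hq).2 hpq).lcm_eq_mul, Nat.cast_mul, add_zero,
      one_div_mul_one_div, mul_one_div]

lemma sum_card_filter_dvd_sq_le {P : Finset ℕ} (hP : ∀ p ∈ P, p.Prime) (x : ℕ) :
    ∑ b ∈ Finset.Icc 1 x, ({p ∈ P | p ∣ b}.card : ℝ) ^ 2
      ≤ x * recipSum P ^ 2 + x * recipSum P := by
  calc ∑ b ∈ Finset.Icc 1 x, ({p ∈ P | p ∣ b}.card : ℝ) ^ 2
      = ∑ p ∈ P, ∑ q ∈ P, ((x / p.lcm q : ℕ) : ℝ) := by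
        exact_mod_cast sum_card_filter_dvd_sq P x
    _ ≤ ∑ p ∈ P, ∑ q ∈ P, (x * (1 / p * (1 / q)) + if p = q then x * (1 / p : ℝ) else 0) :=
        Finset.sum_le_sum fun p hp ↦ Finset.sum_le_sum fun q hq ↦ div_lcm_le (hP p hp) (hP q hq) x
    _ = x * recipSum P ^ 2 + x * recipSum P := by
        simp_rw [Finset.sum_add_distrib]
        congr 1
        · rw [recipSum, sq, Finset.sum_mul_sum]
          simp_rw [Finset.mul_sum]
        · rw [recipSum, Finset.mul_sum]
          exact Finset.sum_congr rfl fun p hp ↦ by rw [Finset.sum_ite_eq, if_pos hp]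

lemma sum_sq_card_filter_dvd_sub_le {P : Finset ℕ} {x : ℕ} (hP : ∀ p ∈ P, p.Prime)
    (hPx : P.card ≤ x) :
    ∑ b ∈ Finset.Icc 1 x, (({p ∈ P | p ∣ b}.card : ℝ) - recipSum P) ^ 2
      ≤ 3 * x * recipSum P := by
  set M := recipSum P
  have M_nonneg : 0 ≤ M := Finset.sum_nonneg fun p _ ↦ by positivity
  have first_moment := mul_recipSum_sub_card_le P x
  have card_le : (P.card : ℝ) ≤ x := by exact_mod_cast hPx
  calc ∑ b ∈ Finset.Icc 1 x, (({p ∈ P | p ∣ b}.card : ℝ) - M) ^ 2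
      = ∑ b ∈ Finset.Icc 1 x, ({p ∈ P | p ∣ b}.card : ℝ) ^ 2
        - 2 * M * ∑ b ∈ Finset.Icc 1 x, ({p ∈ P | p ∣ b}.card : ℝ) + x * M ^ 2 := by
        simp only [sub_sq, Finset.sum_add_distrib, Finset.sum_sub_distrib, ← Finset.sum_mul,
          ← Finset.mul_sum, Finset.sum_const, Nat.card_Icc, Nat.add_sub_cancel, nsmul_eq_mul]
        ring
    _ ≤ 3 * x * M := by nlinarith [sum_card_filter_dvd_sq_le hP x]

/- Turán's method: an integer without prime factor in `P` deviates by `recipSum P` from the mean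
number of prime factors in `P`. -/
theorem card_forall_not_dvd_le {P : Finset ℕ} {x : ℕ} (hP : ∀ p ∈ P, p.Prime)
    (hPx : P.card ≤ x) (hM : 0 < recipSum P) :
    ({b ∈ Finset.Icc 1 x | ∀ p ∈ P, ¬p ∣ b}.card : ℝ) ≤ 3 * x / recipSum P := by
  set M := recipSum P
  have chebyshev : ({b ∈ Finset.Icc 1 x | ∀ p ∈ P, ¬p ∣ b}.card : ℝ) * M ^ 2
      ≤ ∑ b ∈ Finset.Icc 1 x, (({p ∈ P | p ∣ b}.card : ℝ) - M) ^ 2 := by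
    refine le_trans ?_ (Finset.sum_le_sum_of_subset_of_nonneg
      (Finset.filter_subset (fun b ↦ ∀ p ∈ P, ¬p ∣ b) _) fun b _ _ ↦ sq_nonneg _)
    rw [← nsmul_eq_mul]
    refine Finset.card_nsmul_le_sum _ _ _ fun b hb ↦ ?_
    rw [Finset.filter_eq_empty_iff.2 (Finset.mem_filter.1 hb).2, Finset.card_empty,
      Nat.cast_zero, zero_sub, neg_sq]
  rw [le_div_iff₀ hM]
  nlinarith [chebyshev.trans (sum_sq_card_filter_dvd_sub_le hP hPx)]

/-! ### Integers whose prime factors grow slowly -/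

section Graded

/-- The end points `4 ^ a, 4 ^ (a ^ 2), 4 ^ (a ^ 4), …` of the blocks of primes: up to the factor
`log 4`, the logarithm is squared at each step. -/
def blockEnd (a i : ℕ) : ℕ := 4 ^ (a ^ 2 ^ i)

/-- The `i`-th block of primes, between two consecutive end points. -/
def primeBlock (a i : ℕ) : Finset ℕ := primesIoc (blockEnd a i) (blockEnd a (i + 1))

/-- An integer is graded if having a prime factor in a block forces it to have one in the
preceding block, so that its prime factors grow slowly. -/
def Graded (a b : ℕ) : Prop :=
  ∀ i, (∃ p ∈ primeBlock a (i + 1), p ∣ b) → ∃ p ∈ primeBlock a i, p ∣ b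

variable {a b i k p : ℕ}

lemma blockEnd_pos (a i : ℕ) : 0 < blockEnd a i := by unfold blockEnd; positivity

lemma lt_blockEnd (ha : 2 ≤ a) (i : ℕ) : i < blockEnd a i :=
  calc i < 2 ^ i := Nat.lt_two_pow_self
    _ < a ^ 2 ^ i := Nat.lt_pow_self ha
    _ < 4 ^ (a ^ 2 ^ i) := Nat.lt_pow_self (by norm_num)

lemma log_blockEnd (a i : ℕ) : Real.log (blockEnd a i) = a ^ 2 ^ i * Real.log 4 := by
  rw [blockEnd, Nat.cast_pow, Real.log_pow]
  push_cast
  rfl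

lemma one_le_log_four : 1 ≤ Real.log 4 := by
  linarith [log_four, Real.log_two_gt_d9]

lemma log_blockEnd_add_two_le (a i : ℕ) :
    Real.log (blockEnd a (i + 2)) ≤ Real.log (blockEnd a i) ^ 4 := by
  rw [log_blockEnd, log_blockEnd, mul_pow, ← pow_mul, pow_add]
  exact mul_le_mul_of_nonneg_left (le_self_pow₀ one_le_log_four (by norm_num)) (by positivity)

lemma Graded.of_mul (h : Graded a (p * b)) (hp : p.Prime)
    (hmax : ∀ q, q.Prime → q ∣ b → q ≤ p) : Graded a b := by
  rintro i ⟨r, hr, hrb⟩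
  obtain ⟨q, hq, hqpb⟩ := h i ⟨r, hr, hrb.mul_left p⟩
  have hr' := mem_primesIoc.1 hr
  have hq' := mem_primesIoc.1 hq
  have q_lt_p : q < p := (hq'.1.2.trans_lt hr'.1.1).trans_le (hmax r hr'.2 hrb)
  exact ⟨q, hq, ((Nat.coprime_primes hq'.2 hp).2 q_lt_p.ne).dvd_of_dvd_mul_left hqpb⟩

lemma Graded.exists_blockEnd_le (h : Graded a (p * b)) (hp : p.Prime) (ha : 2 ≤ a) (hb : 0 < b)
    (hk : blockEnd a 0 ≤ k) : ∃ i, blockEnd a i ≤ k * b ∧ p ≤ blockEnd a (i + 2) := by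
  have p_le : ∃ j, p ≤ blockEnd a j := ⟨p, (lt_blockEnd ha p).le⟩
  have blockEnd_zero_le : blockEnd a 0 ≤ k * b := hk.trans (Nat.le_mul_of_pos_right k hb)
  have mono : Monotone (blockEnd a) := fun i j hij ↦
    Nat.pow_le_pow_right (by norm_num) (Nat.pow_le_pow_right (by omega)
      (Nat.pow_le_pow_right (by norm_num) hij))
  rcases le_or_gt (Nat.find p_le) 1 with hj | hj
  · exact ⟨0, blockEnd_zero_le, (Nat.find_spec p_le).trans (mono (by omega))⟩
  obtain ⟨i, hi⟩ := Nat.exists_eq_add_of_le' hj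
  have p_mem : p ∈ primeBlock a (i + 1) := mem_primesIoc.2
    ⟨⟨not_le.1 (Nat.find_min p_le (by omega)), by simpa [hi] using Nat.find_spec p_le⟩, hp⟩
  obtain ⟨q, hq, hqpb⟩ := h i ⟨p, p_mem, dvd_mul_right p b⟩
  have hq' := mem_primesIoc.1 hq
  have q_ne_p : q ≠ p := (hq'.1.2.trans_lt (mem_primesIoc.1 p_mem).1.1).ne
  have q_dvd : q ∣ b := ((Nat.coprime_primes hq'.2 hp).2 q_ne_p).dvd_of_dvd_mul_left hqpb
  have k_pos : 0 < k := (blockEnd_pos a 0).trans_le hk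
  refine ⟨i, ?_, by simpa [hi] using Nat.find_spec p_le⟩
  exact hq'.1.1.le.trans ((Nat.le_of_dvd hb q_dvd).trans (Nat.le_mul_of_pos_left b k_pos))

/- The largest prime factor of `b` is multiplied on last; gradedness makes it small compared with
the product formed before. -/
theorem Graded.attainable (hb : Graded a b) (hb0 : 0 < b) (ha : 1500 ≤ a) (hk : Attainable k)
    (hka : blockEnd a 0 ≤ k) : Attainable (k * b) := by
  induction b using Nat.strong_induction_on with | h b ih =>
  rcases (Nat.one_le_iff_ne_zero.2 hb0.ne').eq_or_lt with rfl | one_lt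
  · simpa using hk
  obtain ⟨p, p_mem, p_max⟩ :=
    b.primeFactors.exists_max_image id (Nat.nonempty_primeFactors.2 one_lt)
  obtain ⟨hp, ⟨c, rfl⟩, -⟩ := Nat.mem_primeFactors.1 p_mem
  have c_pos : 0 < c := Nat.pos_of_mul_pos_left hb0
  have c_graded : Graded a c := hb.of_mul hp fun q hq hqc ↦
    p_max q (hq.mem_primeFactors (hqc.mul_left p) hb0.ne')
  have kc_attainable : Attainable (k * c) :=
    ih c (lt_mul_of_one_lt_left c_pos hp.one_lt) c_graded c_pos
  obtain ⟨i, hi, hpi⟩ := hb.exists_blockEnd_le hp (by omega) c_pos hka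
  have log_le {m n : ℕ} (hm : 0 < m) (hmn : m ≤ n) : Real.log m ≤ Real.log n :=
    Real.log_le_log (by exact_mod_cast hm) (by exact_mod_cast hmn)
  have log_kc_ge : 1500 ≤ Real.log (k * c : ℕ) :=
    calc (1500 : ℝ) ≤ a := by exact_mod_cast ha
      _ ≤ Real.log (blockEnd a 0) := by
        rw [log_blockEnd, pow_zero, pow_one]
        exact le_mul_of_one_le_right a.cast_nonneg one_le_log_four
      _ ≤ Real.log (k * c : ℕ) :=
        log_le (blockEnd_pos a 0) (hka.trans (Nat.le_mul_of_pos_right k c_pos))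
  have log_p_le : Real.log p ≤ Real.log (k * c : ℕ) ^ 4 :=
    calc Real.log p ≤ Real.log (blockEnd a (i + 2)) := log_le hp.pos hpi
      _ ≤ Real.log (blockEnd a i) ^ 4 := log_blockEnd_add_two_le a i
      _ ≤ Real.log (k * c : ℕ) ^ 4 :=
        pow_le_pow_left₀ (Real.log_natCast_nonneg _) (log_le (blockEnd_pos a i) hi) 4
  rw [mul_comm p, ← mul_assoc]
  exact kc_attainable.mul_of_log_le log_kc_ge hp.pos log_p_le

lemma le_recipSum_primeBlock (ha : 144 ≤ Real.log a) (i : ℕ) :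
    12 * 2 ^ i ≤ recipSum (primeBlock a i) := by
  have eight_le : 8 ≤ a := by
    have : (8 : ℝ) ≤ a := by linarith [Real.log_le_self a.cast_nonneg]
    exact_mod_cast this
  have recipSum_ge := log_div_le_recipSum_primesIoc_sq
    (eight_le.trans (Nat.le_self_pow (by positivity : 2 ^ i ≠ 0) a))
  rw [← pow_mul, ← pow_succ] at recipSum_ge
  refine le_trans ?_ recipSum_ge
  rw [Nat.cast_pow, Real.log_pow, Nat.cast_pow, Nat.cast_ofNat]
  nlinarith [show (0 : ℝ) < 2 ^ i by positivity]

lemma card_forall_primeBlock_not_dvd_le {x : ℕ} (ha : 144 ≤ Real.log a)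
    (hi : blockEnd a (i + 1) ≤ x) :
    ({b ∈ Finset.Icc 1 x | ∀ p ∈ primeBlock a i, ¬p ∣ b}.card : ℝ) ≤ x / 4 * (1 / 2) ^ i := by
  have recipSum_ge := le_recipSum_primeBlock ha i
  have card_le : (primeBlock a i).card ≤ x := by
    have subset_Icc : primeBlock a i ⊆ Finset.Icc 1 x := fun p hp ↦ by
      obtain ⟨⟨-, p_le⟩, hp⟩ := mem_primesIoc.1 hp
      exact Finset.mem_Icc.2 ⟨hp.pos, p_le.trans hi⟩
    simpa using Finset.card_le_card subset_Icc
  calc ({b ∈ Finset.Icc 1 x | ∀ p ∈ primeBlock a i, ¬p ∣ b}.card : ℝ)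
      ≤ 3 * x / recipSum (primeBlock a i) :=
        card_forall_not_dvd_le (fun p hp ↦ (mem_primesIoc.1 hp).2) card_le
          ((by positivity : (0 : ℝ) < 12 * 2 ^ i).trans_le recipSum_ge)
    _ ≤ 3 * x / (12 * 2 ^ i) := by gcongr
    _ = x / 4 * (1 / 2) ^ i := by rw [one_div, inv_pow]; field_simp; ring

lemma filter_not_graded_subset (ha : 2 ≤ a) (x : ℕ) :
    {b ∈ Finset.Icc 1 x | ¬Graded a b} ⊆ {i ∈ Finset.range x | blockEnd a (i + 1) ≤ x}.biUnion
      fun i ↦ {b ∈ Finset.Icc 1 x | ∀ p ∈ primeBlock a i, ¬p ∣ b} := by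
  intro b hb
  simp only [Finset.mem_filter, Graded, not_forall, not_exists, not_and] at hb
  obtain ⟨b_mem, i, ⟨p, hp, hpb⟩, not_dvd⟩ := hb
  obtain ⟨b_pos, b_le⟩ := Finset.mem_Icc.1 b_mem
  have blockEnd_le : blockEnd a (i + 1) ≤ x :=
    (mem_primesIoc.1 hp).1.1.le.trans ((Nat.le_of_dvd b_pos hpb).trans b_le)
  have lt_x : i + 1 < x := (lt_blockEnd ha (i + 1)).trans_le blockEnd_le
  exact Finset.mem_biUnion.2 ⟨i,
    Finset.mem_filter.2 ⟨Finset.mem_range.2 (by omega), blockEnd_le⟩,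
    Finset.mem_filter.2 ⟨b_mem, not_dvd⟩⟩

lemma card_not_graded_le (ha : 144 ≤ Real.log a) (x : ℕ) :
    ({b ∈ Finset.Icc 1 x | ¬Graded a b}.card : ℝ) ≤ x / 2 := by
  have two_le : 2 ≤ a := by
    have : (2 : ℝ) ≤ a := by linarith [Real.log_le_self a.cast_nonneg]
    exact_mod_cast this
  calc ({b ∈ Finset.Icc 1 x | ¬Graded a b}.card : ℝ)
      ≤ ∑ i ∈ Finset.range x with blockEnd a (i + 1) ≤ x,
          ({b ∈ Finset.Icc 1 x | ∀ p ∈ primeBlock a i, ¬p ∣ b}.card : ℝ) := by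
        exact_mod_cast
          (Finset.card_le_card (filter_not_graded_subset two_le x)).trans Finset.card_biUnion_le
    _ ≤ ∑ i ∈ Finset.range x with blockEnd a (i + 1) ≤ x, (x : ℝ) / 4 * (1 / 2) ^ i :=
        Finset.sum_le_sum fun i hi ↦
          card_forall_primeBlock_not_dvd_le ha (Finset.mem_filter.1 hi).2
    _ ≤ ∑ i ∈ Finset.range x, (x : ℝ) / 4 * (1 / 2) ^ i :=
        Finset.sum_le_sum_of_subset_of_nonneg (Finset.filter_subset _ _) fun _ _ _ ↦ by positivity
    _ = x / 4 * ∑ i ∈ Finset.range x, ((1 : ℝ) / 2) ^ i := by rw [Finset.mul_sum]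
    _ ≤ x / 4 * 2 := by gcongr; exact sum_geometric_two_le x
    _ = x / 2 := by ring

theorem half_le_card_graded (ha : 144 ≤ Real.log a) (x : ℕ) :
    (x : ℝ) / 2 ≤ {b ∈ Finset.Icc 1 x | Graded a b}.card := by
  have card_add : ({b ∈ Finset.Icc 1 x | Graded a b}.card : ℝ)
      + {b ∈ Finset.Icc 1 x | ¬Graded a b}.card = x := by
    have := Finset.card_filter_add_card_filter_not (s := Finset.Icc 1 x) (Graded a)
    rw [Nat.card_Icc, Nat.add_sub_cancel] at this
    exact_mod_cast this
  linarith [card_not_graded_le ha x]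

end Graded

/-! ### Lower density -/

section LowerDensity

variable {S T : ℕ → Prop} {k : ℕ} {c : ℝ}

lemma le_liminf_card_filter_div
    (h : ∀ᶠ x : ℕ in Filter.atTop, c * x ≤ {n ∈ Finset.Icc 1 x | S n}.card) :
    c ≤ Filter.liminf (fun x : ℕ ↦ ({n ∈ Finset.Icc 1 x | S n}.card : ℝ) / x) Filter.atTop := by
  have ratio_le_one (x : ℕ) : ({n ∈ Finset.Icc 1 x | S n}.card : ℝ) / x ≤ 1 := by
    refine div_le_one_of_le₀ ?_ x.cast_nonneg
    simpa using Finset.card_filter_le (Finset.Icc 1 x) S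
  refine Filter.le_liminf_of_le
    (Filter.isBoundedUnder_of ⟨1, ratio_le_one⟩).isCoboundedUnder_ge ?_
  filter_upwards [h, Filter.eventually_gt_atTop 0] with x hx x_pos
  rwa [le_div_iff₀ (by exact_mod_cast x_pos)]

lemma card_filter_Icc_div_le (hk : 0 < k) (hST : ∀ n, 0 < n → S n → T (k * n)) (x : ℕ) :
    {n ∈ Finset.Icc 1 (x / k) | S n}.card ≤ {n ∈ Finset.Icc 1 x | T n}.card := by
  refine Finset.card_le_card_of_injOn (k * ·) (fun n hn ↦ ?_)
    fun m _ n _ h ↦ Nat.eq_of_mul_eq_mul_left hk h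
  simp only [Finset.coe_filter, Finset.mem_Icc, Set.mem_ofPred_eq] at hn ⊢
  obtain ⟨⟨n_pos, n_le⟩, hn⟩ := hn
  exact ⟨⟨Nat.mul_pos hk n_pos, (Nat.mul_le_mul_left k n_le).trans (Nat.mul_div_le x k)⟩,
    hST n n_pos hn⟩

lemma le_two_mul_mul_div {x : ℕ} (hk : 0 < k) (hkx : k ≤ x) : x ≤ 2 * k * (x / k) := by
  have one_le_div : 1 ≤ x / k := (Nat.one_le_div_iff hk).2 hkx
  nlinarith [Nat.div_add_mod x k, Nat.mod_lt x hk]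

theorem liminf_card_filter_div_pos_of_mul (hk : 0 < k) (hc : 0 < c)
    (hS : ∀ x : ℕ, c * x ≤ {n ∈ Finset.Icc 1 x | S n}.card)
    (hST : ∀ n, 0 < n → S n → T (k * n)) :
    0 < Filter.liminf (fun x : ℕ ↦ ({n ∈ Finset.Icc 1 x | T n}.card : ℝ) / x) Filter.atTop := by
  have : (0 : ℝ) < k := by exact_mod_cast hk
  refine (by positivity : 0 < c / (2 * k)).trans_le (le_liminf_card_filter_div ?_)
  filter_upwards [Filter.eventually_ge_atTop k] with x hx
  calc c / (2 * k) * x ≤ c / (2 * k) * (2 * k * (x / k : ℕ)) := by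
        gcongr
        exact_mod_cast le_two_mul_mul_div hk hx
    _ = c * (x / k : ℕ) := by field_simp
    _ ≤ {n ∈ Finset.Icc 1 (x / k) | S n}.card := hS (x / k)
    _ ≤ {n ∈ Finset.Icc 1 x | T n}.card := by exact_mod_cast card_filter_Icc_div_le hk hST x

end LowerDensity

/-- The set of positive integers `k` such that `2^k` is separable has positive
lower asymptotic density. -/
theorem lowerDensity_two_pow_separable_pos :
    0 < Filter.liminf
      (fun x : ℕ => (((Finset.Icc 1 x).filter fun k => Separable (2 ^ k)).card : ℝ) / x)
      Filter.atTop := by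
  obtain ⟨a, ha⟩ := exists_nat_ge (Real.exp 1500)
  have log_a_ge : 1500 ≤ Real.log a :=
    (Real.le_log_iff_exp_le ((Real.exp_pos _).trans_le ha)).2 ha
  have a_ge : 1500 ≤ a := by
    exact_mod_cast log_a_ge.trans (Real.log_le_self a.cast_nonneg)
  obtain ⟨k, k_ge, hk⟩ := exists_attainable_ge (blockEnd a 0)
  have half_le (x : ℕ) : 1 / 2 * (x : ℝ) ≤ {b ∈ Finset.Icc 1 x | Graded a b}.card := by
    rw [one_div_mul_eq_div]
    exact half_le_card_graded (by linarith) x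
  exact liminf_card_filter_div_pos_of_mul hk.pos one_half_pos half_le
    fun b b_pos hb ↦ (hb.attainable b_pos a_ge hk k_ge).separable
end
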